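/- Let d : ℕ → ℕ satisfy 4 ≤ d(n) ≤ (log n)², and restrict to those n for which n·d(n) is even. Then for every ε > 0, with high probability the uniformly random d(n)-regular graph G ~ G(n, d(n)) has the following property: for all but at most εn vertices r of G, there exist at least ⌊d(n)/4⌋ independent spanning trees of G rooted at r. -/

import Mathlib

open Filter

/-- The spanning trees `T 0, …, T (t-1)` of `G` are independent spanning trees rooted at `r`:
each `T i` is a spanning tree of `G` (a tree on the whole vertex set, all of whose edges lie
in `G`), and for every vertex `v ≠ r`, the paths from `v` to `r` in any two distinct trees
share only the vertices `v` and `r`. -/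
def IsIST {n : ℕ} (G : SimpleGraph (Fin n)) (r : Fin n) {t : ℕ}
    (T : Fin t → SimpleGraph (Fin n)) : Prop :=
  (∀ i, T i ≤ G ∧ (T i).IsTree) ∧
  ∀ v : Fin n, v ≠ r → ∀ i j : Fin t, i ≠ j →
    ∀ p : (T i).Walk v r, ∀ q : (T j).Walk v r, p.IsPath → q.IsPath →
      ∀ x : Fin n, x ∈ p.support → x ∈ q.support → x = v ∨ x = r

/-- `G` contains (at least) `t` independent spanning trees rooted at `r`. -/
def HasISTs {n : ℕ} (G : SimpleGraph (Fin n)) (r : Fin n) (t : ℕ) : Prop :=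
  ∃ T : Fin t → SimpleGraph (Fin n), IsIST G r T


open Classical in
/-- Probability that the uniformly random `d`-regular graph `G(n,d)` satisfies the
property `A`: the uniform distribution over all `d`-regular simple graphs on `[n]`. -/
noncomputable def regProb (n d : ℕ) (A : SimpleGraph (Fin n) → Prop) : ℝ :=
  ((Finset.univ.filter (fun G : SimpleGraph (Fin n) =>
      (∀ v, Nat.card (G.neighborSet v) = d) ∧ A G)).card : ℝ) /
  ((Finset.univ.filter (fun G : SimpleGraph (Fin n) =>
      ∀ v, Nat.card (G.neighborSet v) = d)).card : ℝ)



/-! ### Trees from parent maps -/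

section Trees
variable {n : ℕ}

/-- The graph of a parent map. -/
def parTree (r : Fin n) (p : Fin n → Fin n) : SimpleGraph (Fin n) :=
  SimpleGraph.fromRel (fun v w => v ≠ r ∧ w = p v)

lemma parTree_walk (r : Fin n) (p : Fin n → Fin n) (rk : Fin n → ℕ)
    (h : ∀ v, v ≠ r → rk (p v) < rk v) :
    ∀ m v, rk v ≤ m → ∃ q : (parTree r p).Walk v r,
      ∀ x ∈ q.support, ∃ k, x = p^[k] v := by
  intro m
  induction m with
  | zero =>
    intro v hv
    by_cases hvr : v = r
    · subst hvr
      exact ⟨SimpleGraph.Walk.nil, fun x hx => ⟨0, by simpa using hx⟩⟩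
    · have := h v hvr; omega
  | succ m ih =>
    intro v hv
    by_cases hvr : v = r
    · subst hvr
      exact ⟨SimpleGraph.Walk.nil, fun x hx => ⟨0, by simpa using hx⟩⟩
    · have h1 := h v hvr
      obtain ⟨q, hq⟩ := ih (p v) (by omega)
      have hadj : (parTree r p).Adj v (p v) := by
        rw [parTree, SimpleGraph.fromRel_adj]
        refine ⟨fun he => ?_, Or.inl ⟨hvr, rfl⟩⟩
        rw [← he] at h1; omega
      refine ⟨SimpleGraph.Walk.cons hadj q, fun x hx => ?_⟩
      rw [SimpleGraph.Walk.support_cons, List.mem_cons] at hx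
      rcases hx with rfl | hx
      · exact ⟨0, rfl⟩
      · obtain ⟨k, hk⟩ := hq x hx
        exact ⟨k + 1, by rw [hk, Function.iterate_succ_apply]⟩

lemma parTree_isTree (r : Fin n) (p : Fin n → Fin n) (rk : Fin n → ℕ)
    (h : ∀ v, v ≠ r → rk (p v) < rk v) : (parTree r p).IsTree := by
  classical
  have hconn : (parTree r p).Connected := by
    refine SimpleGraph.connected_iff_exists_forall_reachable _ |>.2 ⟨r, fun v => ?_⟩
    obtain ⟨q, -⟩ := parTree_walk r p rk h (rk v) v le_rfl
    exact ⟨q.reverse⟩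
  refine SimpleGraph.isTree_iff_connected_and_card.2 ⟨hconn, le_antisymm ?_ ?_⟩
  · have hsub : (parTree r p).edgeSet ⊆
        ((Finset.univ.erase r).image (fun v => s(v, p v)) : Finset (Sym2 (Fin n))) := by
      intro e
      induction e using Sym2.ind with
      | _ x y =>
        intro he
        rw [SimpleGraph.mem_edgeSet, parTree, SimpleGraph.fromRel_adj] at he
        simp only [Finset.coe_image, Set.mem_image, Finset.mem_coe, Finset.mem_erase,
          Finset.mem_univ, and_true]
        rcases he.2 with ⟨h1, h2⟩ | ⟨h1, h2⟩
        · exact ⟨x, h1, by rw [h2]⟩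
        · exact ⟨y, h1, by rw [h2, Sym2.eq_swap]⟩
    have h1 := Nat.card_mono (Finset.finite_toSet _) hsub
    have h2 : Nat.card ((Finset.univ.erase r).image (fun v => s(v, p v)) :
        Finset (Sym2 (Fin n))) ≤ n - 1 := by
      rw [Nat.card_eq_fintype_card, Fintype.card_coe]
      refine Finset.card_image_le.trans ?_
      rw [Finset.card_erase_of_mem (Finset.mem_univ _)]; simp
    have h3 : Nat.card (Fin n) = n := by simp
    have : 0 < n := r.pos
    have h4 := h1.trans h2
    rw [h3]
    omega
  · exact hconn.card_vert_le_card_edgeSet_add_one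

lemma parTree_support (r : Fin n) (p : Fin n → Fin n) (rk : Fin n → ℕ)
    (h : ∀ v, v ≠ r → rk (p v) < rk v) (v : Fin n) (q : (parTree r p).Walk v r)
    (hq : q.IsPath) (x : Fin n) (hx : x ∈ q.support) : ∃ k, x = p^[k] v := by
  classical
  obtain ⟨q', hq'⟩ := parTree_walk r p rk h (rk v) v le_rfl
  have ht := (parTree_isTree r p rk h).isAcyclic
  have := ht.subsingleton_path v r
  have he : (⟨q, hq⟩ : (parTree r p).Path v r) = ⟨q'.bypass, q'.bypass_isPath⟩ :=
    Subsingleton.elim _ _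
  have he' : q = q'.bypass := congrArg Subtype.val he
  rw [he'] at hx
  exact hq' x (q'.support_bypass_subset_support hx)

/-- Deterministic assembly of independent spanning trees. -/
theorem assemble {t : ℕ} (G H : SimpleGraph (Fin n)) (hHG : H ≤ G) (r : Fin n)
    (C : Finset (Fin n)) (hr : r ∈ C) (lab : Fin n → Fin t) (par : Fin n → Fin n)
    (rk : Fin n → ℕ)
    (hpar : ∀ c ∈ C, c ≠ r → par c ∈ C ∧ G.Adj c (par c) ∧ rk (par c) < rk c ∧
      (par c ≠ r → lab (par c) = lab c))
    (Kk : ℕ)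
    (uniq : ∀ x y (p q : H.Walk x y), p.IsPath → q.IsPath → p.length ≤ Kk →
      q.length ≤ Kk → p = q)
    (cls : Fin n → Fin t → Set (Fin n))
    (hcls : ∀ v i j x, x ∈ cls v i → x ∈ cls v j → i = j)
    (dst : Fin t → Fin n → ℕ) (hdst : ∀ i u, u ∉ C → dst i u + 2 ≤ Kk)
    (hU : ∀ i u, u ∉ C → (∃ c ∈ C, c ≠ r ∧ lab c = i ∧ G.Adj u c) ∨
      (∃ x, x ∉ C ∧ x ∈ cls u i ∧ H.Adj u x ∧ dst i x < dst i u))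
    (hC : ∀ c ∈ C, c ≠ r → ∃ w : Fin t → Fin n, ∀ i, i ≠ lab c → w i ∉ C ∧ H.Adj c (w i) ∧
      ∀ j, j ≠ lab c → w i = w j → i = j) :
    HasISTs G r t := by
  classical
  choose! w hw using hC
  -- parent outside the core
  have hP : ∀ i u, u ∉ C → ∃ x, (x ∈ C ∧ x ≠ r ∧ lab x = i ∧ G.Adj u x) ∨
      (x ∉ C ∧ x ∈ cls u i ∧ H.Adj u x ∧ dst i x < dst i u) := by
    intro i u hu
    rcases hU i u hu with ⟨c, h1, h2, h3, h4⟩ | ⟨x, hx⟩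
    · exact ⟨c, Or.inl ⟨h1, h2, h3, h4⟩⟩
    · exact ⟨x, Or.inr hx⟩
  choose! po hpo using hP
  let p : Fin t → Fin n → Fin n := fun i v =>
    if v = r then r else if v ∈ C then (if lab v = i then par v else w v i) else po i v
  have p_r : ∀ i, p i r = r := fun i => by simp [p]
  have p_in : ∀ i v, v ≠ r → v ∈ C → lab v = i → p i v = par v := by
    intro i v h1 h2 h3; simp [p, h1, h2, h3]
  have p_cl : ∀ i v, v ≠ r → v ∈ C → lab v ≠ i → p i v = w v i := by
    intro i v h1 h2 h3; simp [p, h1, h2, h3]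
  have p_out : ∀ i v, v ∉ C → p i v = po i v := by
    intro i v h1
    have : v ≠ r := fun h => h1 (h ▸ hr)
    simp [p, h1, this]
  let B := 2 + Finset.univ.sup rk
  have hB : ∀ v, rk v + 2 ≤ B := by
    intro v
    have := Finset.le_sup (f := rk) (Finset.mem_univ v)
    simp only [B]; omega
  let R : Fin t → Fin n → ℕ := fun i v =>
    if v = r then 0 else if v ∈ C then (if lab v = i then 1 + rk v else B + Kk + 1)
      else B + dst i v
  have hR : ∀ i v, v ≠ r → R i (p i v) < R i v := by
    intro i v hv
    by_cases hvC : v ∈ C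
    · by_cases hl : lab v = i
      · rw [p_in i v hv hvC hl]
        obtain ⟨h1, h2, h3, h4⟩ := hpar v hvC hv
        by_cases hpr : par v = r
        · simp [R, hpr, hv, hvC, hl]
        · have := h4 hpr
          simp only [R, hpr, hv, hvC, hl, h1, this, if_true, if_false]
          omega
      · rw [p_cl i v hv hvC hl]
        obtain ⟨h1, h2, h3⟩ := hw v hvC hv i (Ne.symm hl)
        have hwr : w v i ≠ r := fun h => h1 (h ▸ hr)
        have := hdst i _ h1
        simp only [R, hwr, hv, hvC, hl, h1, if_true, if_false]
        omega
    · rw [p_out i v hvC]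
      rcases hpo i v hvC with ⟨h1, h2, h3, h4⟩ | ⟨h1, h2, h3, h4⟩
      · have := hB (po i v)
        simp only [R, hv, hvC, h1, h2, h3, if_true, if_false]
        omega
      · have hwr : po i v ≠ r := fun h => h1 (h ▸ hr)
        simp only [R, hv, hvC, h1, hwr, if_false]
        omega
  have hAdj : ∀ i v, v ≠ r → G.Adj v (p i v) := by
    intro i v hv
    by_cases hvC : v ∈ C
    · by_cases hl : lab v = i
      · rw [p_in i v hv hvC hl]
        exact (hpar v hvC hv).2.1
      · rw [p_cl i v hv hvC hl]
        exact hHG (hw v hvC hv i (Ne.symm hl)).2.1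
    · rw [p_out i v hvC]
      rcases hpo i v hvC with ⟨h1, h2, h3, h4⟩ | ⟨h1, h2, h3, h4⟩
      · exact h4
      · exact hHG h3
  -- closure
  have hcl : ∀ i k v, (v = r ∨ (v ∈ C ∧ lab v = i)) →
      ((p i)^[k] v = r ∨ ((p i)^[k] v ∈ C ∧ lab ((p i)^[k] v) = i)) := by
    intro i k
    induction k with
    | zero => intro v hv; exact hv
    | succ k ih =>
      intro v hv
      rw [Function.iterate_succ_apply]
      apply ih
      by_cases hvr : v = r
      · left; rw [hvr, p_r]
      · obtain ⟨h1, h2⟩ := hv.resolve_left hvr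
        rw [p_in i v hvr h1 h2]
        obtain ⟨a1, a2, a3, a4⟩ := hpar v h1 hvr
        by_cases hpr : par v = r
        · exact Or.inl hpr
        · exact Or.inr ⟨a1, (a4 hpr).trans h2⟩
  have hclU : ∀ i k v, v ∉ C →
      ((p i)^[k] v ∉ C ∨ (p i)^[k] v = r ∨ ((p i)^[k] v ∈ C ∧ lab ((p i)^[k] v) = i)) := by
    intro i k
    induction k with
    | zero => intro v hv; exact Or.inl hv
    | succ k ih =>
      intro v hv
      rw [Function.iterate_succ_apply, p_out i v hv]
      rcases hpo i v hv with ⟨h1, h2, h3, h4⟩ | ⟨h1, h2, h3, h4⟩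
      · exact Or.inr (hcl i k _ (Or.inr ⟨h1, h3⟩))
      · exact ih _ h1
  have chain : ∀ i k u, u ∉ C → (p i)^[k] u ∉ C →
      ∃ q : H.Walk u ((p i)^[k] u), q.IsPath ∧ q.length ≤ dst i u ∧
        (∀ y ∈ q.support, dst i y ≤ dst i u ∧ y ∉ C) ∧
        ((p i)^[k] u ≠ u → q.getVert 1 = p i u ∧ p i u ∈ cls u i) := by
    intro i k
    induction k with
    | zero =>
      intro u hu _
      exact ⟨SimpleGraph.Walk.nil, by simp, by simp, by simpa using hu, fun h => (h rfl).elim⟩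
    | succ k ih =>
      intro u hu hx
      rw [Function.iterate_succ_apply] at hx ⊢
      rw [p_out i u hu] at hx ⊢
      rcases hpo i u hu with ⟨h1, h2, h3, h4⟩ | ⟨h1, h2, h3, h4⟩
      · exfalso
        rcases hcl i k _ (Or.inr ⟨h1, h3⟩) with h | h
        · rw [h] at hx; exact hx hr
        · exact hx h.1
      · obtain ⟨q, q1, q2, q3, q4⟩ := ih _ h1 hx
        refine ⟨SimpleGraph.Walk.cons h3 q, ?_, ?_, ?_, ?_⟩
        · rw [SimpleGraph.Walk.cons_isPath_iff]
          refine ⟨q1, fun hm => ?_⟩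
          have := (q3 _ hm).1
          omega
        · rw [SimpleGraph.Walk.length_cons]; omega
        · intro y hy
          rw [SimpleGraph.Walk.support_cons, List.mem_cons] at hy
          rcases hy with rfl | hy
          · exact ⟨le_rfl, hu⟩
          · exact ⟨((q3 y hy).1).trans h4.le, (q3 y hy).2⟩
        · intro _
          exact ⟨by simp, h2⟩
  refine ⟨fun i => parTree r (p i), fun i => ⟨?_, parTree_isTree r (p i) (R i) (hR i)⟩, ?_⟩
  · intro x y hxy
    have hxy := (SimpleGraph.fromRel_adj _ _ _).1 hxy
    rcases hxy.2 with ⟨h1, h2⟩ | ⟨h1, h2⟩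
    · rw [h2]; exact hAdj i x h1
    · rw [h2]; exact (hAdj i y h1).symm
  · intro v hv i j hij P Q hP hQ x hxP hxQ
    obtain ⟨k, hk⟩ := parTree_support r (p i) (R i) (hR i) v P hP x hxP
    obtain ⟨l, hl⟩ := parTree_support r (p j) (R j) (hR j) v Q hQ x hxQ
    by_contra hne
    push Not at hne
    obtain ⟨hxv, hxr⟩ := hne
    -- general position of iterates
    have gen : ∀ i k, x = (p i)^[k] v → x ∈ C → lab x = i := by
      intro i k hk hxC
      by_cases hvC : v ∈ C
      · by_cases hlv : lab v = i
        · rcases hcl i k v (Or.inr ⟨hvC, hlv⟩) with h | h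
          · exact (hxr (hk.trans h)).elim
          · rw [hk]; exact h.2
        · cases k with
          | zero => exact (hxv hk).elim
          | succ k =>
            rw [Function.iterate_succ_apply, p_cl i v hv hvC hlv] at hk
            have hwC := (hw v hvC hv i (Ne.symm hlv)).1
            rcases hclU i k _ hwC with h | h | h
            · exact (h (hk ▸ hxC)).elim
            · exact (hxr (hk.trans h)).elim
            · rw [hk]; exact h.2
      · rcases hclU i k v hvC with h | h | h
        · exact (h (hk ▸ hxC)).elim
        · exact (hxr (hk.trans h)).elim
        · rw [hk]; exact h.2
    by_cases hxC : x ∈ C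
    · exact hij ((gen i k hk hxC).symm.trans (gen j l hl hxC))
    · by_cases hvC : v ∈ C
      · have client : ∀ i k, x = (p i)^[k] v → lab v ≠ i ∧ ∃ q : H.Walk v x, q.IsPath ∧
            q.length ≤ Kk ∧ q.getVert 1 = w v i := by
          intro i k hk
          have hlv : lab v ≠ i := by
            intro hlv
            rcases hcl i k v (Or.inr ⟨hvC, hlv⟩) with h | h
            · exact hxr (hk.trans h)
            · exact hxC (hk ▸ h.1)
          refine ⟨hlv, ?_⟩
          cases k with
          | zero => exact (hxv hk).elim
          | succ k =>
            rw [Function.iterate_succ_apply, p_cl i v hv hvC hlv] at hk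
            obtain ⟨hwC, hwA, -⟩ := hw v hvC hv i (Ne.symm hlv)
            subst hk
            obtain ⟨q, q1, q2, q3, q4⟩ := chain i k _ hwC hxC
            refine ⟨SimpleGraph.Walk.cons hwA q, ?_, ?_, by simp⟩
            · rw [SimpleGraph.Walk.cons_isPath_iff]
              exact ⟨q1, fun hm => (q3 _ hm).2 hvC⟩
            · rw [SimpleGraph.Walk.length_cons]
              have := hdst i _ hwC
              omega
        obtain ⟨a1, q, a2, a3, a4⟩ := client i k hk
        obtain ⟨b1, q', b2, b3, b4⟩ := client j l hl
        have := uniq v x q q' a2 b2 a3 b3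
        subst this
        exact hij ((hw v hvC hv i (Ne.symm a1)).2.2 j (Ne.symm b1) (a4.symm.trans b4))
      · have hkC : (p i)^[k] v ∉ C := hk ▸ hxC
        have hlC : (p j)^[l] v ∉ C := hl ▸ hxC
        obtain ⟨q, a1, a2, a3, a4⟩ := chain i k v hvC hkC
        obtain ⟨q', b1, b2, b3, b4⟩ := chain j l v hvC hlC
        have ha := a4 (hk ▸ hxv)
        have hb := b4 (hl ▸ hxv)
        have hd1 := hdst i v hvC
        have hd2 := hdst j v hvC
        have he := uniq v x (q.copy rfl hk.symm) (q'.copy rfl hl.symm) (by simpa using a1)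
          (by simpa using b1) (by simp; omega) (by simp; omega)
        have h1 : (q.copy rfl hk.symm).getVert 1 = p i v := by simpa using ha.1
        have h2 : (q'.copy rfl hl.symm).getVert 1 = p j v := by simpa using hb.1
        rw [he] at h1
        have h3 : p i v = p j v := h1.symm.trans h2
        exact hij (hcls v i j _ ha.2 (h3 ▸ hb.2))

end Trees


/-! ### A maximal subgraph without short cycles -/

section Girth
variable {n : ℕ}

/-- no cycle of length at most `g` -/
def NoShort (H : SimpleGraph (Fin n)) (g : ℕ) : Prop :=
  ∀ v (c : H.Walk v v), c.IsCycle → g < c.length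

lemma exists_maxH (G : SimpleGraph (Fin n)) (g : ℕ) :
    ∃ H ≤ G, NoShort H g ∧ ∀ H', H ≤ H' → H' ≤ G → NoShort H' g → H' ≤ H := by
  have hne : (({H | H ≤ G ∧ NoShort H g}) : Set (SimpleGraph (Fin n))).Nonempty := by
    refine ⟨⊥, bot_le, fun v c hc => ?_⟩
    cases c with
    | nil => exact (hc.ne_nil rfl).elim
    | cons h p => exact h.elim
  obtain ⟨H, hH⟩ := (Set.toFinite {H : SimpleGraph (Fin n) | H ≤ G ∧ NoShort H g}).exists_maximal hne
  exact ⟨H, hH.1.1, hH.1.2, fun H' h1 h2 h3 => hH.2 ⟨h2, h3⟩ h1⟩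

lemma maxH_walk (G H : SimpleGraph (Fin n)) (g : ℕ) (hHG : H ≤ G) (hH : NoShort H g)
    (hmax : ∀ H', H ≤ H' → H' ≤ G → NoShort H' g → H' ≤ H) (x y : Fin n)
    (hG : G.Adj x y) (hn : ¬ H.Adj x y) : ∃ p : H.Walk x y, p.length < g := by
  classical
  have hxy : x ≠ y := hG.ne
  set H' := H ⊔ SimpleGraph.edge x y with hH'
  have hns : ¬ NoShort H' g := by
    intro h
    refine hn (hmax H' le_sup_left ?_ h ?_)
    · refine sup_le hHG ?_
      exact (SimpleGraph.edge_le_iff _).2 (Or.inr hG)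
    · rw [hH', SimpleGraph.sup_adj, SimpleGraph.edge_adj]
      exact Or.inr ⟨Or.inl ⟨rfl, rfl⟩, hxy⟩
  have htr : ∀ {a b} (p : H'.Walk a b), s(x, y) ∉ p.edges → ∀ e ∈ p.edges, e ∈ H.edgeSet := by
    intro a b p hp e he
    have h1 := p.edges_subset_edgeSet he
    induction e using Sym2.ind with
    | _ u v =>
      rw [SimpleGraph.mem_edgeSet] at h1 ⊢
      rw [hH', SimpleGraph.sup_adj, SimpleGraph.edge_adj] at h1
      rcases h1 with h1 | ⟨⟨rfl, rfl⟩ | ⟨rfl, rfl⟩, -⟩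
      · exact h1
      · exact (hp he).elim
      · exact (hp (by rwa [Sym2.eq_swap])).elim
  unfold NoShort at hns
  push Not at hns
  obtain ⟨v, c, hc, hlen⟩ := hns
  have hmem : s(x, y) ∈ c.edges := by
    by_contra hcon
    have := hH v (c.transfer H (htr c hcon)) (hc.transfer _)
    simp at this
    omega
  have hxs : x ∈ c.support := c.fst_mem_support_of_mem_edges hmem
  have hc' := hc.rotate hxs
  have hlen' : (c.rotate x hxs).length ≤ g := by
    have : (c.rotate x hxs).length = c.length := by
      rw [← SimpleGraph.Walk.length_edges, ← SimpleGraph.Walk.length_edges]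
      exact (c.rotate_edges x hxs).perm.length_eq
    omega
  have hmem' : s(x, y) ∈ (c.rotate x hxs).edges :=
    (c.rotate_edges x hxs).mem_iff.2 hmem
  generalize c.rotate x hxs = c' at hc' hlen' hmem'
  cases c' with
  | nil => exact (hc'.ne_nil rfl).elim
  | @cons _ w _ h p =>
    rw [SimpleGraph.Walk.cons_isCycle_iff] at hc'
    rw [SimpleGraph.Walk.length_cons] at hlen'
    by_cases hw : w = y
    · subst hw
      refine ⟨(p.reverse).transfer H (htr _ (by simpa using hc'.2)), ?_⟩
      simp; omega
    · rw [SimpleGraph.Walk.edges_cons, List.mem_cons] at hmem'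
      have hne : s(x, y) ≠ s(x, w) := by
        intro he
        rw [Sym2.eq_iff] at he
        rcases he with ⟨-, h2⟩ | ⟨h1, h2⟩
        · exact hw h2.symm
        · exact hxy h2.symm
      have hp := hmem'.resolve_left hne
      have hyp : y ∈ p.support := p.snd_mem_support_of_mem_edges hp
      have hx' : x ∉ (p.takeUntil y hyp).support :=
        SimpleGraph.Walk.endpoint_notMem_support_takeUntil hc'.1 hyp hxy
      refine ⟨(SimpleGraph.Walk.cons h (p.takeUntil y hyp)).transfer H (htr _ ?_), ?_⟩
      · rw [SimpleGraph.Walk.edges_cons, List.mem_cons]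
        rintro (h1 | h1)
        · exact hne h1
        · exact hx' (SimpleGraph.Walk.fst_mem_support_of_mem_edges _ h1)
      · rw [SimpleGraph.Walk.length_transfer, SimpleGraph.Walk.length_cons]
        have h2 : (p.takeUntil y hyp).length < p.length :=
          p.length_takeUntil_lt_length hyp hxy.symm
        omega

lemma noShort_uniq (H : SimpleGraph (Fin n)) (g : ℕ) (hH : NoShort H g) (x y : Fin n)
    (p q : H.Walk x y) (hp : p.IsPath) (hq : q.IsPath) (hl : p.length + q.length ≤ g) :
    p = q := by
  classical
  set F := SimpleGraph.fromEdgeSet {e | e ∈ p.edges ∨ e ∈ q.edges} with hF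
  have hFe : ∀ e ∈ F.edgeSet, e ∈ p.edges ∨ e ∈ q.edges := by
    intro e he
    rw [hF, SimpleGraph.edgeSet_fromEdgeSet] at he
    exact he.1
  have hpF : ∀ e ∈ p.edges, e ∈ F.edgeSet := by
    intro e he
    rw [hF, SimpleGraph.edgeSet_fromEdgeSet]
    exact ⟨Or.inl he, H.not_isDiag_of_mem_edgeSet (p.edges_subset_edgeSet he)⟩
  have hqF : ∀ e ∈ q.edges, e ∈ F.edgeSet := by
    intro e he
    rw [hF, SimpleGraph.edgeSet_fromEdgeSet]
    exact ⟨Or.inr he, H.not_isDiag_of_mem_edgeSet (q.edges_subset_edgeSet he)⟩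
  have hac : F.IsAcyclic := by
    intro v c hc
    have h1 : ∀ e ∈ c.edges, e ∈ H.edgeSet := by
      intro e he
      rcases hFe e (c.edges_subset_edgeSet he) with h | h
      · exact p.edges_subset_edgeSet h
      · exact q.edges_subset_edgeSet h
    have h2 := hH v (c.transfer H h1) (hc.transfer _)
    rw [SimpleGraph.Walk.length_transfer] at h2
    have h3 : c.edges.toFinset ⊆ (p.edges ++ q.edges).toFinset := by
      intro e he
      rw [List.mem_toFinset] at he ⊢
      rw [List.mem_append]
      exact hFe e (c.edges_subset_edgeSet he)
    have h4 := Finset.card_le_card h3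
    have h5 : c.edges.toFinset.card = c.length := by
      rw [List.toFinset_card_of_nodup hc.edges_nodup, SimpleGraph.Walk.length_edges]
    have h6 := (p.edges ++ q.edges).toFinset_card_le
    rw [List.length_append, SimpleGraph.Walk.length_edges, SimpleGraph.Walk.length_edges] at h6
    omega
  have := hac.subsingleton_path x y
  have he : (⟨p.transfer F hpF, hp.transfer _⟩ : F.Path x y) = ⟨q.transfer F hqF, hq.transfer _⟩ :=
    Subsingleton.elim _ _
  have he' : p.transfer F hpF = q.transfer F hqF := congrArg Subtype.val he
  have hs := congrArg SimpleGraph.Walk.support he'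
  rw [SimpleGraph.Walk.support_transfer, SimpleGraph.Walk.support_transfer] at hs
  exact SimpleGraph.Walk.ext_support hs

/-- every set of at most `s0` vertices spans at most as many edges as vertices -/
def Sparse (G : SimpleGraph (Fin n)) (s0 : ℕ) : Prop :=
  ∀ (S : Finset (Fin n)) (E : Finset (Sym2 (Fin n))), S.card ≤ s0 →
    (∀ e ∈ E, e ∈ G.edgeSet ∧ ∀ x ∈ e, x ∈ S) → E.card ≤ S.card

lemma walk_extend (H : SimpleGraph (Fin n)) {u v : Fin n} (p : H.Walk u v) :
    ∀ (S : Finset (Fin n)) (E : Finset (Sym2 (Fin n))), u ∈ S →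
    (∀ e ∈ E, e ∈ H.edgeSet ∧ ∀ x ∈ e, x ∈ S) → S.card ≤ E.card + 1 →
    ∃ (S' : Finset (Fin n)) (E' : Finset (Sym2 (Fin n))), S ⊆ S' ∧ v ∈ S' ∧ (∀ e ∈ E', e ∈ H.edgeSet ∧ ∀ x ∈ e, x ∈ S') ∧
      S'.card ≤ E'.card + 1 ∧ S'.card ≤ S.card + p.length := by
  classical
  induction p with
  | nil => intro S E h1 h2 h3; exact ⟨S, E, subset_rfl, h1, h2, h3, by simp⟩
  | @cons a b c h p ih =>
    intro S E h1 h2 h3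
    by_cases hb : b ∈ S
    · obtain ⟨S', E', g1, g2, g3, g4, g5⟩ := ih S E hb h2 h3
      exact ⟨S', E', g1, g2, g3, g4, by rw [SimpleGraph.Walk.length_cons]; omega⟩
    · obtain ⟨S', E', g1, g2, g3, g4, g5⟩ := ih (insert b S) (insert s(a, b) E)
        (Finset.mem_insert_self _ _) (by
          intro e he
          rcases Finset.mem_insert.1 he with rfl | he
          · refine ⟨h, fun x hx => ?_⟩
            rcases Sym2.mem_iff.1 hx with rfl | rfl
            · exact Finset.mem_insert_of_mem h1
            · exact Finset.mem_insert_self _ _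
          · exact ⟨(h2 e he).1, fun x hx => Finset.mem_insert_of_mem ((h2 e he).2 x hx)⟩)
        (by
          rw [Finset.card_insert_of_notMem hb, Finset.card_insert_of_notMem]
          · omega
          · intro he
            exact hb ((h2 _ he).2 b (by simp)))
      refine ⟨S', E', (Finset.subset_insert _ _).trans g1, g2, g3, g4, ?_⟩
      rw [Finset.card_insert_of_notMem hb] at g5
      rw [SimpleGraph.Walk.length_cons]; omega

lemma sparse_one_bad (G H : SimpleGraph (Fin n)) (K : ℕ) (hHG : H ≤ G)
    (hsp : Sparse G (6 * K + 14)) (hH : NoShort H (2 * (K + 3)))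
    (hmax : ∀ H', H ≤ H' → H' ≤ G → NoShort H' (2 * (K + 3)) → H' ≤ H)
    (w x1 y1 x2 y2 : Fin n) (h1 : G.Adj x1 y1) (h1' : ¬ H.Adj x1 y1)
    (h2 : G.Adj x2 y2) (h2' : ¬ H.Adj x2 y2) (p1 : H.Walk w x1) (p2 : H.Walk w x2)
    (hp1 : p1.length ≤ K) (hp2 : p2.length ≤ K) : s(x1, y1) = s(x2, y2) := by
  classical
  by_contra hne
  obtain ⟨q1, hq1⟩ := maxH_walk G H _ hHG hH hmax x1 y1 h1 h1'
  obtain ⟨q2, hq2⟩ := maxH_walk G H _ hHG hH hmax x2 y2 h2 h2'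
  obtain ⟨S1, E1, a1, a2, a3, a4, a5⟩ := walk_extend H p1 {w} ∅ (by simp) (by simp) (by simp)
  obtain ⟨S2, E2, b1, b2, b3, b4, b5⟩ := walk_extend H q1 S1 E1 a2 a3 a4
  obtain ⟨S3, E3, c1, c2, c3, c4, c5⟩ := walk_extend H p2 S2 E2
    (b1 (a1 (Finset.mem_singleton_self w))) b3 b4
  obtain ⟨S4, E4, d1, d2, d3, d4, d5⟩ := walk_extend H q2 S3 E3 c2 c3 c4
  have m1 : x1 ∈ S4 := d1 (c1 (b1 a2))
  have m2 : y1 ∈ S4 := d1 (c1 b2)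
  have m3 : x2 ∈ S4 := d1 c2
  have := hsp S4 (insert s(x1, y1) (insert s(x2, y2) E4)) (by simp at a5; omega) (by
    intro e he
    rcases Finset.mem_insert.1 he with rfl | he
    · refine ⟨h1, fun x hx => ?_⟩
      rcases Sym2.mem_iff.1 hx with rfl | rfl <;> assumption
    rcases Finset.mem_insert.1 he with rfl | he
    · refine ⟨h2, fun x hx => ?_⟩
      rcases Sym2.mem_iff.1 hx with rfl | rfl <;> assumption
    · exact ⟨SimpleGraph.edgeSet_mono hHG (d3 e he).1, (d3 e he).2⟩)
  rw [Finset.card_insert_of_notMem, Finset.card_insert_of_notMem] at this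
  · omega
  · intro he; exact h2' (d3 _ he).1
  · rw [Finset.mem_insert]
    rintro (he | he)
    · exact hne he
    · exact h1' (d3 _ he).1

end Girth


/-! ### Ordered regular graphs and exploration balls -/

section Balls
variable {n d : ℕ}

/-- an ordered regular graph: `nb v` lists the neighbours of `v` -/
structure OrdG (nb : Fin n → Fin d → Fin n) : Prop where
  inj : ∀ v, Function.Injective (nb v)
  ne : ∀ v p, nb v p ≠ v
  symm : ∀ v p, ∃ p', nb (nb v p) p' = v

/-- adjacency of an ordered graph -/
def Adjn (nb : Fin n → Fin d → Fin n) (x y : Fin n) : Prop := ∃ p, nb x p = y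

/-- the underlying simple graph -/
def Gr (nb : Fin n → Fin d → Fin n) : SimpleGraph (Fin n) := SimpleGraph.fromRel (Adjn nb)

lemma OrdG.adj_symm {nb : Fin n → Fin d → Fin n} (h : OrdG nb) {x y : Fin n}
    (hx : Adjn nb x y) : Adjn nb y x := by
  obtain ⟨p, rfl⟩ := hx
  exact h.symm x p

lemma OrdG.adj_ne {nb : Fin n → Fin d → Fin n} (h : OrdG nb) {x y : Fin n}
    (hx : Adjn nb x y) : x ≠ y := by
  obtain ⟨p, rfl⟩ := hx
  exact (h.ne x p).symm

lemma OrdG.gr_adj {nb : Fin n → Fin d → Fin n} (h : OrdG nb) (x y : Fin n) :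
    (Gr nb).Adj x y ↔ Adjn nb x y := by
  rw [Gr, SimpleGraph.fromRel_adj]
  constructor
  · rintro ⟨-, h1 | h1⟩
    · exact h1
    · exact h.adj_symm h1
  · intro h1
    exact ⟨h.adj_ne h1, Or.inl h1⟩

/-- neighbours as a finset -/
def nbr (nb : Fin n → Fin d → Fin n) (v : Fin n) : Finset (Fin n) := Finset.univ.image (nb v)

lemma mem_nbr {nb : Fin n → Fin d → Fin n} {v x : Fin n} : x ∈ nbr nb v ↔ Adjn nb v x := by
  simp [nbr, Adjn]

lemma card_nbr_le (nb : Fin n → Fin d → Fin n) (v : Fin n) : (nbr nb v).card ≤ d := by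
  refine Finset.card_image_le.trans ?_
  simp

lemma OrdG.card_nbr {nb : Fin n → Fin d → Fin n} (h : OrdG nb) (v : Fin n) :
    (nbr nb v).card = d := by
  rw [nbr, Finset.card_image_of_injective _ (h.inj v)]; simp

/-- ports of class `i` -/
def prt (d i : ℕ) : Finset (Fin d) := Finset.univ.filter (fun p => 4 * i ≤ p.1 ∧ p.1 < 4 * i + 4)

lemma card_prt (d i : ℕ) (h : 4 * i + 4 ≤ d) : (prt d i).card = 4 := by
  have : prt d i = Finset.univ.image (fun k : Fin 4 => (⟨4 * i + k.1, by omega⟩ : Fin d)) := by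
    ext p
    simp only [prt, Finset.mem_filter, Finset.mem_univ, true_and, Finset.mem_image]
    constructor
    · intro hp
      exact ⟨⟨p.1 - 4 * i, by omega⟩, Fin.ext (by simp; omega)⟩
    · rintro ⟨k, rfl⟩
      simp
  rw [this, Finset.card_image_of_injective]
  · simp
  · intro a b hab
    simp only [Fin.mk.injEq] at hab
    exact Fin.ext (by omega)

/-- neighbours of class `i` -/
def clsF (nb : Fin n → Fin d → Fin n) (i : ℕ) (v : Fin n) : Finset (Fin n) :=
  (prt d i).image (nb v)

lemma clsF_adj {nb : Fin n → Fin d → Fin n} {i : ℕ} {v x : Fin n} (h : x ∈ clsF nb i v) :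
    Adjn nb v x := by
  obtain ⟨p, -, hp⟩ := Finset.mem_image.1 h
  exact ⟨p, hp⟩

open Classical in
/-- the exploration ball -/
noncomputable def Ball (nb : Fin n → Fin d → Fin n) (C : Finset (Fin n)) (u : Fin n) (i : ℕ)
    (f : Sym2 (Fin n)) : ℕ → Finset (Fin n)
  | 0 => {u}
  | j + 1 => Ball nb C u i f j ∪ Finset.univ.filter (fun x => x ∉ C ∧
      ∃ a ∈ Ball nb C u i f j, x ∈ clsF nb i a ∧ s(a, x) ≠ f)

open Classical in
/-- the open ports of the outer layer of the ball -/
noncomputable def Opn (nb : Fin n → Fin d → Fin n) (C : Finset (Fin n)) (u : Fin n) (i : ℕ)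
    (f : Sym2 (Fin n)) (K : ℕ) : Finset (Fin n × Fin d) :=
  Finset.univ.filter (fun ap => ap.1 ∈ Ball nb C u i f K ∧
    ap.2 ∈ prt d i ∧ nb ap.1 ap.2 ∉ C ∧ nb ap.1 ap.2 ∉ Ball nb C u i f K ∧
    s(ap.1, nb ap.1 ap.2) ≠ f)

section
variable {nb : Fin n → Fin d → Fin n} {C : Finset (Fin n)} {u : Fin n} {i : ℕ}
    {f : Sym2 (Fin n)}

lemma Ball_mono_succ (j : ℕ) : Ball nb C u i f j ⊆ Ball nb C u i f (j + 1) := by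
  rw [Ball]; exact Finset.subset_union_left

lemma Ball_mono {j k : ℕ} (h : j ≤ k) : Ball nb C u i f j ⊆ Ball nb C u i f k := by
  induction h with
  | refl => exact subset_rfl
  | step _ ih => exact ih.trans (Ball_mono_succ _)

lemma mem_Ball_succ {j : ℕ} {x : Fin n} : x ∈ Ball nb C u i f (j + 1) ↔
    x ∈ Ball nb C u i f j ∨ (x ∉ C ∧ ∃ a ∈ Ball nb C u i f j, x ∈ clsF nb i a ∧ s(a, x) ≠ f) := by
  rw [Ball]; simp

lemma Ball_notMem (hu : u ∉ C) (j : ℕ) : ∀ x ∈ Ball nb C u i f j, x ∉ C := by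
  induction j with
  | zero => intro x hx; rw [Ball, Finset.mem_singleton] at hx; rwa [hx]
  | succ j ih =>
    intro x hx
    rcases mem_Ball_succ.1 hx with h | h
    · exact ih x h
    · exact h.1

lemma card_Ball_le (j : ℕ) : (Ball nb C u i f j).card ≤ 5 ^ j := by
  classical
  induction j with
  | zero => simp [Ball]
  | succ j ih =>
    have hsub : Ball nb C u i f (j + 1) ⊆ Ball nb C u i f j ∪
        (Ball nb C u i f j).biUnion (clsF nb i) := by
      intro x hx
      rw [Finset.mem_union, Finset.mem_biUnion]
      rcases mem_Ball_succ.1 hx with h | ⟨-, a, h1, h2, -⟩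
      · exact Or.inl h
      · exact Or.inr ⟨a, h1, h2⟩
    have h4 : ∀ a ∈ Ball nb C u i f j, (clsF nb i a).card ≤ 4 := by
      intro a _
      refine Finset.card_image_le.trans ?_
      have : (prt d i).image (fun p => p.1) ⊆ Finset.Ico (4 * i) (4 * i + 4) := by
        intro x hx
        obtain ⟨p, hp, rfl⟩ := Finset.mem_image.1 hx
        simpa [prt] using hp
      have h := Finset.card_le_card this
      rw [Finset.card_image_of_injective _ Fin.val_injective] at h
      simpa using h
    have := (Finset.card_le_card hsub).trans (Finset.card_union_le _ _)
    have h5 := Finset.card_biUnion_le_card_mul _ _ 4 h4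
    rw [pow_succ]
    omega

/-- paths inside the ball -/
lemma Ball_path (H : SimpleGraph (Fin n)) (hord : OrdG nb) (K : ℕ)
    (hbad : ∀ a x, (∃ p : H.Walk u a, p.length ≤ K) → Adjn nb a x → s(a, x) ≠ f → H.Adj a x) :
    ∀ j, j ≤ K + 1 → ∀ x ∈ Ball nb C u i f j, ∃ P : H.Walk u x, P.IsPath ∧ P.length ≤ j ∧
      ∀ y ∈ P.support, y = x ∨ ∃ j' < j, y ∈ Ball nb C u i f j' := by
  intro j
  induction j with
  | zero =>
    intro _ x hx
    rw [Ball, Finset.mem_singleton] at hx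
    subst hx
    exact ⟨SimpleGraph.Walk.nil, by simp, by simp, by simp⟩
  | succ j ih =>
    intro hj x hx
    by_cases hxj : x ∈ Ball nb C u i f j
    · obtain ⟨P, h1, h2, h3⟩ := ih (by omega) x hxj
      refine ⟨P, h1, by omega, fun y hy => ?_⟩
      rcases h3 y hy with h | ⟨j', h, h'⟩
      · exact Or.inl h
      · exact Or.inr ⟨j', by omega, h'⟩
    · rcases mem_Ball_succ.1 hx with h | ⟨hxC, a, ha, hax, hf⟩
      · exact (hxj h).elim
      · obtain ⟨P, h1, h2, h3⟩ := ih (by omega) a ha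
        have hH : H.Adj a x := hbad a x ⟨P, by omega⟩ (clsF_adj hax) hf
        have hsup : ∀ y ∈ P.support, y ∈ Ball nb C u i f j := by
          intro y hy
          rcases h3 y hy with h | ⟨j', h, h'⟩
          · rwa [h]
          · exact Ball_mono h.le h'
        refine ⟨P.concat hH, h1.concat (fun h => hxj (hsup x h)) hH, ?_, ?_⟩
        · rw [SimpleGraph.Walk.length_concat]; omega
        · intro y hy
          rw [SimpleGraph.Walk.support_concat, List.mem_append, List.mem_singleton] at hy
          rcases hy with hy | hy
          · exact Or.inr ⟨j, by omega, hsup y hy⟩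
          · exact Or.inl hy

/-- layers -/
noncomputable def Sh (nb : Fin n → Fin d → Fin n) (C : Finset (Fin n)) (u : Fin n) (i : ℕ)
    (f : Sym2 (Fin n)) : ℕ → Finset (Fin n)
  | 0 => {u}
  | j + 1 => Ball nb C u i f (j + 1) \ Ball nb C u i f j

lemma Sh_sub (j : ℕ) : Sh nb C u i f j ⊆ Ball nb C u i f j := by
  cases j with
  | zero => rw [Sh, Ball]
  | succ j => rw [Sh]; exact Finset.sdiff_subset

lemma Sh_not {j : ℕ} {a : Fin n} (ha : a ∈ Sh nb C u i f j) {j' : ℕ} (h : j' < j) :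
    a ∉ Ball nb C u i f j' := by
  cases j with
  | zero => omega
  | succ j =>
    rw [Sh, Finset.mem_sdiff] at ha
    exact fun h' => ha.2 (Ball_mono (by omega) h')

open Classical in
/-- children -/
noncomputable def chd (nb : Fin n → Fin d → Fin n) (C : Finset (Fin n)) (u : Fin n) (i : ℕ)
    (f : Sym2 (Fin n)) (j : ℕ) (a : Fin n) : Finset (Fin n) :=
  (clsF nb i a).filter (fun x => x ∉ C ∧ x ∉ Ball nb C u i f j ∧ s(a, x) ≠ f)

open Classical in
lemma chd_card (H : SimpleGraph (Fin n)) (hord : OrdG nb) (K : ℕ) (hid : 4 * i + 4 ≤ d)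
    (hu : u ∉ C)
    (hbad : ∀ a x, (∃ p : H.Walk u a, p.length ≤ K) → Adjn nb a x → s(a, x) ≠ f → H.Adj a x)
    (huniq : ∀ x y (p q : H.Walk x y), p.IsPath → q.IsPath → p.length ≤ K + 1 →
      q.length ≤ K + 1 → p = q)
    (hC1 : ∀ v, v ∉ C → ∀ x y, Adjn nb v x → Adjn nb v y → x ∈ C → y ∈ C → x = y)
    (j : ℕ) (hj : j ≤ K) (a : Fin n) (ha : a ∈ Sh nb C u i f j) :
    (if j = 0 then 3 else 2) ≤ (chd nb C u i f j a).card + (if a ∈ f then 1 else 0) := by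
  have haB := Sh_sub _ ha
  have haC := Ball_notMem hu j a haB
  obtain ⟨P, hP1, hP2, hP3⟩ := Ball_path H hord K hbad j (by omega) a haB
  have hHadj : ∀ x ∈ clsF nb i a, s(a, x) ≠ f → H.Adj a x := fun x hx hf =>
    hbad a x ⟨P, by omega⟩ (clsF_adj hx) hf
  have c4 : (clsF nb i a).card = 4 := by
    rw [clsF, Finset.card_image_of_injective _ (hord.inj a), card_prt d i hid]
  set X1 := (clsF nb i a).filter (fun x => x ∈ C) with hX1
  set X2 := (clsF nb i a).filter (fun x => s(a, x) = f) with hX2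
  set X3 := (clsF nb i a).filter (fun x => s(a, x) ≠ f ∧ x ∈ Ball nb C u i f j) with hX3
  have hsub : clsF nb i a ⊆ chd nb C u i f j a ∪ (X1 ∪ (X2 ∪ X3)) := by
    intro x hx
    simp only [hX1, hX2, hX3, chd, Finset.mem_union, Finset.mem_filter, hx, true_and]
    tauto
  have h1 : X1.card ≤ 1 := by
    refine Finset.card_le_one.2 fun x hx y hy => ?_
    rw [hX1, Finset.mem_filter] at hx hy
    exact hC1 a haC x y (clsF_adj hx.1) (clsF_adj hy.1) hx.2 hy.2
  have h2 : X2.card ≤ if a ∈ f then 1 else 0 := by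
    split_ifs with haf
    · refine Finset.card_le_one.2 fun x hx y hy => ?_
      rw [hX2, Finset.mem_filter] at hx hy
      exact Sym2.congr_right.1 (hx.2.trans hy.2.symm)
    · rw [Nat.le_zero, Finset.card_eq_zero, hX2, Finset.filter_eq_empty_iff]
      intro x _ h
      exact haf (by rw [← h]; simp)
  have h3 : X3.card ≤ if j = 0 then 0 else 1 := by
    split_ifs with hj0
    · subst hj0
      rw [Nat.le_zero, Finset.card_eq_zero, hX3, Finset.filter_eq_empty_iff]
      rintro x hx ⟨h1, h2⟩
      rw [Ball, Finset.mem_singleton] at h2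
      rw [Sh, Finset.mem_singleton] at ha
      exact hord.adj_ne (clsF_adj hx) (ha.trans h2.symm)
    · refine Finset.card_le_one.2 fun x hx y hy => ?_
      rw [hX3, Finset.mem_filter] at hx hy
      have key : ∀ x, x ∈ clsF nb i a → s(a, x) ≠ f → x ∈ Ball nb C u i f j →
          ∃ (h : H.Adj x a) (Q : H.Walk u x), (Q.concat h).IsPath ∧ Q.length ≤ j := by
        intro x hx hf hxB
        obtain ⟨Q, hQ1, hQ2, hQ3⟩ := Ball_path H hord K hbad j (by omega) x hxB
        have hA := (hHadj x hx hf)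
        refine ⟨hA.symm, Q, hQ1.concat (fun h => ?_) hA.symm, hQ2⟩
        rcases hQ3 a h with h | ⟨j', h, h'⟩
        · exact hA.ne h
        · exact Sh_not ha h h'
      obtain ⟨g1, Q1, k1, l1⟩ := key x hx.1 hx.2.1 hx.2.2
      obtain ⟨g2, Q2, k2, l2⟩ := key y hy.1 hy.2.1 hy.2.2
      have he := huniq _ _ _ _ k1 k2 (by rw [SimpleGraph.Walk.length_concat]; omega)
        (by rw [SimpleGraph.Walk.length_concat]; omega)
      exact (SimpleGraph.Walk.concat_inj he).1
  have h5 := Finset.card_le_card hsub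
  have h6 := Finset.card_union_le (chd nb C u i f j a) (X1 ∪ (X2 ∪ X3))
  have h7 := Finset.card_union_le X1 (X2 ∪ X3)
  have h8 := Finset.card_union_le X2 X3
  split_ifs at * <;> omega

open Classical in
lemma Sh_succ_card (H : SimpleGraph (Fin n)) (hord : OrdG nb) (K : ℕ) (hid : 4 * i + 4 ≤ d)
    (hu : u ∉ C)
    (hbad : ∀ a x, (∃ p : H.Walk u a, p.length ≤ K) → Adjn nb a x → s(a, x) ≠ f → H.Adj a x)
    (huniq : ∀ x y (p q : H.Walk x y), p.IsPath → q.IsPath → p.length ≤ K + 1 →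
      q.length ≤ K + 1 → p = q)
    (hC1 : ∀ v, v ∉ C → ∀ x y, Adjn nb v x → Adjn nb v y → x ∈ C → y ∈ C → x = y)
    (j : ℕ) (hj : j ≤ K) :
    (if j = 0 then 3 else 2) * (Sh nb C u i f j).card ≤ (Sh nb C u i f (j + 1)).card +
      ((Sh nb C u i f j).filter (fun a => a ∈ f)).card := by
  have hsub : (Sh nb C u i f j).biUnion (chd nb C u i f j) ⊆ Sh nb C u i f (j + 1) := by
    intro x hx
    obtain ⟨a, ha, hx⟩ := Finset.mem_biUnion.1 hx
    rw [chd, Finset.mem_filter] at hx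
    rw [Sh, Finset.mem_sdiff]
    exact ⟨mem_Ball_succ.2 (Or.inr ⟨hx.2.1, a, Sh_sub _ ha, hx.1, hx.2.2.2⟩), hx.2.2.1⟩
  have hdisj : ((Sh nb C u i f j : Finset (Fin n)) : Set (Fin n)).PairwiseDisjoint
      (chd nb C u i f j) := by
    intro a ha b hb hab
    rw [Function.onFun, Finset.disjoint_left]
    intro x hxa hxb
    have key : ∀ a ∈ Sh nb C u i f j, x ∈ chd nb C u i f j a →
        ∃ (h : H.Adj a x) (Q : H.Walk u a), (Q.concat h).IsPath ∧ Q.length ≤ j := by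
      intro a ha hxa
      rw [chd, Finset.mem_filter] at hxa
      obtain ⟨Q, hQ1, hQ2, hQ3⟩ := Ball_path H hord K hbad j (by omega) a (Sh_sub _ ha)
      have hA := hbad a x ⟨Q, by omega⟩ (clsF_adj hxa.1) hxa.2.2.2
      refine ⟨hA, Q, hQ1.concat (fun h => ?_) hA, hQ2⟩
      rcases hQ3 x h with h | ⟨j', h, h'⟩
      · exact hA.ne h.symm
      · exact hxa.2.2.1 (Ball_mono h.le h')
    obtain ⟨g1, Q1, k1, l1⟩ := key a ha hxa
    obtain ⟨g2, Q2, k2, l2⟩ := key b hb hxb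
    have he := huniq _ _ _ _ k1 k2 (by rw [SimpleGraph.Walk.length_concat]; omega)
      (by rw [SimpleGraph.Walk.length_concat]; omega)
    exact hab (SimpleGraph.Walk.concat_inj he).1
  have h1 := Finset.card_le_card hsub
  rw [Finset.card_biUnion hdisj] at h1
  have h2 : ∑ _a ∈ Sh nb C u i f j, (if j = 0 then 3 else 2) ≤
      ∑ a ∈ Sh nb C u i f j, ((chd nb C u i f j a).card + (if a ∈ f then 1 else 0)) :=
    Finset.sum_le_sum fun a ha => chd_card H hord K hid hu hbad huniq hC1 j hj a ha
  rw [Finset.sum_const, Finset.sum_add_distrib, smul_eq_mul, mul_comm] at h2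
  rw [Finset.card_filter]
  omega

open Classical in
/-- exponential growth of the layers and of the open ports -/
theorem Opn_card (H : SimpleGraph (Fin n)) (hord : OrdG nb) (K : ℕ) (hid : 4 * i + 4 ≤ d)
    (hu : u ∉ C)
    (hbad : ∀ a x, (∃ p : H.Walk u a, p.length ≤ K + 1) → Adjn nb a x → s(a, x) ≠ f → H.Adj a x)
    (huniq : ∀ x y (p q : H.Walk x y), p.IsPath → q.IsPath → p.length ≤ K + 2 →
      q.length ≤ K + 2 → p = q)
    (hC1 : ∀ v, v ∉ C → ∀ x y, Adjn nb v x → Adjn nb v y → x ∈ C → y ∈ C → x = y) :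
    2 ^ K ≤ (Opn nb C u i f (K + 1)).card := by
  have inv : ∀ k, k ≤ K → 3 * 2 ^ k ≤ (Sh nb C u i f (k + 1)).card +
      2 ^ k * ((Ball nb C u i f k).filter (fun a => a ∈ f)).card := by
    intro k
    induction k with
    | zero =>
      intro _
      have := Sh_succ_card H hord (K + 1) hid hu hbad huniq hC1 0 (by omega)
      simp only [if_true] at this
      have h0 : Sh nb C u i f 0 = {u} := by rw [Sh]
      have h1 : Ball nb C u i f 0 = {u} := by rw [Ball]
      rw [h0] at this
      rw [h1]
      simpa using this
    | succ k ih =>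
      intro hk
      have h1 := ih (by omega)
      have h2 := Sh_succ_card H hord (K + 1) hid hu hbad huniq hC1 (k + 1) (by omega)
      rw [if_neg (by omega)] at h2
      have h3 : ((Ball nb C u i f (k + 1)).filter (fun a => a ∈ f)).card =
          ((Ball nb C u i f k).filter (fun a => a ∈ f)).card +
          ((Sh nb C u i f (k + 1)).filter (fun a => a ∈ f)).card := by
        rw [← Finset.card_union_of_disjoint]
        · congr 1
          rw [← Finset.filter_union, Sh, Finset.union_sdiff_of_subset (Ball_mono_succ k)]
        · refine Finset.disjoint_filter_filter ?_
          rw [Sh]; exact Finset.disjoint_sdiff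
      rw [h3, pow_succ]
      have h4 : 1 ≤ 2 ^ k := Nat.one_le_two_pow
      nlinarith [Nat.zero_le ((Sh nb C u i f (k + 1)).filter (fun a => a ∈ f)).card]
  have h1 := inv K le_rfl
  have h2 : ((Ball nb C u i f K).filter (fun a => a ∈ f)).card ≤ 2 := by
    induction f using Sym2.ind with
    | _ x y =>
      refine (Finset.card_le_card (t := {x, y}) ?_).trans Finset.card_le_two
      intro z hz
      have := (Finset.mem_filter.1 hz).2
      simpa using this
  have h3 : 2 ^ K ≤ (Sh nb C u i f (K + 1)).card := by
    have := Nat.mul_le_mul_left (2 ^ K) h2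
    omega
  refine h3.trans ?_
  have hsub : Sh nb C u i f (K + 1) ⊆ (Opn nb C u i f (K + 1)).image Prod.fst := by
    intro a ha
    have h := chd_card H hord (K + 1) hid hu hbad huniq hC1 (K + 1) (by omega) a ha
    have hpos : 0 < (chd nb C u i f (K + 1) a).card := by
      rw [if_neg (by omega)] at h
      split_ifs at h <;> omega
    obtain ⟨x, hx⟩ := Finset.card_pos.1 hpos
    rw [chd, Finset.mem_filter] at hx
    obtain ⟨p, hp, rfl⟩ := Finset.mem_image.1 hx.1
    refine Finset.mem_image.2 ⟨(a, p), ?_, rfl⟩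
    rw [Opn, Finset.mem_filter]
    exact ⟨Finset.mem_univ _, Sh_sub _ ha, hp, hx.2⟩
  exact (Finset.card_le_card hsub).trans Finset.card_image_le

end
end Balls


/-! ### The core trees -/

section Run
variable {n d q : ℕ}

/-- the vertex behind a port (junk: the vertex itself) -/
def pt (nb : Fin n → Fin d → Fin n) (v : Fin n) (p : ℕ) : Fin n :=
  if h : p < d then nb v ⟨p, h⟩ else v

/-- the two children of a core vertex -/
def kid (nb : Fin n → Fin d → Fin n) (c p : Fin n) (b : ℕ) : Fin n :=
  if b = 0 then (if pt nb c 0 = p then pt nb c 2 else pt nb c 0)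
  else (if pt nb c 1 = p then pt nb c 2 else pt nb c 1)

/-- vertex and parent at heap position `k` of the tree with label `i` -/
def pos (nb : Fin n → Fin d → Fin n) (r : Fin n) (i : ℕ) (k : ℕ) : Fin n × Fin n :=
  if k ≤ 1 then (pt nb r i, r)
  else (kid nb (pos nb r i (k / 2)).1 (pos nb r i (k / 2)).2 (k % 2), (pos nb r i (k / 2)).1)
termination_by k
decreasing_by all_goals omega

/-- vertex at address `m` -/
def vx (nb : Fin n → Fin d → Fin n) (r : Fin n) (t m : ℕ) : Fin n := (pos nb r (m % t) (m / t)).1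

/-- parent vertex of address `m` -/
def pr (nb : Fin n → Fin d → Fin n) (r : Fin n) (t m : ℕ) : Fin n := (pos nb r (m % t) (m / t)).2

/-- parent address -/
def pad (t m : ℕ) : ℕ := t * (m / t / 2) + m % t

/-- the outward neighbours of address `m` -/
def Oo (nb : Fin n → Fin d → Fin n) (r : Fin n) (t m : ℕ) : Finset (Fin n) :=
  (nbr nb (vx nb r t m)).erase (pr nb r t m)

/-- acceptance test -/
def okk (nb : Fin n → Fin d → Fin n) (κ : Fin n → Fin (q + 1)) (r : Fin n) (t : ℕ)
    (A : Finset ℕ) (m : ℕ) : Prop :=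
  t ≤ m ∧ (m / t = 1 ∨ pad t m ∈ A) ∧ κ (vx nb r t m) ≠ 0 ∧
    Disjoint (Oo nb r t m) (nbr nb r) ∧ ∀ β ∈ A, Disjoint (Oo nb r t m) (Oo nb r t β)

open Classical in
/-- alive addresses below `m` -/
noncomputable def al (nb : Fin n → Fin d → Fin n) (κ : Fin n → Fin (q + 1)) (r : Fin n) (t : ℕ) :
    ℕ → Finset ℕ
  | 0 => ∅
  | m + 1 => if okk nb κ r t (al nb κ r t m) m then insert m (al nb κ r t m) else al nb κ r t m

/-- core vertices -/
noncomputable def Core (nb : Fin n → Fin d → Fin n) (κ : Fin n → Fin (q + 1)) (r : Fin n)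
    (t M : ℕ) : Finset (Fin n) := insert r ((al nb κ r t M).image (vx nb r t))

lemma pad_mod {t : ℕ} (_ht : 0 < t) (m : ℕ) : pad t m % t = m % t := by
  rw [pad, Nat.mul_add_mod, Nat.mod_mod]

lemma pad_div {t : ℕ} (ht : 0 < t) (m : ℕ) : pad t m / t = m / t / 2 := by
  rw [pad, Nat.mul_add_div ht, Nat.div_eq_of_lt (Nat.mod_lt _ ht), add_zero]

lemma addr_eq {t m m' : ℕ} (h1 : m / t = m' / t) (h2 : m % t = m' % t) : m = m' := by
  rw [← Nat.div_add_mod m t, ← Nat.div_add_mod m' t, h1, h2]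

lemma pad_lt {t m : ℕ} (ht : 0 < t) (h : t ≤ m) : pad t m < m := by
  have h1 : 1 ≤ m / t := (Nat.le_div_iff_mul_le ht).2 (by omega)
  have h2 : m / t / 2 < m / t := by omega
  calc pad t m = t * (m / t / 2) + m % t := rfl
    _ < t * (m / t) + m % t := by
      have := Nat.mul_lt_mul_of_pos_left h2 ht
      omega
    _ = m := Nat.div_add_mod m t

variable (nb : Fin n → Fin d → Fin n) (κ : Fin n → Fin (q + 1)) (r : Fin n) (t : ℕ)

lemma vx_one {m : ℕ} (h : m / t ≤ 1) : vx nb r t m = pt nb r (m % t) := by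
  rw [vx, pos, if_pos h]

lemma pr_one {m : ℕ} (h : m / t ≤ 1) : pr nb r t m = r := by
  rw [pr, pos, if_pos h]

lemma vx_two (ht : 0 < t) {m : ℕ} (h : ¬ m / t ≤ 1) : vx nb r t m =
    kid nb (vx nb r t (pad t m)) (pr nb r t (pad t m)) (m / t % 2) := by
  rw [vx, pos, if_neg h, vx, pr, pad_mod ht, pad_div ht]

lemma pr_two (ht : 0 < t) {m : ℕ} (h : ¬ m / t ≤ 1) :
    pr nb r t m = vx nb r t (pad t m) := by
  rw [pr, pos, if_neg h, vx, pad_mod ht, pad_div ht]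

lemma al_succ_sub (m : ℕ) : al nb κ r t m ⊆ al nb κ r t (m + 1) := by
  rw [al]; split_ifs
  · exact Finset.subset_insert _ _
  · exact subset_rfl

lemma al_mono {m M : ℕ} (h : m ≤ M) : al nb κ r t m ⊆ al nb κ r t M := by
  induction h with
  | refl => exact subset_rfl
  | step _ ih => exact ih.trans (al_succ_sub _ _ _ _ _)

lemma al_lt {m M : ℕ} (h : m ∈ al nb κ r t M) : m < M := by
  induction M with
  | zero => simp [al] at h
  | succ M ih =>
    rw [al] at h
    split_ifs at h
    · rcases Finset.mem_insert.1 h with h | h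
      · omega
      · have := ih h; omega
    · have := ih h; omega

lemma al_ok {m M : ℕ} (h : m ∈ al nb κ r t M) : okk nb κ r t (al nb κ r t m) m := by
  induction M with
  | zero => simp [al] at h
  | succ M ih =>
    rw [al] at h
    split_ifs at h with ho
    · rcases Finset.mem_insert.1 h with h | h
      · rw [h]; exact ho
      · exact ih h
    · exact ih h

lemma al_mem {m M : ℕ} (hm : m < M) : m ∈ al nb κ r t M ↔ okk nb κ r t (al nb κ r t m) m := by
  constructor
  · exact al_ok nb κ r t
  · intro h
    refine al_mono nb κ r t (show m + 1 ≤ M from hm) ?_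
    rw [al, if_pos h]
    exact Finset.mem_insert_self _ _

variable {nb κ r t}

lemma r_mem_Core {M : ℕ} : r ∈ Core nb κ r t M := Finset.mem_insert_self _ _

lemma vx_mem_Core {m M : ℕ} (h : m ∈ al nb κ r t M) : vx nb r t m ∈ Core nb κ r t M :=
  Finset.mem_insert_of_mem (Finset.mem_image_of_mem _ h)

lemma mem_Core {x : Fin n} {M : ℕ} : x ∈ Core nb κ r t M ↔
    x = r ∨ ∃ m ∈ al nb κ r t M, vx nb r t m = x := by
  rw [Core, Finset.mem_insert, Finset.mem_image]

lemma card_Core_le (M : ℕ) : (Core nb κ r t M).card ≤ M + 1 := by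
  refine (Finset.card_insert_le _ _).trans ?_
  have h1 : (al nb κ r t M) ⊆ Finset.range M := fun m hm =>
    Finset.mem_range.2 (al_lt nb κ r t hm)
  have h2 := Finset.card_le_card h1
  have h3 : ((al nb κ r t M).image (vx nb r t)).card ≤ _ := Finset.card_image_le
  simp at h2
  omega

lemma al_one_le {m M : ℕ} (ht : 0 < t) (h : m ∈ al nb κ r t M) : 1 ≤ m / t :=
  (Nat.le_div_iff_mul_le ht).2 (by have := (al_ok nb κ r t h).1; omega)

lemma al_par {m M : ℕ} (h : m ∈ al nb κ r t M) (h2 : ¬ m / t ≤ 1) :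
    pad t m ∈ al nb κ r t M := by
  have h1 := al_ok nb κ r t h
  rcases h1.2.1 with h3 | h3
  · omega
  · exact al_mono nb κ r t (al_lt nb κ r t h).le h3

lemma O_disj_r {m M : ℕ} (h : m ∈ al nb κ r t M) : Disjoint (Oo nb r t m) (nbr nb r) :=
  (al_ok nb κ r t h).2.2.2.1

lemma O_disj {m m' M : ℕ} (h : m ∈ al nb κ r t M) (h' : m' ∈ al nb κ r t M) (hne : m ≠ m') :
    Disjoint (Oo nb r t m) (Oo nb r t m') := by
  wlog hlt : m' < m generalizing m m'
  · exact (this h' h hne.symm (by omega)).symm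
  refine (al_ok nb κ r t h).2.2.2.2 m' ?_
  rw [al_mem nb κ r t hlt]
  exact al_ok nb κ r t h'

lemma pt_adj (c : Fin n) {p : ℕ} (hp : p < d) : Adjn nb c (pt nb c p) := by
  rw [pt, dif_pos hp]; exact ⟨_, rfl⟩

lemma pt_inj (hord : OrdG nb) (c : Fin n) {p p' : ℕ} (hp : p < d) (hp' : p' < d)
    (h : pt nb c p = pt nb c p') : p = p' := by
  rw [pt, dif_pos hp, pt, dif_pos hp'] at h
  exact congrArg Fin.val (hord.inj c h)

lemma kid_adj (hd : 3 ≤ d) (c p : Fin n) (b : ℕ) : Adjn nb c (kid nb c p b) := by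
  rw [kid]
  split_ifs <;> exact pt_adj c (by omega)

lemma kid_ne (hord : OrdG nb) (hd : 3 ≤ d) (c p : Fin n) (b : ℕ) : kid nb c p b ≠ p := by
  rw [kid]
  split_ifs with h1 h2 h2
  · intro h
    have := pt_inj hord c (by omega) (by omega) (h2.trans h.symm); omega
  · exact h2
  · intro h
    have := pt_inj hord c (by omega) (by omega) (h2.trans h.symm); omega
  · exact h2

lemma kid_ne_kid (hord : OrdG nb) (hd : 3 ≤ d) (c p : Fin n) :
    kid nb c p 0 ≠ kid nb c p 1 := by
  simp only [kid, if_true, one_ne_zero, if_false]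
  split_ifs with h1 h2 h2
  · have := pt_inj hord c (by omega) (by omega) (h1.trans h2.symm); omega
  all_goals
    intro h
    have := pt_inj hord c (by omega) (by omega) h; omega

lemma vx_mem_O (hord : OrdG nb) (hd : 3 ≤ d) (ht : 0 < t) {m : ℕ} (h : ¬ m / t ≤ 1) :
    vx nb r t m ∈ Oo nb r t (pad t m) := by
  rw [vx_two nb r t ht h, Oo, Finset.mem_erase]
  exact ⟨kid_ne hord hd _ _ _, mem_nbr.2 (kid_adj hd _ _ _)⟩

lemma vx_mem_nbr_r (_hd : 3 ≤ d) (ht : 0 < t) (htd : t ≤ d) {m : ℕ} (h : m / t ≤ 1) :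
    vx nb r t m ∈ nbr nb r := by
  rw [vx_one nb r t h]
  have := Nat.mod_lt m ht
  exact mem_nbr.2 (pt_adj _ (by omega))

lemma pr_adj (hd : 3 ≤ d) (ht : 0 < t) (htd : t ≤ d) (m : ℕ) :
    Adjn nb (pr nb r t m) (vx nb r t m) := by
  by_cases h : m / t ≤ 1
  · rw [pr_one nb r t h]
    exact mem_nbr.1 (vx_mem_nbr_r hd ht htd h)
  · rw [pr_two nb r t ht h, vx_two nb r t ht h]
    exact kid_adj hd _ _ _

lemma pr_mem_Core (ht : 0 < t) {m M : ℕ} (h : m / t ≤ 1 ∨ pad t m ∈ al nb κ r t M) :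
    pr nb r t m ∈ Core nb κ r t M := by
  by_cases h1 : m / t ≤ 1
  · rw [pr_one nb r t h1]; exact r_mem_Core
  · rw [pr_two nb r t ht h1]
    exact vx_mem_Core (h.resolve_left h1)

lemma r_not_O (hord : OrdG nb) (hd : 3 ≤ d) (ht : 0 < t) {m M : ℕ}
    (h : m ∈ al nb κ r t M) : r ∉ Oo nb r t m := by
  intro hr
  rw [Oo, Finset.mem_erase, mem_nbr] at hr
  by_cases h1 : m / t ≤ 1
  · exact hr.1 (pr_one nb r t h1).symm
  · have h2 := vx_mem_O (r := r) hord hd ht h1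
    have h3 := O_disj_r (al_par h h1)
    exact Finset.disjoint_left.1 h3 h2 (mem_nbr.2 (hord.adj_symm hr.2))

/-- a candidate vertex determines its address among candidates -/
lemma cand_inj (hord : OrdG nb) (hd : 3 ≤ d) (ht : 0 < t) (htd : t ≤ d) {m m' M : ℕ}
    (h1 : 1 ≤ m / t) (h1' : 1 ≤ m' / t)
    (h : m / t = 1 ∨ pad t m ∈ al nb κ r t M) (h' : m' / t = 1 ∨ pad t m' ∈ al nb κ r t M)
    (he : vx nb r t m = vx nb r t m') : m = m' := by
  by_cases c : m / t ≤ 1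
  · by_cases c' : m' / t ≤ 1
    · have e1 := vx_one nb r t c
      have e2 := vx_one nb r t c'
      have := pt_inj hord r (by have := Nat.mod_lt m ht; omega)
        (by have := Nat.mod_lt m' ht; omega) (e1.symm.trans (he.trans e2))
      exact addr_eq (by omega) this
    · exfalso
      have a1 := vx_mem_nbr_r (nb := nb) (r := r) hd ht htd c
      have a2 := vx_mem_O (r := r) hord hd ht c'
      have a3 := O_disj_r (h'.resolve_left (by omega))
      rw [he] at a1
      exact Finset.disjoint_left.1 a3 a2 a1
  · by_cases c' : m' / t ≤ 1
    · exfalso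
      have a1 := vx_mem_nbr_r (nb := nb) (r := r) hd ht htd c'
      have a2 := vx_mem_O (r := r) hord hd ht c
      have a3 := O_disj_r (h.resolve_left (by omega))
      rw [← he] at a1
      exact Finset.disjoint_left.1 a3 a2 a1
    · have a1 := vx_mem_O (r := r) hord hd ht c
      have a2 := vx_mem_O (r := r) hord hd ht c'
      have hp : pad t m = pad t m' := by
        by_contra hne
        have a3 := O_disj (h.resolve_left (by omega)) (h'.resolve_left (by omega)) hne
        rw [← he] at a2
        exact Finset.disjoint_left.1 a3 a1 a2
      have e1 : m % t = m' % t := by rw [← pad_mod ht m, ← pad_mod ht m', hp]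
      have e2 : m / t / 2 = m' / t / 2 := by rw [← pad_div ht m, ← pad_div ht m', hp]
      have e3 : m / t % 2 = m' / t % 2 := by
        rw [vx_two nb r t ht c, vx_two nb r t ht c', hp] at he
        have := kid_ne_kid hord hd (vx nb r t (pad t m')) (pr nb r t (pad t m'))
        rcases Nat.mod_two_eq_zero_or_one (m / t) with b | b <;>
        rcases Nat.mod_two_eq_zero_or_one (m' / t) with b' | b' <;>
        rw [b, b'] at he ⊢
        · exact (this he).elim
        · exact (this he.symm).elim
      exact addr_eq (by omega) e1

lemma vx_inj (hord : OrdG nb) (hd : 3 ≤ d) (ht : 0 < t) (htd : t ≤ d) {m m' M : ℕ}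
    (h : m ∈ al nb κ r t M) (h' : m' ∈ al nb κ r t M)
    (he : vx nb r t m = vx nb r t m') : m = m' := by
  have a1 := al_one_le ht h
  have a2 := al_one_le ht h'
  refine cand_inj (κ := κ) (M := M) hord hd ht htd a1 a2 ?_ ?_ he
  · by_cases c : m / t ≤ 1
    · left; omega
    · exact Or.inr (al_par h c)
  · by_cases c : m' / t ≤ 1
    · left; omega
    · exact Or.inr (al_par h' c)

lemma cand_ne_r (hord : OrdG nb) (hd : 3 ≤ d) (ht : 0 < t) (htd : t ≤ d) {m M : ℕ}
    (h : m / t ≤ 1 ∨ pad t m ∈ al nb κ r t M) : vx nb r t m ≠ r := by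
  intro he
  by_cases c : m / t ≤ 1
  · have := vx_mem_nbr_r (nb := nb) (r := r) hd ht htd c
    rw [he] at this
    exact hord.adj_ne (mem_nbr.1 this) rfl
  · have := vx_mem_O (r := r) hord hd ht c
    rw [he] at this
    exact r_not_O hord hd ht (h.resolve_left c) this

lemma vx_ne_r (hord : OrdG nb) (hd : 3 ≤ d) (ht : 0 < t) (htd : t ≤ d) {m M : ℕ}
    (h : m ∈ al nb κ r t M) : vx nb r t m ≠ r := by
  refine cand_ne_r (κ := κ) (M := M) hord hd ht htd ?_
  by_cases c : m / t ≤ 1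
  · exact Or.inl c
  · exact Or.inr (al_par h c)

lemma al_pr_Core (ht : 0 < t) {m M : ℕ} (h : m ∈ al nb κ r t M) :
    pr nb r t m ∈ Core nb κ r t M := by
  refine pr_mem_Core ht ?_
  by_cases c : m / t ≤ 1
  · exact Or.inl c
  · exact Or.inr (al_par h c)

/-- vertices off the core have at most one core neighbour -/
lemma core_nbr_unique (hord : OrdG nb) (ht : 0 < t) {M : ℕ} (v : Fin n)
    (hv : v ∉ Core nb κ r t M) (x y : Fin n) (hx : Adjn nb v x) (hy : Adjn nb v y)
    (hxC : x ∈ Core nb κ r t M) (hyC : y ∈ Core nb κ r t M) : x = y := by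
  have key : ∀ m ∈ al nb κ r t M, Adjn nb v (vx nb r t m) → v ∈ Oo nb r t m := by
    intro m hm ha
    rw [Oo, Finset.mem_erase, mem_nbr]
    exact ⟨fun h => hv (h ▸ al_pr_Core ht hm), hord.adj_symm ha⟩
  have keyr : Adjn nb v r → v ∈ nbr nb r := fun h => mem_nbr.2 (hord.adj_symm h)
  rcases mem_Core.1 hxC with rfl | ⟨m, hm, rfl⟩ <;> rcases mem_Core.1 hyC with rfl | ⟨m', hm', rfl⟩
  · rfl
  · exact (Finset.disjoint_left.1 (O_disj_r hm') (key m' hm' hy) (keyr hx)).elim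
  · exact (Finset.disjoint_left.1 (O_disj_r hm) (key m hm hx) (keyr hy)).elim
  · by_cases hmm : m = m'
    · rw [hmm]
    · exact (Finset.disjoint_left.1 (O_disj hm hm' hmm) (key m hm hx) (key m' hm' hy)).elim

/-- core neighbours of a core vertex -/
lemma core_core (hord : OrdG nb) (hd : 3 ≤ d) (ht : 0 < t) (htd : t ≤ d) {M m : ℕ}
    (hm : m ∈ al nb κ r t M) (x : Fin n) (hx : Adjn nb (vx nb r t m) x)
    (hxC : x ∈ Core nb κ r t M) : x = pr nb r t m ∨
      x = kid nb (vx nb r t m) (pr nb r t m) 0 ∨ x = kid nb (vx nb r t m) (pr nb r t m) 1 := by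
  by_cases hxp : x = pr nb r t m
  · exact Or.inl hxp
  right
  have hxO : x ∈ Oo nb r t m := by
    rw [Oo, Finset.mem_erase, mem_nbr]; exact ⟨hxp, hx⟩
  rcases mem_Core.1 hxC with rfl | ⟨m', hm', rfl⟩
  · exact (r_not_O hord hd ht hm hxO).elim
  · by_cases c : m' / t ≤ 1
    · exact (Finset.disjoint_left.1 (O_disj_r hm) hxO (vx_mem_nbr_r hd ht htd c)).elim
    · have hp : pad t m' = m := by
        by_contra hne
        exact Finset.disjoint_left.1 (O_disj (al_par hm' c) hm hne)
          (vx_mem_O hord hd ht c) hxO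
      rw [vx_two nb r t ht c, hp]
      rcases Nat.mod_two_eq_zero_or_one (m' / t) with b | b <;> rw [b]
      · exact Or.inl rfl
      · exact Or.inr rfl

/-- children of the last level are not in the core -/
lemma leaf_kid (hord : OrdG nb) (hd : 3 ≤ d) (ht : 0 < t) (htd : t ≤ d) {S m : ℕ}
    (hm : m ∈ al nb κ r t (t * 2 ^ (S + 1))) (hS : 2 ^ S ≤ m / t) :
    kid nb (vx nb r t m) (pr nb r t m) 0 ∉ Core nb κ r t (t * 2 ^ (S + 1)) := by
  intro hC
  have hO : kid nb (vx nb r t m) (pr nb r t m) 0 ∈ Oo nb r t m := by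
    rw [Oo, Finset.mem_erase, mem_nbr]; exact ⟨kid_ne hord hd _ _ _, kid_adj hd _ _ _⟩
  rcases mem_Core.1 hC with h | ⟨m', hm', h⟩
  · rw [h] at hO
    exact r_not_O hord hd ht hm hO
  · rw [← h] at hO
    by_cases c : m' / t ≤ 1
    · exact (Finset.disjoint_left.1 (O_disj_r hm) hO (vx_mem_nbr_r hd ht htd c)).elim
    · have hp : pad t m' = m := by
        by_contra hne
        exact Finset.disjoint_left.1 (O_disj (al_par hm' c) hm hne)
          (vx_mem_O hord hd ht c) hO
      have h1 := pad_div ht m'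
      rw [hp] at h1
      have h2 : m' / t < 2 ^ (S + 1) := by
        rw [Nat.div_lt_iff_lt_mul ht, mul_comm]; exact al_lt nb κ r t hm'
      rw [pow_succ] at h2
      omega

lemma kid_congr {nb nb' : Fin n → Fin d → Fin n} {c p : Fin n} {b : ℕ} (h : nb' c = nb c) :
    kid nb' c p b = kid nb c p b := by
  have : ∀ k, pt nb' c k = pt nb c k := by intro k; rw [pt, pt, h]
  simp only [kid, this]

/-- invariance of the run under changes off the core -/
lemma run_inv {nb' : Fin n → Fin d → Fin n} {κ' : Fin n → Fin (q + 1)} (T : Finset (Fin n))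
    (ht : 0 < t) (M : ℕ) (hT : ∀ x ∈ T, x ∉ Core nb κ r t M)
    (hnb : ∀ v, v ∉ T → nb' v = nb v) (hκ : ∀ v, v ∉ T → κ' v = κ v)
    (hκ0 : ∀ v ∈ T, κ' v = 0) :
    ∀ m, m ≤ M → al nb' κ' r t m = al nb κ r t m ∧ ∀ β ∈ al nb κ r t m,
      vx nb' r t β = vx nb r t β ∧ pr nb' r t β = pr nb r t β := by
  have hrT : r ∉ T := fun h => hT r h r_mem_Core
  have hptr : ∀ i, pt nb' r i = pt nb r i := by intro i; rw [pt, pt, hnb r hrT]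
  have hC : ∀ m ≤ M, ∀ β ∈ al nb κ r t m, vx nb r t β ∉ T := fun m hm β hβ h =>
    hT _ h (vx_mem_Core (al_mono nb κ r t hm hβ))
  intro m
  induction m with
  | zero => intro _; exact ⟨rfl, by simp [al]⟩
  | succ m ih =>
    intro hm
    obtain ⟨ih1, ih2⟩ := ih (by omega)
    have hcand : (m / t ≤ 1 ∨ pad t m ∈ al nb κ r t m) →
        vx nb' r t m = vx nb r t m ∧ pr nb' r t m = pr nb r t m := by
      intro h
      by_cases c : m / t ≤ 1
      · rw [vx_one _ _ _ c, vx_one _ _ _ c, pr_one _ _ _ c, pr_one _ _ _ c, hptr]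
        exact ⟨rfl, rfl⟩
      · have h1 := h.resolve_left c
        obtain ⟨e1, e2⟩ := ih2 _ h1
        rw [vx_two _ _ _ ht c, vx_two _ _ _ ht c, pr_two _ _ _ ht c, pr_two _ _ _ ht c, e1, e2]
        refine ⟨?_, rfl⟩
        exact kid_congr (hnb _ (hC m (by omega) _ h1))
    have hok : okk nb' κ' r t (al nb κ r t m) m ↔ okk nb κ r t (al nb κ r t m) m := by
      by_cases hc : m / t = 1 ∨ pad t m ∈ al nb κ r t m
      · obtain ⟨e1, e2⟩ := hcand (hc.imp (fun h => h.le) id)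
        by_cases hvT : vx nb r t m ∈ T
        · constructor
          · intro h
            exact (h.2.2.1 (by rw [e1]; exact hκ0 _ hvT)).elim
          · intro h
            exact (hT _ hvT (vx_mem_Core ((al_mem nb κ r t (by omega)).2 h))).elim
        · have hO : ∀ β ∈ al nb κ r t m, Oo nb' r t β = Oo nb r t β := by
            intro β hβ
            simp only [Oo, nbr, (ih2 β hβ).1, (ih2 β hβ).2, hnb _ (hC m (by omega) β hβ)]
          have hOm : Oo nb' r t m = Oo nb r t m := by
            simp only [Oo, nbr, e1, e2, hnb _ hvT]
          have hNr : nbr nb' r = nbr nb r := by simp only [nbr, hnb r hrT]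
          unfold okk
          rw [hOm, hNr, e1, hκ _ hvT]
          refine and_congr_right fun _ => and_congr_right fun _ => and_congr_right fun _ =>
            and_congr_right fun _ => forall₂_congr fun β hβ => ?_
          rw [hO β hβ]
      · constructor <;> exact fun h => (hc h.2.1).elim
    rw [al, al, ih1]
    by_cases h : okk nb κ r t (al nb κ r t m) m
    · rw [if_pos h, if_pos (hok.2 h)]
      refine ⟨rfl, fun β hβ => ?_⟩
      rcases Finset.mem_insert.1 hβ with rfl | hβ
      · exact hcand (h.2.1.imp (fun h => h.le) id)
      · exact ih2 β hβ
    · rw [if_neg h, if_neg (fun h' => h (hok.1 h'))]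
      exact ⟨rfl, ih2⟩

lemma core_inv {nb' : Fin n → Fin d → Fin n} {κ' : Fin n → Fin (q + 1)} (T : Finset (Fin n))
    (ht : 0 < t) (M : ℕ) (hT : ∀ x ∈ T, x ∉ Core nb κ r t M)
    (hnb : ∀ v, v ∉ T → nb' v = nb v) (hκ : ∀ v, v ∉ T → κ' v = κ v)
    (hκ0 : ∀ v ∈ T, κ' v = 0) : Core nb' κ' r t M = Core nb κ r t M := by
  obtain ⟨h1, h2⟩ := run_inv (r := r) (t := t) T ht M hT hnb hκ hκ0 M le_rfl
  rw [Core, Core, h1]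
  congr 1
  exact Finset.image_congr fun β hβ => (h2 β hβ).1

lemma cand_inv {nb' : Fin n → Fin d → Fin n} {κ' : Fin n → Fin (q + 1)} (T : Finset (Fin n))
    (ht : 0 < t) (M : ℕ) (hT : ∀ x ∈ T, x ∉ Core nb κ r t M)
    (hnb : ∀ v, v ∉ T → nb' v = nb v) (hκ : ∀ v, v ∉ T → κ' v = κ v)
    (hκ0 : ∀ v ∈ T, κ' v = 0) (m : ℕ) (h : m / t ≤ 1 ∨ pad t m ∈ al nb κ r t M) :
    vx nb' r t m = vx nb r t m := by
  obtain ⟨h1, h2⟩ := run_inv (r := r) (t := t) T ht M hT hnb hκ hκ0 M le_rfl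
  have hrT : r ∉ T := fun h => hT r h r_mem_Core
  by_cases c : m / t ≤ 1
  · rw [vx_one _ _ _ c, vx_one _ _ _ c, pt, pt, hnb r hrT]
  · have h3 := h.resolve_left c
    obtain ⟨e1, e2⟩ := h2 _ h3
    have h4 : vx nb r t (pad t m) ∉ T := fun h => hT _ h (vx_mem_Core h3)
    rw [vx_two _ _ _ ht c, vx_two _ _ _ ht c, e1, e2]
    exact kid_congr (hnb _ h4)

end Run


/-! ### Switchings and double counting -/

section Switch
variable {n d q : ℕ}

/-- states: ordered graph and coins -/
abbrev St (n d q : ℕ) := (Fin n → Fin d → Fin n) × (Fin n → Fin (q + 1))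

/-- quadruples of vertices -/
abbrev Q4 (n : ℕ) := Fin n × Fin n × Fin n × Fin n

/-- replace the edges `yz`, `xx'` by `yx`, `zx'` -/
def sw (y z x x' : Fin n) (nb : Fin n → Fin d → Fin n) : Fin n → Fin d → Fin n := fun v p =>
  if v = y then Equiv.swap z x (nb v p) else if v = z then Equiv.swap y x' (nb v p)
  else if v = x then Equiv.swap x' y (nb v p) else if v = x' then Equiv.swap x z (nb v p)
  else nb v p

/-- pairwise distinct -/
def Dist4 (y z x x' : Fin n) : Prop := y ≠ z ∧ y ≠ x ∧ y ≠ x' ∧ z ≠ x ∧ z ≠ x' ∧ x ≠ x'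

lemma sw_inv {y z x x' : Fin n} (h : Dist4 y z x x') (nb : Fin n → Fin d → Fin n) :
    sw y x z x' (sw y z x x' nb) = nb := by
  obtain ⟨h1, h2, h3, h4, h5, h6⟩ := h
  funext v p
  by_cases a : v = y
  · subst a
    simp [sw, Equiv.swap_comm x z]
  by_cases b : v = z
  · subst b
    simp [sw, h4, h1.symm, Equiv.swap_comm x' y]
  by_cases c : v = x
  · subst c
    simp [sw, h4.symm, h2.symm, Equiv.swap_comm x' y]
  by_cases e : v = x'
  · subst e
    simp [sw, h3.symm, h5.symm, h6.symm, Equiv.swap_comm x z]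
  · simp [sw, a, b, c, e]

lemma sw_off {y z x x' v : Fin n} (nb : Fin n → Fin d → Fin n) (a : v ≠ y) (b : v ≠ z)
    (c : v ≠ x) (e : v ≠ x') : sw y z x x' nb v = nb v := by
  funext p; simp [sw, a, b, c, e]

lemma sw_val {y z x x' v : Fin n} {p : Fin d} (nb : Fin n → Fin d → Fin n)
    (a : nb v p ≠ y) (b : nb v p ≠ z) (c : nb v p ≠ x) (e : nb v p ≠ x') :
    sw y z x x' nb v p = nb v p := by
  simp only [sw]
  split_ifs <;> first | rfl | (rw [Equiv.swap_apply_of_ne_of_ne] <;> assumption)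

/-- validity of a switch -/
def Valid (nb : Fin n → Fin d → Fin n) (y z x x' : Fin n) : Prop :=
  Dist4 y z x x' ∧ Adjn nb y z ∧ Adjn nb x x' ∧ ¬ Adjn nb y x ∧ ¬ Adjn nb z x'

lemma adjn_swap (nb : Fin n → Fin d → Fin n) (v w a b : Fin n) :
    (∃ p, Equiv.swap a b (nb v p) = w) ↔ Adjn nb v (Equiv.swap a b w) := by
  constructor
  · rintro ⟨p, rfl⟩; exact ⟨p, by simp⟩
  · rintro ⟨p, h⟩; exact ⟨p, by rw [h]; simp⟩

lemma sw_adj {nb : Fin n → Fin d → Fin n} (hord : OrdG nb) {y z x x' : Fin n}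
    (h : Valid nb y z x x') (a b : Fin n) : Adjn (sw y z x x' nb) a b ↔
    (Adjn nb a b ∧ s(a, b) ≠ s(y, z) ∧ s(a, b) ≠ s(x, x')) ∨ s(a, b) = s(y, x) ∨
      s(a, b) = s(z, x') := by
  obtain ⟨⟨h1, h2, h3, h4, h5, h6⟩, e1, e2, e3, e4⟩ := h
  have e1' := hord.adj_symm e1
  have e2' := hord.adj_symm e2
  have e3' : ¬ Adjn nb x y := fun h => e3 (hord.adj_symm h)
  have e4' : ¬ Adjn nb x' z := fun h => e4 (hord.adj_symm h)
  have hne : ∀ v, ¬ Adjn nb v v := fun v h => hord.adj_ne h rfl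
  by_cases ha : a = y
  · subst ha
    have : Adjn (sw a z x x' nb) a b ↔ Adjn nb a (Equiv.swap z x b) := by
      rw [← adjn_swap]; simp [Adjn, sw]
    rw [this]
    by_cases hb : b = z
    · subst hb; rw [Equiv.swap_apply_left]; grind
    by_cases hb' : b = x
    · subst hb'; rw [Equiv.swap_apply_right]; grind
    rw [Equiv.swap_apply_of_ne_of_ne hb hb']; grind
  by_cases hz : a = z
  · subst hz
    have : Adjn (sw y a x x' nb) a b ↔ Adjn nb a (Equiv.swap y x' b) := by
      rw [← adjn_swap]; simp [Adjn, sw, ha]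
    rw [this]
    by_cases hb : b = y
    · subst hb; rw [Equiv.swap_apply_left]; grind
    by_cases hb' : b = x'
    · subst hb'; rw [Equiv.swap_apply_right]; grind
    rw [Equiv.swap_apply_of_ne_of_ne hb hb']; grind
  by_cases hx : a = x
  · subst hx
    have : Adjn (sw y z a x' nb) a b ↔ Adjn nb a (Equiv.swap x' y b) := by
      rw [← adjn_swap]; simp [Adjn, sw, ha, hz]
    rw [this]
    by_cases hb : b = x'
    · subst hb; rw [Equiv.swap_apply_left]; grind
    by_cases hb' : b = y
    · subst hb'; rw [Equiv.swap_apply_right]; grind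
    rw [Equiv.swap_apply_of_ne_of_ne hb hb']; grind
  by_cases hx' : a = x'
  · subst hx'
    have : Adjn (sw y z x a nb) a b ↔ Adjn nb a (Equiv.swap x z b) := by
      rw [← adjn_swap]; simp [Adjn, sw, ha, hz, hx]
    rw [this]
    by_cases hb : b = x
    · subst hb; rw [Equiv.swap_apply_left]; grind
    by_cases hb' : b = z
    · subst hb'; rw [Equiv.swap_apply_right]; grind
    rw [Equiv.swap_apply_of_ne_of_ne hb hb']; grind
  · rw [Adjn, sw_off nb ha hz hx hx', ← Adjn]
    grind

lemma sw_ord {nb : Fin n → Fin d → Fin n} (hord : OrdG nb) {y z x x' : Fin n}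
    (h : Valid nb y z x x') : OrdG (sw y z x x' nb) := by
  have hA := sw_adj hord h
  have hne : ∀ a b, Adjn (sw y z x x' nb) a b → a ≠ b := by
    intro a b hab
    obtain ⟨⟨h1, h2, h3, h4, h5, h6⟩, -⟩ := h
    rcases (hA a b).1 hab with h | h | h
    · exact hord.adj_ne h.1
    · rintro rfl; grind
    · rintro rfl; grind
  refine ⟨fun v => ?_, fun v p => (hne v _ ⟨p, rfl⟩).symm, fun v p => ?_⟩
  · intro p p' hp
    simp only [sw] at hp
    split_ifs at hp <;>
    first
      | exact hord.inj v hp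
      | exact hord.inj v ((Equiv.swap _ _).injective hp)
  · have h1 : Adjn (sw y z x x' nb) v (sw y z x x' nb v p) := ⟨p, rfl⟩
    have h2 := (hA _ _).1 h1
    refine (hA _ _).2 ?_
    rw [Sym2.eq_swap]
    rcases h2 with h | h
    · exact Or.inl ⟨hord.adj_symm h.1, h.2⟩
    · exact Or.inr h

/-- the move on states: switch, and close the four vertices -/
def mv (τ : Q4 n) (s : St n d q) : St n d q :=
  (sw τ.1 τ.2.1 τ.2.2.1 τ.2.2.2 s.1,
    fun v => if v = τ.1 ∨ v = τ.2.1 ∨ v = τ.2.2.1 ∨ v = τ.2.2.2 then 0 else s.2 v)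

/-- the support of a move -/
def sup4 (τ : Q4 n) : Finset (Fin n) := {τ.1, τ.2.1, τ.2.2.1, τ.2.2.2}

lemma mem_sup4 {τ : Q4 n} {v : Fin n} : v ∈ sup4 τ ↔
    v = τ.1 ∨ v = τ.2.1 ∨ v = τ.2.2.1 ∨ v = τ.2.2.2 := by simp [sup4]

lemma mv_nb {τ : Q4 n} {s : St n d q} {v : Fin n} (h : v ∉ sup4 τ) : (mv τ s).1 v = s.1 v := by
  rw [mem_sup4] at h; push Not at h
  exact sw_off _ h.1 h.2.1 h.2.2.1 h.2.2.2

lemma mv_coin {τ : Q4 n} {s : St n d q} {v : Fin n} (h : v ∉ sup4 τ) :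
    (mv τ s).2 v = s.2 v := by
  rw [mem_sup4] at h
  simp only [mv, if_neg h]

lemma mv_coin0 {τ : Q4 n} {s : St n d q} {v : Fin n} (h : v ∈ sup4 τ) :
    (mv τ s).2 v = 0 := by
  rw [mem_sup4] at h
  simp only [mv, if_pos h]

/-- double counting -/
theorem dbl (A B : Finset (St n d q)) (Fwd Back : St n d q → Finset (Q4 n)) (φ β : ℕ)
    (h1 : ∀ s ∈ A, φ ≤ (Fwd s).card)
    (h2 : ∀ s ∈ A, ∀ τ ∈ Fwd s, Dist4 τ.1 τ.2.1 τ.2.2.1 τ.2.2.2 ∧ mv τ s ∈ B ∧ τ ∈ Back (mv τ s))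
    (h3 : ∀ s ∈ B, (Back s).card ≤ β) : A.card * φ ≤ B.card * β * (q + 1) ^ 4 := by
  classical
  let L : Finset (Σ _ : St n d q, Q4 n) := A.sigma Fwd
  let R : Finset ((Σ _ : St n d q, Q4 n) × (Fin 4 → Fin (q + 1))) := (B.sigma Back) ×ˢ Finset.univ
  let f : (Σ _ : St n d q, Q4 n) → (Σ _ : St n d q, Q4 n) × (Fin 4 → Fin (q + 1)) := fun p =>
    (⟨mv p.2 p.1, p.2⟩, ![p.1.2 p.2.1, p.1.2 p.2.2.1, p.1.2 p.2.2.2.1, p.1.2 p.2.2.2.2])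
  have hLR : L.card ≤ R.card := by
    refine Finset.card_le_card_of_injOn f ?_ ?_
    · rintro ⟨s, τ⟩ hp
      have hp := Finset.mem_sigma.1 (Finset.mem_coe.1 hp)
      have := h2 s hp.1 τ hp.2
      exact Finset.mem_coe.2 (Finset.mem_product.2
        ⟨Finset.mem_sigma.2 ⟨this.2.1, this.2.2⟩, Finset.mem_univ _⟩)
    · rintro ⟨s, τ⟩ hp ⟨s', τ'⟩ hp' he
      have hp := Finset.mem_sigma.1 (Finset.mem_coe.1 hp)
      have hd4 := (h2 s hp.1 τ hp.2).1
      simp only [f, Prod.mk.injEq, Sigma.mk.injEq, heq_eq_eq] at he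
      obtain ⟨⟨e1, e2⟩, e3⟩ := he
      subst e2
      have c0 := congrFun e3 0
      have c1 := congrFun e3 1
      have c2 := congrFun e3 2
      have c3 := congrFun e3 3
      simp at c0 c1 c2 c3
      have hs1 : s.1 = s'.1 := by
        rw [← sw_inv hd4 s.1, ← sw_inv hd4 s'.1]
        exact congrArg _ (congrArg Prod.fst e1)
      have hs2 : s.2 = s'.2 := by
        funext v
        by_cases hv : v ∈ sup4 τ
        · rcases mem_sup4.1 hv with rfl | rfl | rfl | rfl <;> assumption
        · rw [← mv_coin (s := s) hv, ← mv_coin (s := s') hv, e1]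
      have : s = s' := Prod.ext hs1 hs2
      subst this; rfl
  have hL : A.card * φ ≤ L.card := by
    rw [Finset.card_sigma, ← smul_eq_mul]
    exact Finset.card_nsmul_le_sum _ _ _ h1
  have hR : R.card ≤ B.card * β * (q + 1) ^ 4 := by
    rw [Finset.card_product, Finset.card_sigma]
    have h4 : ∑ s ∈ B, (Back s).card ≤ B.card * β := by
      rw [← smul_eq_mul]; exact Finset.sum_le_card_nsmul _ _ _ h3
    have h5 : (Finset.univ : Finset (Fin 4 → Fin (q + 1))).card = (q + 1) ^ 4 := by simp
    rw [h5]
    exact Nat.mul_le_mul_right _ h4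
  exact hL.trans (hLR.trans hR)

open Classical in
/-- the state space -/
noncomputable def Om (n d q : ℕ) : Finset (St n d q) := Finset.univ.filter (fun s => OrdG s.1)

lemma mem_Om {s : St n d q} : s ∈ Om n d q ↔ OrdG s.1 := by simp [Om]

open Classical in
lemma pairs_card {nb : Fin n → Fin d → Fin n} (hord : OrdG nb) (X X' : Finset (Fin n)) :
    n * d ≤ (Finset.univ.filter (fun p : Fin n × Fin n => Adjn nb p.1 p.2 ∧ p.1 ∉ X ∧
      p.2 ∉ X')).card + d * X.card + d * X'.card := by
  set P := Finset.univ.filter (fun p : Fin n × Fin n => Adjn nb p.1 p.2 ∧ p.1 ∉ X ∧ p.2 ∉ X')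
    with hP
  set Y := X.biUnion (fun v => (nbr nb v).image (fun w => (v, w))) with hY
  set Y' := X'.biUnion (fun v => (nbr nb v).image (fun w => (w, v))) with hY'
  have hc : n * d ≤ (P ∪ Y ∪ Y').card := by
    have : Fintype.card (Fin n × Fin d) = n * d := by simp
    rw [← this, ← Finset.card_univ]
    refine Finset.card_le_card_of_injOn (fun p => (p.1, nb p.1 p.2)) ?_ ?_
    · rintro ⟨v, p⟩ -
      simp only [Finset.coe_union, Set.mem_union, Finset.mem_coe]
      by_cases h1 : v ∈ X
      · refine Or.inl (Or.inr ?_)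
        exact Finset.mem_biUnion.2 ⟨v, h1, Finset.mem_image.2 ⟨_, mem_nbr.2 ⟨p, rfl⟩, rfl⟩⟩
      by_cases h2 : nb v p ∈ X'
      · refine Or.inr ?_
        exact Finset.mem_biUnion.2 ⟨_, h2, Finset.mem_image.2
          ⟨v, mem_nbr.2 (hord.symm v p), rfl⟩⟩
      · refine Or.inl (Or.inl ?_)
        rw [hP, Finset.mem_filter]
        exact ⟨Finset.mem_univ _, ⟨p, rfl⟩, h1, h2⟩
    · rintro ⟨v, p⟩ - ⟨v', p'⟩ - he
      simp only [Prod.mk.injEq] at he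
      obtain ⟨rfl, he⟩ := he
      rw [hord.inj v he]
  have hYc : Y.card ≤ X.card * d :=
    Finset.card_biUnion_le_card_mul _ _ _ fun v _ => Finset.card_image_le.trans (card_nbr_le nb v)
  have hYc' : Y'.card ≤ X'.card * d :=
    Finset.card_biUnion_le_card_mul _ _ _ fun v _ => Finset.card_image_le.trans (card_nbr_le nb v)
  have h1 := Finset.card_union_le (P ∪ Y) Y'
  have h2 := Finset.card_union_le P Y
  rw [mul_comm] at hYc hYc'
  omega

end Switch


/-! ### Sparsity -/

section Sparsity
variable {n d q : ℕ}

open Classical in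
/-- states containing all edges in `F` -/
noncomputable def ConE (n d q : ℕ) (F : Finset (Sym2 (Fin n))) : Finset (St n d q) :=
  (Om n d q).filter (fun s => ∀ e ∈ F, e ∈ (Gr s.1).edgeSet)

open Classical in
lemma con_step (hd : 0 < d) (W : Finset (Fin n)) (hW : 4 * (d + 1 + W.card) ≤ n)
    (F : Finset (Sym2 (Fin n))) (hF : ∀ e ∈ F, ∀ x ∈ e, x ∈ W) (y z : Fin n) (hy : y ∈ W)
    (hz : z ∈ W) (hnot : s(y, z) ∉ F) :
    (ConE n d q (insert s(y, z) F)).card * n ≤ (ConE n d q F).card * (2 * d * (q + 1) ^ 4) := by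
  let Fwd : St n d q → Finset (Q4 n) := fun s =>
    (Finset.univ.filter (fun p : Fin n × Fin n => Adjn s.1 p.1 p.2 ∧
      p.1 ∉ insert y (nbr s.1 y) ∪ W ∧ p.2 ∉ insert z (nbr s.1 z) ∪ W)).image
      (fun p => (y, z, p.1, p.2))
  let Back : St n d q → Finset (Q4 n) := fun s =>
    ((nbr s.1 y) ×ˢ (nbr s.1 z)).image (fun p => (y, z, p.1, p.2))
  have key := dbl (ConE n d q (insert s(y, z) F)) (ConE n d q F) Fwd Back (n * d / 2 + n * d % 2)
    (d * d) ?_ ?_ ?_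
  · have h1 : n * d ≤ 2 * (n * d / 2 + n * d % 2) := by omega
    have h2 : (ConE n d q (insert s(y, z) F)).card * (n * d) ≤
        2 * ((ConE n d q F).card * (d * d) * (q + 1) ^ 4) := by
      calc _ ≤ (ConE n d q (insert s(y, z) F)).card * (2 * (n * d / 2 + n * d % 2)) :=
            Nat.mul_le_mul_left _ h1
        _ = 2 * ((ConE n d q (insert s(y, z) F)).card * (n * d / 2 + n * d % 2)) := by ring
        _ ≤ _ := Nat.mul_le_mul_left _ key
    refine Nat.le_of_mul_le_mul_right (c := d) ?_ hd
    calc _ = (ConE n d q (insert s(y, z) F)).card * (n * d) := by ring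
      _ ≤ _ := h2
      _ = _ := by ring
  · intro s hs
    have hord : OrdG s.1 := mem_Om.1 (Finset.mem_filter.1 hs).1
    have hp := pairs_card hord (insert y (nbr s.1 y) ∪ W) (insert z (nbr s.1 z) ∪ W)
    have hc : ∀ v, (insert v (nbr s.1 v) ∪ W).card ≤ d + 1 + W.card := by
      intro v
      have h1 := Finset.card_union_le (insert v (nbr s.1 v)) W
      have h2 := Finset.card_insert_le v (nbr s.1 v)
      have h3 := card_nbr_le s.1 v
      omega
    have h1 := Nat.mul_le_mul_left d (hc y)
    have h2 := Nat.mul_le_mul_left d (hc z)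
    have h3 := Nat.mul_le_mul_left d hW
    have h4 : d * (4 * (d + 1 + W.card)) = 4 * (d * (d + 1 + W.card)) := by ring
    have h5 : d * n = n * d := mul_comm _ _
    show _ ≤ (Finset.image _ _).card
    rw [Finset.card_image_of_injective _ (by
      rintro ⟨a, b⟩ ⟨a', b'⟩ h
      simpa using h)]
    have : n * d % 2 < 2 := Nat.mod_lt _ (by norm_num)
    have h6 : 0 < d * (d + 1 + W.card) := by positivity
    omega
  · intro s hs τ hτ
    obtain ⟨hsO, hsF⟩ := Finset.mem_filter.1 hs
    have hord : OrdG s.1 := mem_Om.1 hsO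
    obtain ⟨⟨x, x'⟩, hp, rfl⟩ := Finset.mem_image.1 hτ
    rw [Finset.mem_filter] at hp
    obtain ⟨-, hxx, hx, hx'⟩ := hp
    simp only [Finset.mem_union, Finset.mem_insert, mem_nbr, not_or] at hx hx'
    obtain ⟨⟨a1, a2⟩, a3⟩ := hx
    obtain ⟨⟨b1, b2⟩, b3⟩ := hx'
    have hyz : Adjn s.1 y z := by
      have := hsF s(y, z) (Finset.mem_insert_self _ _)
      rwa [SimpleGraph.mem_edgeSet, hord.gr_adj] at this
    have hval : Valid s.1 y z x x' := by
      refine ⟨⟨hord.adj_ne hyz, Ne.symm a1, ?_, ?_, Ne.symm b1, hord.adj_ne hxx⟩, hyz, hxx, a2, b2⟩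
      · rintro rfl; exact b3 hy
      · rintro rfl; exact a3 hz
    have hord' := sw_ord hord hval
    refine ⟨hval.1, ?_, ?_⟩
    · rw [ConE, Finset.mem_filter]
      refine ⟨mem_Om.2 hord', fun e he => ?_⟩
      have h1 := hsF e (Finset.mem_insert_of_mem he)
      have h2 := hF e he
      induction e using Sym2.ind with
      | _ a b =>
        rw [SimpleGraph.mem_edgeSet, hord.gr_adj] at h1
        rw [SimpleGraph.mem_edgeSet]
        show (Gr (sw y z x x' s.1)).Adj a b
        rw [hord'.gr_adj, sw_adj hord hval]
        refine Or.inl ⟨h1, fun h => hnot (h ▸ he), fun h => ?_⟩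
        exact a3 (h2 x (by rw [h]; simp))
    · refine Finset.mem_image.2 ⟨(x, x'), Finset.mem_product.2 ⟨?_, ?_⟩, rfl⟩
      · exact mem_nbr.2 ((sw_adj hord hval y x).2 (Or.inr (Or.inl rfl)))
      · exact mem_nbr.2 ((sw_adj hord hval z x').2 (Or.inr (Or.inr rfl)))
  · intro s _
    refine Finset.card_image_le.trans ?_
    rw [Finset.card_product]
    exact Nat.mul_le_mul (card_nbr_le _ _) (card_nbr_le _ _)

lemma con_card (hd : 0 < d) (W : Finset (Fin n)) (hW : 4 * (d + 1 + W.card) ≤ n)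
    (F : Finset (Sym2 (Fin n))) (hF : ∀ e ∈ F, ∀ x ∈ e, x ∈ W) :
    (ConE n d q F).card * n ^ F.card ≤ (Om n d q).card * (2 * d * (q + 1) ^ 4) ^ F.card := by
  classical
  induction F using Finset.induction with
  | empty =>
    simp only [Finset.card_empty, pow_zero, mul_one]
    exact Finset.card_filter_le _ _
  | insert e F he ih =>
    have ih := ih (fun e' he' => hF e' (Finset.mem_insert_of_mem he'))
    rw [Finset.card_insert_of_notMem he]
    have h2 := hF e (Finset.mem_insert_self _ _)
    induction e using Sym2.ind with
    | _ y z =>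
      have h1 := con_step (q := q) hd W hW F (fun e' he' => hF e' (Finset.mem_insert_of_mem he'))
        y z (h2 y (by simp)) (h2 z (by simp)) he
      calc _ = ((ConE n d q (insert s(y, z) F)).card * n) * n ^ F.card := by ring
        _ ≤ ((ConE n d q F).card * (2 * d * (q + 1) ^ 4)) * n ^ F.card :=
          Nat.mul_le_mul_right _ h1
        _ = ((ConE n d q F).card * n ^ F.card) * (2 * d * (q + 1) ^ 4) := by ring
        _ ≤ ((Om n d q).card * (2 * d * (q + 1) ^ 4) ^ F.card) * (2 * d * (q + 1) ^ 4) :=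
          Nat.mul_le_mul_right _ ih
        _ = _ := by ring

open Classical in
/-- most states are sparse -/
theorem sparse_card (hd : 0 < d) (s0 : ℕ) (hs : 4 * (d + 1 + s0) ≤ n) :
    ((Om n d q).filter (fun s => ¬ Sparse (Gr s.1) s0)).card * n ≤
      (Om n d q).card * ((s0 + 1) * ((s0 + 1) ^ 2 * (2 * d * (q + 1) ^ 4)) ^ (s0 + 1)) := by
  have hn : 0 < n := by omega
  set D := 2 * d * (q + 1) ^ 4 with hD
  have hD1 : 1 ≤ D := by rw [hD]; exact Nat.succ_le_of_lt (by positivity)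
  have hsub : (Om n d q).filter (fun s => ¬ Sparse (Gr s.1) s0) ⊆
      (Finset.range (s0 + 1)).biUnion (fun k =>
        (Finset.powersetCard k (Finset.univ : Finset (Fin n))).biUnion (fun S =>
          (Finset.powersetCard (k + 1) S.sym2).biUnion (fun E => ConE n d q E))) := by
    intro s hs'
    obtain ⟨h1, h2⟩ := Finset.mem_filter.1 hs'
    unfold Sparse at h2
    push Not at h2
    obtain ⟨S, E, hS, hE, hlt⟩ := h2
    obtain ⟨E', hE', hE'c⟩ := Finset.exists_subset_card_eq (show S.card + 1 ≤ E.card by omega)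
    refine Finset.mem_biUnion.2 ⟨S.card, Finset.mem_range.2 (by omega), ?_⟩
    refine Finset.mem_biUnion.2 ⟨S, Finset.mem_powersetCard.2 ⟨Finset.subset_univ _, rfl⟩, ?_⟩
    refine Finset.mem_biUnion.2 ⟨E', Finset.mem_powersetCard.2 ⟨fun e he => ?_, hE'c⟩, ?_⟩
    · rw [Finset.mem_sym2_iff]; exact (hE e (hE' he)).2
    · rw [ConE, Finset.mem_filter]
      exact ⟨h1, fun e he => (hE e (hE' he)).1⟩
  have hk : ∀ k ∈ Finset.range (s0 + 1),
      ((Finset.powersetCard k (Finset.univ : Finset (Fin n))).biUnion (fun S =>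
          (Finset.powersetCard (k + 1) S.sym2).biUnion (fun E => ConE n d q E))).card * n ≤
        (Om n d q).card * ((s0 + 1) ^ 2 * D) ^ (s0 + 1) := by
    intro k hk
    rw [Finset.mem_range] at hk
    have hE : ∀ S ∈ Finset.powersetCard k (Finset.univ : Finset (Fin n)),
        ((Finset.powersetCard (k + 1) S.sym2).biUnion (fun E => ConE n d q E)).card * n ^ (k + 1) ≤
          ((s0 + 1) ^ 2) ^ (k + 1) * ((Om n d q).card * D ^ (k + 1)) := by
      intro S hS
      have hSc := (Finset.mem_powersetCard.1 hS).2
      have h1 : ((Finset.powersetCard (k + 1) S.sym2).biUnion (fun E => ConE n d q E)).card *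
          n ^ (k + 1) ≤ ∑ E ∈ Finset.powersetCard (k + 1) S.sym2,
            (ConE n d q E).card * n ^ (k + 1) := by
        rw [← Finset.sum_mul]
        exact Nat.mul_le_mul_right _ Finset.card_biUnion_le
      refine h1.trans ?_
      have h2 : ∀ E ∈ Finset.powersetCard (k + 1) S.sym2,
          (ConE n d q E).card * n ^ (k + 1) ≤ (Om n d q).card * D ^ (k + 1) := by
        intro E hE
        obtain ⟨g1, g2⟩ := Finset.mem_powersetCard.1 hE
        have := con_card (q := q) hd S (by rw [hSc]; omega) E (fun e he =>
          Finset.mem_sym2_iff.1 (g1 he))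
        rwa [g2] at this
      refine (Finset.sum_le_card_nsmul _ _ _ h2).trans ?_
      rw [smul_eq_mul]
      refine Nat.mul_le_mul_right _ ?_
      rw [Finset.card_powersetCard]
      refine (Nat.choose_le_pow _ _).trans ?_
      refine Nat.pow_le_pow_left ?_ _
      rw [Finset.card_sym2, hSc]
      refine (Nat.choose_le_pow _ _).trans ?_
      exact Nat.pow_le_pow_left (by omega) _
    have h3 : ((Finset.powersetCard k (Finset.univ : Finset (Fin n))).biUnion (fun S =>
          (Finset.powersetCard (k + 1) S.sym2).biUnion (fun E => ConE n d q E))).card *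
          n ^ (k + 1) ≤ n ^ k * (((s0 + 1) ^ 2) ^ (k + 1) * ((Om n d q).card * D ^ (k + 1))) := by
      calc _ ≤ (∑ S ∈ Finset.powersetCard k (Finset.univ : Finset (Fin n)),
            ((Finset.powersetCard (k + 1) S.sym2).biUnion (fun E => ConE n d q E)).card) *
              n ^ (k + 1) := Nat.mul_le_mul_right _ Finset.card_biUnion_le
        _ = ∑ S ∈ Finset.powersetCard k (Finset.univ : Finset (Fin n)),
            ((Finset.powersetCard (k + 1) S.sym2).biUnion (fun E => ConE n d q E)).card *
              n ^ (k + 1) := Finset.sum_mul _ _ _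
        _ ≤ _ := Finset.sum_le_card_nsmul _ _ _ hE
        _ ≤ _ := by
          rw [smul_eq_mul]
          refine Nat.mul_le_mul_right _ ?_
          rw [Finset.card_powersetCard]
          refine (Nat.choose_le_pow _ _).trans ?_
          simp
    have h4 : ((Finset.powersetCard k (Finset.univ : Finset (Fin n))).biUnion (fun S =>
          (Finset.powersetCard (k + 1) S.sym2).biUnion (fun E => ConE n d q E))).card * n ≤
          ((s0 + 1) ^ 2) ^ (k + 1) * ((Om n d q).card * D ^ (k + 1)) := by
      refine Nat.le_of_mul_le_mul_left (c := n ^ k) ?_ (by positivity)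
      refine le_trans (le_of_eq ?_) h3
      ring
    refine h4.trans ?_
    calc _ = (Om n d q).card * ((s0 + 1) ^ 2 * D) ^ (k + 1) := by
          rw [mul_pow ((s0 + 1) ^ 2) D (k + 1)]; exact Nat.mul_left_comm _ _ _
      _ ≤ _ := by
        refine Nat.mul_le_mul_left _ (Nat.pow_le_pow_right ?_ (by omega))
        positivity
  calc _ ≤ (∑ k ∈ Finset.range (s0 + 1),
      ((Finset.powersetCard k (Finset.univ : Finset (Fin n))).biUnion (fun S =>
          (Finset.powersetCard (k + 1) S.sym2).biUnion (fun E => ConE n d q E))).card) * n :=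
        Nat.mul_le_mul_right _ ((Finset.card_le_card hsub).trans Finset.card_biUnion_le)
    _ = ∑ k ∈ Finset.range (s0 + 1),
      ((Finset.powersetCard k (Finset.univ : Finset (Fin n))).biUnion (fun S =>
          (Finset.powersetCard (k + 1) S.sym2).biUnion (fun E => ConE n d q E))).card * n :=
        Finset.sum_mul _ _ _
    _ ≤ _ := Finset.sum_le_card_nsmul _ _ _ hk
    _ = _ := by rw [Finset.card_range, smul_eq_mul]; ring

end Sparsity


/-! ### Death probabilities -/

section Death
variable {n d q : ℕ}

/-- targets of conflicts -/
noncomputable def Tgt (r : Fin n) (t M : ℕ) (s : St n d q) : Finset (Fin n) :=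
  nbr s.1 r ∪ (al s.1 s.2 r t M).biUnion (Oo s.1 r t)

lemma card_Tgt_le (r : Fin n) (t M : ℕ) (s : St n d q) : (Tgt r t M s).card ≤ d * (M + 1) := by
  refine (Finset.card_union_le _ _).trans ?_
  have h1 := card_nbr_le s.1 r
  have h2 : ((al s.1 s.2 r t M).biUnion (Oo s.1 r t)).card ≤ (al s.1 s.2 r t M).card * d :=
    Finset.card_biUnion_le_card_mul _ _ _ fun m _ =>
      (Finset.card_le_card (Finset.erase_subset _ _)).trans (card_nbr_le _ _)
  have h3 : (al s.1 s.2 r t M) ⊆ Finset.range M := fun m hm =>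
    Finset.mem_range.2 (al_lt _ _ r t hm)
  have h4 := Finset.card_le_card h3
  rw [Finset.card_range] at h4
  have h5 := Nat.mul_le_mul_right d h4
  calc _ ≤ d + M * d := by omega
    _ = _ := by ring

lemma mv_run {r : Fin n} {t : ℕ} (ht : 0 < t) (M : ℕ) (τ : Q4 n) (s : St n d q)
    (hT : ∀ x ∈ sup4 τ, x ∉ Core s.1 s.2 r t M) :
    al (mv τ s).1 (mv τ s).2 r t M = al s.1 s.2 r t M ∧
    Core (mv τ s).1 (mv τ s).2 r t M = Core s.1 s.2 r t M ∧
    (∀ x ∈ Core s.1 s.2 r t M, (mv τ s).1 x = s.1 x) ∧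
    (∀ β ∈ al s.1 s.2 r t M, vx (mv τ s).1 r t β = vx s.1 r t β ∧
      Oo (mv τ s).1 r t β = Oo s.1 r t β) ∧
    (∀ m, (m / t ≤ 1 ∨ pad t m ∈ al s.1 s.2 r t M) → vx (mv τ s).1 r t m = vx s.1 r t m) := by
  have a1 : ∀ v, v ∉ sup4 τ → (mv τ s).1 v = s.1 v := fun v => mv_nb
  have a2 : ∀ v, v ∉ sup4 τ → (mv τ s).2 v = s.2 v := fun v => mv_coin
  have a3 : ∀ v ∈ sup4 τ, (mv τ s).2 v = 0 := fun v => mv_coin0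
  have hC : ∀ x ∈ Core s.1 s.2 r t M, (mv τ s).1 x = s.1 x := fun x hx =>
    a1 x (fun h => hT x h hx)
  obtain ⟨h1, h2⟩ := run_inv (r := r) (t := t) (sup4 τ) ht M hT a1 a2 a3 M le_rfl
  refine ⟨h1, core_inv (sup4 τ) ht M hT a1 a2 a3, hC, fun β hβ => ⟨(h2 β hβ).1, ?_⟩,
    fun m hm => cand_inv (sup4 τ) ht M hT a1 a2 a3 m hm⟩
  rw [Oo, Oo, (h2 β hβ).1, (h2 β hβ).2, nbr, nbr, hC _ (vx_mem_Core hβ)]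

lemma mv_Tgt {r : Fin n} {t : ℕ} (ht : 0 < t) (M : ℕ) (τ : Q4 n) (s : St n d q)
    (hT : ∀ x ∈ sup4 τ, x ∉ Core s.1 s.2 r t M) : Tgt r t M (mv τ s) = Tgt r t M s := by
  obtain ⟨h1, h2, h3, h4, h5⟩ := mv_run ht M τ s hT
  rw [Tgt, Tgt, h1, nbr, nbr, h3 r r_mem_Core]
  congr 1
  exact Finset.biUnion_congr rfl (fun β hβ => (h4 β hβ).2)

/-- `m` is a candidate that is not alive -/
def Dead (r : Fin n) (t M m : ℕ) (s : St n d q) : Prop :=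
  m ∉ al s.1 s.2 r t M ∧ t ≤ m ∧ (m / t = 1 ∨ pad t m ∈ al s.1 s.2 r t M)

/-- conflict -/
def Conf (r : Fin n) (t M m : ℕ) (s : St n d q) : Prop :=
  Dead r t M m s ∧ ∃ z ∈ Oo s.1 r t m, z ∈ Tgt r t M s

lemma dead_cases {r : Fin n} {t M m : ℕ} {s : St n d q} (ht : 0 < t) (hm : m < M)
    (h : Dead r t M m s) : s.2 (vx s.1 r t m) = 0 ∨ Conf r t M m s := by
  by_contra hcon
  push Not at hcon
  obtain ⟨h1, h2⟩ := hcon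
  have h3 : ∀ z ∈ Oo s.1 r t m, z ∉ Tgt r t M s := fun z hz hz' => h2 ⟨h, z, hz, hz'⟩
  refine h.1 ((al_mem _ _ _ _ hm).2 ⟨h.2.1, ?_, h1, ?_, ?_⟩)
  · refine h.2.2.imp_right fun hp => ?_
    rw [al_mem _ _ _ _ (pad_lt ht h.2.1)]
    exact al_ok _ _ _ _ hp
  · rw [Finset.disjoint_left]
    exact fun z hz hz' => h3 z hz (Finset.mem_union_left _ hz')
  · intro β hβ
    rw [Finset.disjoint_left]
    exact fun z hz hz' => h3 z hz (Finset.mem_union_right _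
      (Finset.mem_biUnion.2 ⟨β, al_mono _ _ _ _ hm.le hβ, hz'⟩))

lemma dead_notCore {r : Fin n} {t M m : ℕ} {s : St n d q} (hord : OrdG s.1) (hd : 3 ≤ d)
    (ht : 0 < t) (htd : t ≤ d) (h : Dead r t M m s) : vx s.1 r t m ∉ Core s.1 s.2 r t M := by
  intro hC
  have hm1 : 1 ≤ m / t := (Nat.le_div_iff_mul_le ht).2 (by have := h.2.1; omega)
  rcases mem_Core.1 hC with h1 | ⟨m', hm', he⟩
  · exact cand_ne_r (κ := s.2) (M := M) hord hd ht htd (h.2.2.imp_left (fun h => h.le)) h1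
  · have h2 := al_one_le ht hm'
    have := cand_inj (κ := s.2) (M := M) hord hd ht htd h2 hm1 ?_ h.2.2 he
    · exact h.1 (this ▸ hm')
    · by_cases c : m' / t ≤ 1
      · left; omega
      · exact Or.inr (al_par hm' c)

open Classical in
lemma conf_card (hd : 3 ≤ d) {t : ℕ} (ht : 0 < t) (htd : t ≤ d) (r : Fin n) (M m : ℕ)
    (hn : 4 * (d + 1 + (M + 1)) ≤ n) :
    ((Om n d q).filter (Conf r t M m)).card * n ≤
      (Om n d q).card * (2 * d ^ 2 * (M + 1) * (q + 1) ^ 4) := by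
  let Z : St n d q → Fin n := fun s =>
    if h : ∃ z ∈ Oo s.1 r t m, z ∈ Tgt r t M s then h.choose else r
  have hZ : ∀ s, Conf r t M m s → Z s ∈ Oo s.1 r t m ∧ Z s ∈ Tgt r t M s := by
    intro s hs
    simp only [Z, dif_pos hs.2]
    exact hs.2.choose_spec
  let Fwd : St n d q → Finset (Q4 n) := fun s =>
    (Finset.univ.filter (fun p : Fin n × Fin n => Adjn s.1 p.1 p.2 ∧
      p.1 ∉ insert (vx s.1 r t m) (nbr s.1 (vx s.1 r t m)) ∪ Core s.1 s.2 r t M ∧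
      p.2 ∉ insert (Z s) (nbr s.1 (Z s)) ∪ Core s.1 s.2 r t M)).image
      (fun p => (vx s.1 r t m, Z s, p.1, p.2))
  let Back : St n d q → Finset (Q4 n) := fun s =>
    (Tgt r t M s).biUnion (fun z =>
      ((nbr s.1 (vx s.1 r t m)) ×ˢ (nbr s.1 z)).image (fun p => (vx s.1 r t m, z, p.1, p.2)))
  have key := dbl ((Om n d q).filter (Conf r t M m)) (Om n d q) Fwd Back
    (n * d / 2 + n * d % 2) (d * (M + 1) * (d * d)) ?_ ?_ ?_
  · have h1 : n * d ≤ 2 * (n * d / 2 + n * d % 2) := by omega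
    have h2 : ((Om n d q).filter (Conf r t M m)).card * (n * d) ≤
        2 * ((Om n d q).card * (d * (M + 1) * (d * d)) * (q + 1) ^ 4) := by
      calc _ ≤ ((Om n d q).filter (Conf r t M m)).card * (2 * (n * d / 2 + n * d % 2)) :=
            Nat.mul_le_mul_left _ h1
        _ = 2 * (((Om n d q).filter (Conf r t M m)).card * (n * d / 2 + n * d % 2)) := by ring
        _ ≤ _ := Nat.mul_le_mul_left _ key
    refine Nat.le_of_mul_le_mul_right (c := d) ?_ (by omega)
    calc _ = ((Om n d q).filter (Conf r t M m)).card * (n * d) := by ring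
      _ ≤ _ := h2
      _ = _ := by ring
  · intro s hs
    have hord : OrdG s.1 := mem_Om.1 (Finset.mem_filter.1 hs).1
    have hp := pairs_card hord (insert (vx s.1 r t m) (nbr s.1 (vx s.1 r t m)) ∪
      Core s.1 s.2 r t M) (insert (Z s) (nbr s.1 (Z s)) ∪ Core s.1 s.2 r t M)
    have hc : ∀ v, (insert v (nbr s.1 v) ∪ Core s.1 s.2 r t M).card ≤ d + 1 + (M + 1) := by
      intro v
      have h1 := Finset.card_union_le (insert v (nbr s.1 v)) (Core s.1 s.2 r t M)
      have h2 := Finset.card_insert_le v (nbr s.1 v)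
      have h3 := card_nbr_le s.1 v
      have h4 := card_Core_le (nb := s.1) (κ := s.2) (r := r) (t := t) M
      omega
    have h1 := Nat.mul_le_mul_left d (hc (vx s.1 r t m))
    have h2 := Nat.mul_le_mul_left d (hc (Z s))
    have h3 := Nat.mul_le_mul_left d hn
    have h4 : d * (4 * (d + 1 + (M + 1))) = 4 * (d * (d + 1 + (M + 1))) := by ring
    have h5 : d * n = n * d := mul_comm _ _
    show _ ≤ (Finset.image _ _).card
    rw [Finset.card_image_of_injective _ (by
      rintro ⟨a, b⟩ ⟨a', b'⟩ h
      simpa using h)]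
    have : n * d % 2 < 2 := Nat.mod_lt _ (by norm_num)
    have h6 : 0 < d * (d + 1 + (M + 1)) := by positivity
    omega
  · intro s hs τ hτ
    obtain ⟨hsO, hsC⟩ := Finset.mem_filter.1 hs
    have hord : OrdG s.1 := mem_Om.1 hsO
    obtain ⟨⟨x, x'⟩, hp, rfl⟩ := Finset.mem_image.1 hτ
    rw [Finset.mem_filter] at hp
    obtain ⟨-, hxx, hx, hx'⟩ := hp
    simp only [Finset.mem_union, Finset.mem_insert, mem_nbr, not_or] at hxx hx hx'
    obtain ⟨⟨a1, a2⟩, a3⟩ := hx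
    obtain ⟨⟨b1, b2⟩, b3⟩ := hx'
    obtain ⟨hZ1, hZ2⟩ := hZ s hsC
    have hyC := dead_notCore hord hd ht htd hsC.1
    have hzz := Finset.mem_erase.1 (show Z s ∈ (nbr s.1 (vx s.1 r t m)).erase _ from hZ1)
    have hyz : Adjn s.1 (vx s.1 r t m) (Z s) := mem_nbr.1 hzz.2
    have hzC : Z s ∉ Core s.1 s.2 r t M := by
      intro hzC
      refine hzz.1 (core_nbr_unique (κ := s.2) hord ht _ hyC _ _ hyz
        (hord.adj_symm (pr_adj hd ht htd m)) hzC ?_)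
      exact pr_mem_Core ht (hsC.1.2.2.imp_left (fun h => h.le))
    have hval : Valid s.1 (vx s.1 r t m) (Z s) x x' := by
      refine ⟨⟨hord.adj_ne hyz, Ne.symm a1, ?_, ?_, Ne.symm b1, hord.adj_ne hxx⟩,
        hyz, hxx, a2, b2⟩
      · rintro h; rw [h] at a2; exact a2 (hord.adj_symm hxx)
      · rintro h; rw [h] at b2; exact b2 hxx
    have hord' := sw_ord hord hval
    have hT : ∀ w ∈ sup4 ((vx s.1 r t m, Z s, x, x') : Q4 n), w ∉ Core s.1 s.2 r t M := by
      intro w hw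
      rcases mem_sup4.1 hw with h | h | h | h <;> rw [h] <;> assumption
    obtain ⟨i1, i2, i3, i4, i5⟩ := mv_run ht M _ s hT
    have hvm := i5 m (hsC.1.2.2.imp_left (fun h => h.le))
    refine ⟨hval.1, mem_Om.2 hord', ?_⟩
    refine Finset.mem_biUnion.2 ⟨Z s, ?_, ?_⟩
    · rw [mv_Tgt ht M _ s hT]; exact hZ2
    · refine Finset.mem_image.2 ⟨(x, x'), Finset.mem_product.2 ⟨?_, ?_⟩, ?_⟩
      · rw [hvm]
        exact mem_nbr.2 ((sw_adj hord hval _ x).2 (Or.inr (Or.inl rfl)))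
      · exact mem_nbr.2 ((sw_adj hord hval _ x').2 (Or.inr (Or.inr rfl)))
      · rw [hvm]
  · intro s _
    refine (Finset.card_biUnion_le_card_mul _ _ (d * d) fun z _ => ?_).trans
      (Nat.mul_le_mul_right _ (card_Tgt_le r t M s))
    refine Finset.card_image_le.trans ?_
    rw [Finset.card_product]
    exact Nat.mul_le_mul (card_nbr_le _ _) (card_nbr_le _ _)

open Classical in
/-- the coin is closed with probability `1/(q+1)` -/
lemma coin_card (v : (Fin n → Fin d → Fin n) → Fin n) :
    ((Om n d q).filter (fun s => s.2 (v s.1) = 0)).card * (q + 1) ≤ (Om n d q).card := by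
  have : ((Om n d q).filter (fun s => s.2 (v s.1) = 0)).card * (q + 1) =
      (((Om n d q).filter (fun s => s.2 (v s.1) = 0)) ×ˢ
        (Finset.univ : Finset (Fin (q + 1)))).card := by
    rw [Finset.card_product]; simp
  rw [this]
  refine Finset.card_le_card_of_injOn
    (fun p => (p.1.1, Function.update p.1.2 (v p.1.1) p.2)) ?_ ?_
  · rintro ⟨s, c⟩ hp
    have hp := (Finset.mem_filter.1 (Finset.mem_product.1 (Finset.mem_coe.1 hp)).1).1
    have hp1 := mem_Om.1 hp
    exact Finset.mem_coe.2 (mem_Om.2 hp1)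
  · rintro ⟨⟨nb, κ⟩, c⟩ hp ⟨⟨nb', κ'⟩, c'⟩ hp' he
    have hp := (Finset.mem_filter.1 (Finset.mem_product.1 (Finset.mem_coe.1 hp)).1).2
    have hp' := (Finset.mem_filter.1 (Finset.mem_product.1 (Finset.mem_coe.1 hp')).1).2
    simp only [Prod.mk.injEq] at he hp hp' ⊢
    obtain ⟨rfl, he⟩ := he
    have h1 := congrFun he (v nb)
    simp only [Function.update_self] at h1
    refine ⟨⟨rfl, ?_⟩, h1⟩
    funext w
    by_cases hw : w = v nb
    · rw [hw, hp, hp']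
    · have := congrFun he w
      rwa [Function.update_of_ne hw, Function.update_of_ne hw] at this

/-- alive leaves of a label -/
noncomputable def LF (r : Fin n) (t S i : ℕ) (s : St n d q) : Finset ℕ :=
  (Finset.Ico (2 ^ S) (2 ^ (S + 1))).filter
    (fun k => t * k + i ∈ al s.1 s.2 r t (t * 2 ^ (S + 1)))

lemma dead_anc {r : Fin n} {t M i : ℕ} {s : St n d q} (ht : 0 < t) (hi : i < t) (k : ℕ)
    (hk : 1 ≤ k) (h : t * k + i ∉ al s.1 s.2 r t M) :
    ∃ j, 1 ≤ k / 2 ^ j ∧ Dead r t M (t * (k / 2 ^ j) + i) s := by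
  induction k using Nat.strong_induction_on with
  | _ k ih =>
    have hdiv : (t * k + i) / t = k := by
      rw [Nat.mul_add_div ht, Nat.div_eq_of_lt hi, add_zero]
    have hmod : (t * k + i) % t = i := by
      rw [Nat.mul_add_mod, Nat.mod_eq_of_lt hi]
    have hge : t ≤ t * k + i := by nlinarith
    by_cases h1 : k = 1
    · refine ⟨0, by simpa using hk, ?_⟩
      rw [pow_zero, Nat.div_one]
      exact ⟨h, hge, Or.inl (by rw [hdiv, h1])⟩
    · have hp : pad t (t * k + i) = t * (k / 2) + i := by rw [pad, hdiv, hmod]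
      by_cases h2 : t * (k / 2) + i ∈ al s.1 s.2 r t M
      · refine ⟨0, by simpa using hk, ?_⟩
        rw [pow_zero, Nat.div_one]
        exact ⟨h, hge, Or.inr (by rw [hp]; exact h2)⟩
      · obtain ⟨j, hj, hD⟩ := ih (k / 2) (by omega) (by omega) h2
        have e : k / 2 / 2 ^ j = k / 2 ^ (j + 1) := by
          rw [Nat.div_div_eq_div_mul, pow_succ, mul_comm]
        rw [e] at hj hD
        exact ⟨j + 1, hj, hD⟩

open Classical in
lemma dead_card (hd : 3 ≤ d) {t : ℕ} (ht : 0 < t) (htd : t ≤ d) (r : Fin n) (M m : ℕ)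
    (hm : m < M) (hn : 4 * (d + 1 + (M + 1)) ≤ n) :
    (((Om n d q).filter (Dead r t M m)).card : ℝ) ≤
      (Om n d q).card * (1 / (q + 1) + 2 * d ^ 2 * (M + 1) * (q + 1) ^ 4 / n) := by
  have hn0 : (0 : ℝ) < n := by
    have : 0 < n := by omega
    exact_mod_cast this
  have h1 : (Om n d q).filter (Dead r t M m) ⊆
      (Om n d q).filter (fun s => s.2 (vx s.1 r t m) = 0) ∪ (Om n d q).filter (Conf r t M m) := by
    intro s hs
    obtain ⟨a, b⟩ := Finset.mem_filter.1 hs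
    rw [Finset.mem_union, Finset.mem_filter, Finset.mem_filter]
    rcases dead_cases ht hm b with h | h
    · exact Or.inl ⟨a, h⟩
    · exact Or.inr ⟨a, h⟩
  have h2 := (Finset.card_le_card h1).trans (Finset.card_union_le _ _)
  have h3 := coin_card (n := n) (d := d) (q := q) (fun nb => vx nb r t m)
  have h4 := conf_card (n := n) (q := q) hd ht htd r M m hn
  have h2' : (((Om n d q).filter (Dead r t M m)).card : ℝ) ≤
    ((Om n d q).filter (fun s => s.2 (vx s.1 r t m) = 0)).card +
      ((Om n d q).filter (Conf r t M m)).card := by exact_mod_cast h2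
  have h3' : (((Om n d q).filter (fun s => s.2 (vx s.1 r t m) = 0)).card : ℝ) ≤
      (Om n d q).card * (1 / (q + 1)) := by
    rw [mul_one_div, le_div_iff₀ (by positivity)]
    exact_mod_cast h3
  have h4' : (((Om n d q).filter (Conf r t M m)).card : ℝ) ≤
      (Om n d q).card * (2 * d ^ 2 * (M + 1) * (q + 1) ^ 4 / n) := by
    rw [← mul_div_assoc, le_div_iff₀ hn0]
    exact_mod_cast h4
  rw [mul_add]
  linarith

open Classical in
theorem leaf_card (hd : 3 ≤ d) {t : ℕ} (ht : 0 < t) (htd : t ≤ d) (r : Fin n) (S i : ℕ)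
    (hi : i < t) (hn : 4 * (d + 1 + (t * 2 ^ (S + 1) + 1)) ≤ n) :
    (((Om n d q).filter (fun s => 2 * (LF r t S i s).card < 2 ^ S)).card : ℝ) ≤
      (Om n d q).card * (2 * (S + 1) *
        (1 / (q + 1) + 2 * d ^ 2 * (t * 2 ^ (S + 1) + 1) * (q + 1) ^ 4 / n)) := by
  set M := t * 2 ^ (S + 1) with hM
  set δ : ℝ := 1 / (q + 1) + 2 * d ^ 2 * (t * 2 ^ (S + 1) + 1) * (q + 1) ^ 4 / n with hδ
  set B := (Om n d q).filter (fun s => 2 * (LF r t S i s).card < 2 ^ S) with hB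
  have hdc : ∀ m < M, (((Om n d q).filter (Dead r t M m)).card : ℝ) ≤ (Om n d q).card * δ := by
    intro m hm
    have := dead_card (n := n) (q := q) hd ht htd r M m hm hn
    rw [hM] at this ⊢
    push_cast at this
    exact this
  -- pairs
  let P : Finset (St n d q × ℕ) := ((Om n d q) ×ˢ (Finset.Ico (2 ^ S) (2 ^ (S + 1)))).filter
    (fun p => t * p.2 + i ∉ al p.1.1 p.1.2 r t M)
  have hlow : B.card * 2 ^ S ≤ 2 * P.card := by
    have h1 : ∀ s ∈ B, 2 ^ S ≤ 2 * ((Finset.Ico (2 ^ S) (2 ^ (S + 1))).filter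
        (fun k => t * k + i ∉ al s.1 s.2 r t M)).card := by
      intro s hs
      have h2 := (Finset.mem_filter.1 hs).2
      have h3 := Finset.card_filter_add_card_filter_not (s := Finset.Ico (2 ^ S) (2 ^ (S + 1)))
        (fun k => t * k + i ∈ al s.1 s.2 r t M)
      rw [Nat.card_Ico, pow_succ] at h3
      have h4 : (LF r t S i s).card = ((Finset.Ico (2 ^ S) (2 ^ S * 2)).filter
        (fun k => t * k + i ∈ al s.1 s.2 r t M)).card := by rw [LF, ← hM, pow_succ]
      rw [pow_succ]
      omega
    have h5 : (B.sigma (fun s => (Finset.Ico (2 ^ S) (2 ^ (S + 1))).filter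
        (fun k => t * k + i ∉ al s.1 s.2 r t M))).card ≤ P.card := by
      refine Finset.card_le_card_of_injOn (fun p => (p.1, p.2)) ?_ ?_
      · rintro ⟨s, k⟩ hp
        obtain ⟨g1, g2⟩ := Finset.mem_sigma.1 (Finset.mem_coe.1 hp)
        obtain ⟨g3, g4⟩ := Finset.mem_filter.1 g2
        exact Finset.mem_coe.2 (Finset.mem_filter.2
          ⟨Finset.mem_product.2 ⟨(Finset.mem_filter.1 g1).1, g3⟩, g4⟩)
      · rintro ⟨s, k⟩ _ ⟨s', k'⟩ _ he
        simp only [Prod.mk.injEq] at he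
        obtain ⟨rfl, rfl⟩ := he
        rfl
    rw [Finset.card_sigma] at h5
    have h6 := Finset.card_nsmul_le_sum B _ (2 ^ S) h1
    rw [smul_eq_mul, ← Finset.mul_sum] at h6
    omega
  have hup : P.card ≤ ∑ k ∈ Finset.Ico (2 ^ S) (2 ^ (S + 1)), ∑ j ∈ Finset.range (S + 1),
      ((Om n d q).filter (Dead r t M (t * (k / 2 ^ j) + i))).card := by
    have h1 : P ⊆ (Finset.Ico (2 ^ S) (2 ^ (S + 1))).biUnion (fun k =>
        (Finset.range (S + 1)).biUnion (fun j =>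
          ((Om n d q).filter (Dead r t M (t * (k / 2 ^ j) + i))).image (fun s => (s, k)))) := by
      rintro ⟨s, k⟩ hp
      obtain ⟨g1, g2⟩ := Finset.mem_filter.1 hp
      obtain ⟨g3, g4⟩ := Finset.mem_product.1 g1
      have g5 := Finset.mem_Ico.1 g4
      have h2S : 1 ≤ 2 ^ S := Nat.one_le_two_pow
      obtain ⟨j, hj, hD⟩ := dead_anc ht hi k (by omega) g2
      refine Finset.mem_biUnion.2 ⟨k, g4, Finset.mem_biUnion.2 ⟨j, Finset.mem_range.2 ?_,
        Finset.mem_image.2 ⟨s, Finset.mem_filter.2 ⟨g3, hD⟩, rfl⟩⟩⟩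
      by_contra hjS
      have h2 : 2 ^ (S + 1) ≤ 2 ^ j := Nat.pow_le_pow_right (by norm_num) (by omega)
      rw [Nat.div_eq_of_lt (by omega)] at hj
      omega
    refine (Finset.card_le_card h1).trans (Finset.card_biUnion_le.trans ?_)
    refine Finset.sum_le_sum fun k _ => Finset.card_biUnion_le.trans ?_
    exact Finset.sum_le_sum fun j _ => Finset.card_image_le
  have hup' : (P.card : ℝ) ≤ 2 ^ S * ((S + 1) * ((Om n d q).card * δ)) := by
    have h1 : (P.card : ℝ) ≤ ∑ k ∈ Finset.Ico (2 ^ S) (2 ^ (S + 1)),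
        ∑ j ∈ Finset.range (S + 1),
          (((Om n d q).filter (Dead r t M (t * (k / 2 ^ j) + i))).card : ℝ) := by
      exact_mod_cast hup
    refine h1.trans ?_
    have h2 : ∀ k ∈ Finset.Ico (2 ^ S) (2 ^ (S + 1)), ∑ j ∈ Finset.range (S + 1),
          (((Om n d q).filter (Dead r t M (t * (k / 2 ^ j) + i))).card : ℝ) ≤
          (S + 1) * ((Om n d q).card * δ) := by
      intro k hk
      have g5 := Finset.mem_Ico.1 hk
      have := Finset.sum_le_card_nsmul (Finset.range (S + 1)) (fun j =>
        (((Om n d q).filter (Dead r t M (t * (k / 2 ^ j) + i))).card : ℝ))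
        ((Om n d q).card * δ) (fun j _ => hdc _ ?_)
      · rw [Finset.card_range, nsmul_eq_mul] at this
        push_cast at this
        exact this
      · have h3 : k / 2 ^ j ≤ k := Nat.div_le_self _ _
        have h4 : t * (k / 2 ^ j + 1) ≤ t * 2 ^ (S + 1) := Nat.mul_le_mul_left _ (by omega)
        rw [hM]
        rw [Nat.mul_add] at h4
        omega
    have := Finset.sum_le_card_nsmul _ _ _ h2
    rw [Nat.card_Ico, nsmul_eq_mul] at this
    have e : 2 ^ (S + 1) - 2 ^ S = 2 ^ S := by rw [pow_succ]; omega
    rw [e] at this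
    push_cast at this
    exact this
  have hlow' : (B.card : ℝ) * 2 ^ S ≤ 2 * P.card := by exact_mod_cast hlow
  have hpos : (0 : ℝ) < 2 ^ S := by positivity
  refine le_of_mul_le_mul_right ?_ hpos
  calc _ ≤ _ := hlow'
    _ ≤ 2 * (2 ^ S * ((S + 1) * ((Om n d q).card * δ))) := by linarith
    _ = _ := by ring

end Death


/-! ### Hitting probabilities -/

lemma card_mem_sym2 {n : ℕ} (f : Sym2 (Fin n)) (h : DecidablePred (fun x => x ∈ f)) :
    (Finset.univ.filter (fun x => x ∈ f)).card ≤ 2 := by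
  obtain ⟨a, b, hab⟩ : ∃ a b, f = s(a, b) := by
    induction f using Sym2.ind with
    | _ a b => exact ⟨a, b, rfl⟩
  refine (Finset.card_le_card (t := {a, b}) ?_).trans Finset.card_le_two
  intro x hx
  have h1 := (Finset.mem_filter.1 hx).2
  rw [hab] at h1
  simpa using h1

section Hit
variable {n d q : ℕ}

/-- closed neighbourhood of a set -/
def NN (nb : Fin n → Fin d → Fin n) (X : Finset (Fin n)) : Finset (Fin n) := X ∪ X.biUnion (nbr nb)

lemma NN_sub {nb : Fin n → Fin d → Fin n} {X : Finset (Fin n)} : X ⊆ NN nb X :=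
  Finset.subset_union_left

lemma NN_adj {nb : Fin n → Fin d → Fin n} {X : Finset (Fin n)} {x y : Fin n} (hx : x ∈ X)
    (h : Adjn nb x y) : y ∈ NN nb X :=
  Finset.mem_union_right _ (Finset.mem_biUnion.2 ⟨x, hx, mem_nbr.2 h⟩)

lemma card_NN_le (nb : Fin n → Fin d → Fin n) (X : Finset (Fin n)) :
    (NN nb X).card ≤ X.card * (d + 1) := by
  have h1 := Finset.card_union_le X (X.biUnion (nbr nb))
  have h2 := Finset.card_biUnion_le_card_mul X (nbr nb) d (fun v _ => card_nbr_le nb v)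
  calc _ ≤ X.card + X.card * d := by unfold NN; omega
    _ = _ := by ring

open Classical in
/-- vertices outside the core attached to label `i` -/
noncomputable def Dl (r : Fin n) (t M i : ℕ) (s : St n d q) : Finset (Fin n) :=
  Finset.univ.filter (fun x => x ∉ Core s.1 s.2 r t M ∧
    ∃ m ∈ al s.1 s.2 r t M, m % t = i ∧ Adjn s.1 (vx s.1 r t m) x)

lemma mem_Dl {r : Fin n} {t M i : ℕ} {s : St n d q} {x : Fin n} : x ∈ Dl r t M i s ↔
    x ∉ Core s.1 s.2 r t M ∧
    ∃ m ∈ al s.1 s.2 r t M, m % t = i ∧ Adjn s.1 (vx s.1 r t m) x := by simp [Dl]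

/-- many alive leaves give many attached vertices -/
lemma card_Dl {r : Fin n} {t S i : ℕ} {s : St n d q} (hord : OrdG s.1) (hd : 3 ≤ d) (ht : 0 < t)
    (htd : t ≤ d) (hi : i < t) :
    (LF r t S i s).card ≤ (Dl r t (t * 2 ^ (S + 1)) i s).card := by
  have hdiv : ∀ k, (t * k + i) / t = k := fun k => by
    rw [Nat.mul_add_div ht, Nat.div_eq_of_lt hi, add_zero]
  have hmod : ∀ k, (t * k + i) % t = i := fun k => by
    rw [Nat.mul_add_mod, Nat.mod_eq_of_lt hi]
  refine Finset.card_le_card_of_injOn (fun k => kid s.1 (vx s.1 r t (t * k + i))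
    (pr s.1 r t (t * k + i)) 0) ?_ ?_
  · intro k hk
    obtain ⟨h1, h2⟩ := Finset.mem_filter.1 (Finset.mem_coe.1 hk)
    refine Finset.mem_coe.2 (mem_Dl.2 ⟨?_, _, h2, hmod k, kid_adj hd _ _ _⟩)
    exact leaf_kid hord hd ht htd h2 (by rw [hdiv]; exact (Finset.mem_Ico.1 h1).1)
  · intro k hk k' hk' he
    have h2 := (Finset.mem_filter.1 (Finset.mem_coe.1 hk)).2
    have h2' := (Finset.mem_filter.1 (Finset.mem_coe.1 hk')).2
    by_contra hne
    have hO : ∀ m, kid s.1 (vx s.1 r t m) (pr s.1 r t m) 0 ∈ Oo s.1 r t m := fun m => by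
      rw [Oo, Finset.mem_erase, mem_nbr]; exact ⟨kid_ne hord hd _ _ _, kid_adj hd _ _ _⟩
    have hdis := O_disj h2 h2' (by
      intro h
      have := congrArg (· / t) h
      simp only [hdiv] at this
      exact hne this)
    have h3 := hO (t * k' + i)
    simp only at he
    rw [← he] at h3
    exact Finset.disjoint_left.1 hdis (hO _) h3

variable (r u : Fin n) (t M i : ℕ) (f : Sym2 (Fin n)) (Kb : ℕ)

/-- ball of a state -/
noncomputable def sB (s : St n d q) : Finset (Fin n) := Ball s.1 (Core s.1 s.2 r t M) u i f Kb

/-- open ports of a state -/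
noncomputable def sO (s : St n d q) : Finset (Fin n × Fin d) :=
  Opn s.1 (Core s.1 s.2 r t M) u i f Kb

open Classical in
/-- hits of a state -/
noncomputable def sX (s : St n d q) : Finset (Fin n × Fin d) :=
  (sO r u t M i f Kb s).filter (fun ap => s.1 ap.1 ap.2 ∈ Dl r t M i s)

open Classical in
/-- the excluded vertices -/
noncomputable def sE (s : St n d q) : Finset (Fin n) :=
  NN s.1 (NN s.1 (NN s.1 (sB r u t M i f Kb s))) ∪ Finset.univ.filter (fun x => x ∈ f)

lemma card_sE (s : St n d q) : (sE r u t M i f Kb s).card ≤ 5 ^ Kb * (d + 1) ^ 3 + 2 := by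
  classical
  refine (Finset.card_union_le _ _).trans ?_
  refine Nat.add_le_add ?_ (card_mem_sym2 f _)
  have h0 := card_Ball_le (nb := s.1) (C := Core s.1 s.2 r t M) (u := u) (i := i) (f := f) Kb
  calc _ ≤ (sB r u t M i f Kb s).card * (d + 1) * (d + 1) * (d + 1) := by
        refine (card_NN_le _ _).trans (Nat.mul_le_mul_right _ ?_)
        refine (card_NN_le _ _).trans (Nat.mul_le_mul_right _ ?_)
        exact card_NN_le _ _
    _ = (sB r u t M i f Kb s).card * (d + 1) ^ 3 := by ring
    _ ≤ _ := Nat.mul_le_mul_right _ h0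

variable {r u t M i f Kb}

/-- the data of a hitting switch -/
lemma hit_switch {s : St n d q} (hord : OrdG s.1) (ht : 0 < t)
    (hKb : 0 < Kb) (hu : u ∉ Core s.1 s.2 r t M) {l z a : Fin n} {p : Fin d}
    (hl : l ∈ Dl r t M i s) (hlE : l ∉ sE r u t M i f Kb s) (hlz : Adjn s.1 l z)
    (hzC : z ∉ Core s.1 s.2 r t M) (hap : (a, p) ∈ sO r u t M i f Kb s)
    (hX : (a, p) ∉ sX r u t M i f Kb s) :
    Valid s.1 l z a (s.1 a p) ∧
    Core (mv (l, z, a, s.1 a p) s).1 (mv (l, z, a, s.1 a p) s).2 r t M = Core s.1 s.2 r t M ∧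
    Dl r t M i (mv (l, z, a, s.1 a p) s) = Dl r t M i s ∧
    sO r u t M i f Kb (mv (l, z, a, s.1 a p) s) = sO r u t M i f Kb s ∧
    sX r u t M i f Kb (mv (l, z, a, s.1 a p) s) = insert (a, p) (sX r u t M i f Kb s) ∧
    (mv (l, z, a, s.1 a p) s).1 a p = l := by
  classical
  set b := s.1 a p with hb
  set C := Core s.1 s.2 r t M with hC
  have hap' := hap
  simp only [sO, Opn, Finset.mem_filter, Finset.mem_univ, true_and] at hap
  obtain ⟨haB, hpi, hbC, hbB, habf⟩ := hap
  rw [← hC] at haB hbB hbC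
  have haB' : a ∈ sB r u t M i f Kb s := haB
  have hab : Adjn s.1 a b := ⟨p, rfl⟩
  simp only [sE, Finset.mem_union, not_or, Finset.mem_filter, Finset.mem_univ, true_and] at hlE
  obtain ⟨hl3, hlf⟩ := hlE
  have hl2 : l ∉ NN s.1 (NN s.1 (sB r u t M i f Kb s)) := fun h => hl3 (NN_sub h)
  have hl1 : l ∉ NN s.1 (sB r u t M i f Kb s) := fun h => hl2 (NN_sub h)
  have hl0 : l ∉ sB r u t M i f Kb s := fun h => hl1 (NN_sub h)
  have hz2 : z ∉ NN s.1 (NN s.1 (sB r u t M i f Kb s)) := fun h =>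
    hl3 (NN_adj h (hord.adj_symm hlz))
  have hz1 : z ∉ NN s.1 (sB r u t M i f Kb s) := fun h => hz2 (NN_sub h)
  have hz0 : z ∉ sB r u t M i f Kb s := fun h => hz1 (NN_sub h)
  have hb1 : b ∈ NN s.1 (sB r u t M i f Kb s) := NN_adj haB' hab
  have haC : a ∉ C := Ball_notMem hu Kb a haB
  have hlC : l ∉ C := (mem_Dl.1 hl).1
  have hval : Valid s.1 l z a b := by
    refine ⟨⟨hord.adj_ne hlz, ?_, ?_, ?_, ?_, hord.adj_ne hab⟩, hlz, hab, ?_, ?_⟩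
    · rintro rfl; exact hl0 haB'
    · intro h; exact hl1 (h ▸ hb1)
    · rintro rfl; exact hz0 haB'
    · intro h; exact hz1 (h ▸ hb1)
    · intro h; exact hl1 (NN_adj haB' (hord.adj_symm h))
    · intro h; exact hz2 (NN_adj hb1 (hord.adj_symm h))
  set s' := mv (l, z, a, b) s with hs'
  have hT : ∀ w ∈ sup4 ((l, z, a, b) : Q4 n), w ∉ Core s.1 s.2 r t M := by
    intro w hw
    rcases mem_sup4.1 hw with h | h | h | h <;> rw [h] <;> assumption
  obtain ⟨i1, i2, i3, i4, i5⟩ := mv_run ht M _ s hT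
  have hD : Dl r t M i s' = Dl r t M i s := by
    ext x
    rw [mem_Dl, mem_Dl, i1, i2]
    refine and_congr_right fun _ => exists_congr fun m => and_congr_right fun hm => ?_
    rw [(i4 m hm).1, Adjn, i3 _ (vx_mem_Core hm), ← Adjn]
  have hs'a : ∀ p', s'.1 a p' = Equiv.swap b l (s.1 a p') := by
    intro p'
    obtain ⟨⟨h1, h2, h3, h4, h5, h6⟩, -⟩ := hval
    show sw l z a b s.1 a p' = _
    simp [sw, h2.symm, h4.symm]
  have hs'ap : s'.1 a p = l := by rw [hs'a, ← hb, Equiv.swap_apply_left]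
  have hs'a' : ∀ p', p' ≠ p → s'.1 a p' = s.1 a p' := by
    intro p' hp'
    rw [hs'a, Equiv.swap_apply_of_ne_of_ne]
    · intro h; exact hp' (hord.inj a h)
    · intro h; exact hl1 (NN_adj haB' ⟨p', h⟩)
  have hoff : ∀ v ∈ sB r u t M i f Kb s, v ≠ a → s'.1 v = s.1 v := by
    intro v hv hva
    refine mv_nb ?_
    rw [mem_sup4]
    rintro (h | h | h | h) <;> simp only at h
    · exact hl0 (h ▸ hv)
    · exact hz0 (h ▸ hv)
    · exact hva h
    · rw [h] at hv; exact hbB hv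
  -- the ball does not change
  obtain ⟨K', rfl⟩ : ∃ K', Kb = K' + 1 := ⟨Kb - 1, by omega⟩
  have haK : a ∉ Ball s.1 C u i f K' := by
    intro h
    exact hbB (mem_Ball_succ.2 (Or.inr ⟨hbC, a, h, Finset.mem_image.2 ⟨p, hpi, rfl⟩, habf⟩))
  have hBall : ∀ j, j ≤ K' + 1 → Ball s'.1 C u i f j = Ball s.1 C u i f j := by
    intro j
    induction j with
    | zero => intro _; rfl
    | succ j ih =>
      intro hj
      have ih := ih (by omega)
      ext x
      rw [mem_Ball_succ, mem_Ball_succ, ih]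
      refine or_congr_right (and_congr_right fun _ => exists_congr fun c =>
        and_congr_right fun hc => ?_)
      have hcK : c ∈ Ball s.1 C u i f K' := Ball_mono (by omega) hc
      rw [clsF, clsF, hoff c (Ball_mono (by omega) hcK) (fun h => haK (h ▸ hcK))]
  have hB := hBall (K' + 1) le_rfl
  have hO : sO r u t M i f (K' + 1) s' = sO r u t M i f (K' + 1) s := by
    ext ⟨c, p'⟩
    simp only [sO, Opn, Finset.mem_filter, Finset.mem_univ, true_and]
    rw [i2, ← hC, hB]
    refine and_congr_right fun hc => and_congr_right fun hp' => ?_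
    by_cases hca : c = a
    · subst hca
      by_cases hpp : p' = p
      · subst hpp
        rw [hs'ap, ← hb]
        refine iff_of_true ⟨hlC, hl0, fun h => hlf ?_⟩ ⟨hbC, hbB, habf⟩
        rw [← h]; simp
      · rw [hs'a' p' hpp]
    · rw [hoff c hc hca]
  refine ⟨hval, i2, hD, hO, ?_, hs'ap⟩
  ext ⟨c, p'⟩
  rw [Finset.mem_insert, sX, sX, Finset.mem_filter, Finset.mem_filter, hO, hD]
  by_cases hca : c = a
  · subst hca
    by_cases hpp : p' = p
    · subst hpp
      simp only [true_or, iff_true]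
      exact ⟨hap', by rw [hs'ap]; exact hl⟩
    · have : ((c, p') : Fin n × Fin d) ≠ (c, p) := by simp [hpp]
      simp only [hs'a' p' hpp, this, false_or]
  · have : ((c, p') : Fin n × Fin d) ≠ (a, p) := by simp [hca]
    simp only [this, false_or]
    refine and_congr_right fun hc => ?_
    have hcB : c ∈ sB r u t M i f (K' + 1) s := by
      simp only [sO, Opn, Finset.mem_filter] at hc
      exact hc.2.1
    rw [hoff c hcB hca]

variable (r u t M i f Kb)

open Classical in
/-- states with exactly `x` hits -/
noncomputable def Hx (n d q : ℕ) (r u : Fin n) (t M i : ℕ) (f : Sym2 (Fin n)) (Kb lam A x : ℕ) :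
    Finset (St n d q) :=
  (Om n d q).filter (fun s => u ∉ Core s.1 s.2 r t M ∧ lam ≤ (Dl r t M i s).card ∧
    A ≤ (sO r u t M i f Kb s).card ∧ (sX r u t M i f Kb s).card = x)

lemma hit_step (hd : 3 ≤ d) (ht : 0 < t) (hKb : 0 < Kb) (lam A x : ℕ) :
    (Hx n d q r u t M i f Kb lam A x).card *
      ((lam - (5 ^ Kb * (d + 1) ^ 3 + 2)) * (A - x)) ≤
    (Hx n d q r u t M i f Kb lam A (x + 1)).card * ((x + 1) * (n * d)) * (q + 1) ^ 4 := by
  classical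
  -- a neighbour off the core
  let Z : St n d q → Fin n → Fin n := fun s l =>
    if h : ∃ z, Adjn s.1 l z ∧ z ∉ Core s.1 s.2 r t M then h.choose else l
  have hZ : ∀ s : St n d q, OrdG s.1 → ∀ l, l ∉ Core s.1 s.2 r t M →
      Adjn s.1 l (Z s l) ∧ Z s l ∉ Core s.1 s.2 r t M := by
    intro s hord l hl
    have h : ∃ z, Adjn s.1 l z ∧ z ∉ Core s.1 s.2 r t M := by
      by_contra hcon
      push Not at hcon
      have h0 : Adjn s.1 l (pt s.1 l 0) := pt_adj l (by omega)
      have h1 : Adjn s.1 l (pt s.1 l 1) := pt_adj l (by omega)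
      have := core_nbr_unique (κ := s.2) hord ht l hl _ _ h0 h1 (hcon _ h0) (hcon _ h1)
      have := pt_inj hord l (by omega) (by omega) this
      omega
    simp only [Z, dif_pos h]
    exact h.choose_spec
  let Fwd : St n d q → Finset (Q4 n) := fun s =>
    ((Dl r t M i s \ sE r u t M i f Kb s) ×ˢ
      (sO r u t M i f Kb s \ sX r u t M i f Kb s)).image
      (fun w => (w.1, Z s w.1, w.2.1, s.1 w.2.1 w.2.2))
  let Back : St n d q → Finset (Q4 n) := fun s =>
    ((sX r u t M i f Kb s) ×ˢ (Finset.univ : Finset (Fin n × Fin d))).image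
      (fun w => (s.1 w.1.1 w.1.2, w.2.1, w.1.1, s.1 w.2.1 w.2.2))
  refine dbl _ _ Fwd Back _ _ ?_ ?_ ?_
  · intro s hs
    obtain ⟨hsO, hu, hlam, hA, hx⟩ := Finset.mem_filter.1 hs
    have hord := mem_Om.1 hsO
    show _ ≤ (Finset.image _ _).card
    rw [Finset.card_image_of_injective _ (by
      rintro ⟨l, a, p⟩ ⟨l', a', p'⟩ h
      simp only [Prod.mk.injEq] at h
      obtain ⟨rfl, -, rfl, h⟩ := h
      rw [hord.inj _ h]), Finset.card_product]
    refine Nat.mul_le_mul ?_ ?_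
    · have h1 := Finset.le_card_sdiff (sE r u t M i f Kb s) (Dl r t M i s)
      have h2 := card_sE r u t M i f Kb s
      omega
    · have h1 := Finset.le_card_sdiff (sX r u t M i f Kb s) (sO r u t M i f Kb s)
      omega
  · intro s hs τ hτ
    obtain ⟨hsO, hu, hlam, hA, hx⟩ := Finset.mem_filter.1 hs
    have hord := mem_Om.1 hsO
    obtain ⟨⟨l, a, p⟩, hw, rfl⟩ := Finset.mem_image.1 hτ
    obtain ⟨hw1, hw2⟩ := Finset.mem_product.1 hw
    obtain ⟨hl, hlE⟩ := Finset.mem_sdiff.1 hw1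
    obtain ⟨hap, hX⟩ := Finset.mem_sdiff.1 hw2
    simp only at hl hlE hap hX ⊢
    obtain ⟨hz1, hz2⟩ := hZ s hord l (mem_Dl.1 hl).1
    obtain ⟨hval, e1, e2, e3, e4, e5⟩ := hit_switch hord ht hKb hu hl hlE hz1 hz2 hap hX
    refine ⟨hval.1, Finset.mem_filter.2 ⟨mem_Om.2 (sw_ord hord hval), ?_, ?_, ?_, ?_⟩, ?_⟩
    · rw [e1]; exact hu
    · rw [e2]; exact hlam
    · rw [e3]; exact hA
    · rw [e4, Finset.card_insert_of_notMem hX, hx]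
    · have hzb : Adjn (mv (l, Z s l, a, s.1 a p) s).1 (Z s l) (s.1 a p) :=
        (sw_adj hord hval _ _).2 (Or.inr (Or.inr rfl))
      obtain ⟨p', hp'⟩ := hzb
      refine Finset.mem_image.2 ⟨((a, p), (Z s l, p')), Finset.mem_product.2
        ⟨?_, Finset.mem_univ _⟩, ?_⟩
      · rw [e4]; exact Finset.mem_insert_self _ _
      · simp only [e5, hp']
  · intro s hs
    have hx := (Finset.mem_filter.1 hs).2.2.2.2
    refine Finset.card_image_le.trans ?_
    rw [Finset.card_product, hx]
    simp

/-- the probability of no hit -/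
theorem hit_card (hd : 3 ≤ d) (ht : 0 < t) (hKb : 0 < Kb) (lam A m0 : ℕ) (hA : 2 * m0 ≤ A)
    (hA0 : 0 < A) (hlam : 2 * (5 ^ Kb * (d + 1) ^ 3 + 2) ≤ lam) :
    ((Hx n d q r u t M i f Kb lam A 0).card : ℝ) ≤
      (4 * m0 * n * d * (q + 1) ^ 4 / (lam * A)) ^ m0 * (Om n d q).card := by
  set ρ : ℝ := 4 * m0 * n * d * (q + 1) ^ 4 / (lam * A) with hρ
  have hl0 : 0 < lam := by omega
  have hρ0 : 0 ≤ ρ := by positivity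
  have step : ∀ x < m0, ((Hx n d q r u t M i f Kb lam A x).card : ℝ) ≤
      ρ * (Hx n d q r u t M i f Kb lam A (x + 1)).card := by
    intro x hx
    have h := hit_step (q := q) r u t M i f Kb hd ht hKb lam A x
    have h1 : lam * A ≤ 4 * ((lam - (5 ^ Kb * (d + 1) ^ 3 + 2)) * (A - x)) := by
      have a1 : lam ≤ 2 * (lam - (5 ^ Kb * (d + 1) ^ 3 + 2)) := by omega
      have a2 : A ≤ 2 * (A - x) := by omega
      calc _ ≤ _ := Nat.mul_le_mul a1 a2
        _ = _ := by ring
    have h2 : (Hx n d q r u t M i f Kb lam A x).card * (lam * A) ≤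
        4 * ((Hx n d q r u t M i f Kb lam A (x + 1)).card * (m0 * (n * d)) * (q + 1) ^ 4) := by
      calc _ ≤ (Hx n d q r u t M i f Kb lam A x).card *
            (4 * ((lam - (5 ^ Kb * (d + 1) ^ 3 + 2)) * (A - x))) := Nat.mul_le_mul_left _ h1
        _ = 4 * ((Hx n d q r u t M i f Kb lam A x).card *
            ((lam - (5 ^ Kb * (d + 1) ^ 3 + 2)) * (A - x))) := by ring
        _ ≤ _ := Nat.mul_le_mul_left _ h
        _ ≤ _ := by gcongr; omega
    have h3 : ((Hx n d q r u t M i f Kb lam A x).card : ℝ) * (lam * A) ≤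
        4 * ((Hx n d q r u t M i f Kb lam A (x + 1)).card * (m0 * (n * d)) * (q + 1) ^ 4) := by
      exact_mod_cast h2
    have hpos : (0 : ℝ) < lam * A := by positivity
    rw [hρ, div_mul_eq_mul_div, le_div_iff₀ hpos]
    calc _ ≤ _ := h3
      _ = _ := by ring
  have hind : ∀ x ≤ m0, ((Hx n d q r u t M i f Kb lam A 0).card : ℝ) ≤
      ρ ^ x * (Hx n d q r u t M i f Kb lam A x).card := by
    intro x
    induction x with
    | zero => intro _; simp
    | succ x ih =>
      intro hx
      calc _ ≤ _ := ih (by omega)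
        _ ≤ ρ ^ x * (ρ * (Hx n d q r u t M i f Kb lam A (x + 1)).card) :=
          mul_le_mul_of_nonneg_left (step x (by omega)) (by positivity)
        _ = _ := by ring
  refine (hind m0 le_rfl).trans (mul_le_mul_of_nonneg_left ?_ (by positivity))
  have : (Hx n d q r u t M i f Kb lam A m0).card ≤ (Om n d q).card := Finset.card_filter_le _ _
  exact_mod_cast this

end Hit


/-! ### Good states have independent spanning trees -/

section Good
variable {n d q : ℕ}

/-- reachability of the core with label `i` -/
def Rch (H : SimpleGraph (Fin n)) (nb : Fin n → Fin d → Fin n) (C : Finset (Fin n)) (i : ℕ)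
    (P : Fin n → Prop) : ℕ → Fin n → Prop
  | 0, x => x ∉ C ∧ P x
  | j + 1, x => x ∉ C ∧ ∃ y ∈ clsF nb i x, H.Adj x y ∧ Rch H nb C i P j y

lemma Rch_notMem {H : SimpleGraph (Fin n)} {nb : Fin n → Fin d → Fin n} {C : Finset (Fin n)}
    {i : ℕ} {P : Fin n → Prop} {j : ℕ} {x : Fin n} (h : Rch H nb C i P j x) : x ∉ C := by
  cases j with
  | zero => exact h.1
  | succ j => exact h.1

lemma Rch_ball {H : SimpleGraph (Fin n)} {nb : Fin n → Fin d → Fin n} {C : Finset (Fin n)}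
    {i : ℕ} {P : Fin n → Prop} (hord : OrdG nb) {u : Fin n} (hu : u ∉ C) {f : Sym2 (Fin n)}
    (K : ℕ)
    (hbad : ∀ a x, (∃ p : H.Walk u a, p.length ≤ K) → Adjn nb a x → s(a, x) ≠ f → H.Adj a x) :
    ∀ j, j ≤ K + 1 → ∀ x ∈ Ball nb C u i f j, ∀ m, Rch H nb C i P m x →
      ∃ j' ≤ j, Rch H nb C i P (m + j') u := by
  intro j
  induction j with
  | zero =>
    intro _ x hx m hm
    rw [Ball, Finset.mem_singleton] at hx
    subst hx
    exact ⟨0, le_rfl, hm⟩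
  | succ j ih =>
    intro hj x hx m hm
    rcases mem_Ball_succ.1 hx with h | ⟨hxC, a, ha, hax, hf⟩
    · obtain ⟨j', h1, h2⟩ := ih (by omega) x h m hm
      exact ⟨j', by omega, h2⟩
    · obtain ⟨p, -, hp, -⟩ := Ball_path H hord K hbad j (by omega) a ha
      have hH := hbad a x ⟨p, by omega⟩ (clsF_adj hax) hf
      have hR : Rch H nb C i P (m + 1) a := ⟨Ball_notMem hu j a ha, x, hax, hH, hm⟩
      obtain ⟨j', h1, h2⟩ := ih (by omega) a ha (m + 1) hR
      exact ⟨j' + 1, by omega, by rwa [show m + (j' + 1) = m + 1 + j' by ring]⟩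

theorem good_state {s : St n d q} (hord : OrdG s.1) (hd : 4 ≤ d) {t : ℕ} (htd : t = d / 4)
    (r : Fin n) (M K : ℕ) (hsp : Sparse (Gr s.1) (6 * (K + 1) + 14))
    (hhit : ∀ (u : Fin n) (i : ℕ) (f : Sym2 (Fin n)), i < t → u ∉ Core s.1 s.2 r t M →
      2 ^ K ≤ (sO r u t M i f (K + 1) s).card → sX r u t M i f (K + 1) s ≠ ∅) :
    HasISTs (Gr s.1) r t := by
  classical
  have ht : 0 < t := by omega
  have htd' : t ≤ d := by omega
  have hd3 : 3 ≤ d := by omega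
  set C := Core s.1 s.2 r t M with hC
  obtain ⟨H, hHG, hNS, hmax⟩ := exists_maxH (Gr s.1) (2 * (K + 1 + 3))
  have hob := sparse_one_bad (Gr s.1) H (K + 1) hHG hsp hNS hmax
  have huq : ∀ x y (p q : H.Walk x y), p.IsPath → q.IsPath → p.length ≤ K + 4 →
      q.length ≤ K + 4 → p = q := fun x y p q hp hq h1 h2 =>
    noShort_uniq H _ hNS x y p q hp hq (by omega)
  -- addresses
  let adr : Fin n → ℕ := fun c => if h : ∃ m ∈ al s.1 s.2 r t M, vx s.1 r t m = c then h.choose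
    else 0
  have hadr : ∀ c ∈ C, c ≠ r → adr c ∈ al s.1 s.2 r t M ∧ vx s.1 r t (adr c) = c := by
    intro c hc hcr
    have h := (mem_Core.1 hc).resolve_left hcr
    simp only [adr, dif_pos h]
    exact h.choose_spec
  have hadr' : ∀ m ∈ al s.1 s.2 r t M, adr (vx s.1 r t m) = m := by
    intro m hm
    obtain ⟨h1, h2⟩ := hadr _ (vx_mem_Core hm) (vx_ne_r hord hd3 ht htd' hm)
    exact vx_inj hord hd3 ht htd' h1 hm h2
  let lab : Fin n → Fin t := fun c => ⟨adr c % t, Nat.mod_lt _ ht⟩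
  let P : Fin t → Fin n → Prop := fun i x => ∃ c ∈ C, c ≠ r ∧ lab c = i ∧ (Gr s.1).Adj x c
  -- reaching the core
  have hreach : ∀ (i : Fin t) u, u ∉ C → ∃ j ≤ K + 2, Rch H s.1 C i (P i) j u := by
    intro i u hu
    let f : Sym2 (Fin n) := if h : ∃ e : Fin n × Fin n, (∃ p : H.Walk u e.1, p.length ≤ K + 1) ∧
      (Gr s.1).Adj e.1 e.2 ∧ ¬ H.Adj e.1 e.2 then s(h.choose.1, h.choose.2) else s(u, u)
    have hbad : ∀ a x, (∃ p : H.Walk u a, p.length ≤ K + 1) → Adjn s.1 a x → s(a, x) ≠ f →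
        H.Adj a x := by
      intro a x hp hax hf
      by_contra hH
      have h : ∃ e : Fin n × Fin n, (∃ p : H.Walk u e.1, p.length ≤ K + 1) ∧
        (Gr s.1).Adj e.1 e.2 ∧ ¬ H.Adj e.1 e.2 := ⟨(a, x), hp, (hord.gr_adj _ _).2 hax, hH⟩
      refine hf ?_
      simp only [f, dif_pos h]
      obtain ⟨⟨p2, hp2⟩, g2, g3⟩ := h.choose_spec
      obtain ⟨p1, hp1⟩ := hp
      exact hob u a x _ _ ((hord.gr_adj _ _).2 hax) hH g2 g3 p1 p2 hp1 hp2
    have hcard := Opn_card (nb := s.1) (C := C) (u := u) (i := i) (f := f) H hord K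
      (by have := i.2; omega) hu hbad (fun x y p q hp hq h1 h2 =>
        huq x y p q hp hq (by omega) (by omega)) (core_nbr_unique (κ := s.2) hord ht)
    obtain ⟨⟨a, p⟩, hap⟩ := Finset.nonempty_iff_ne_empty.2 (hhit u i f i.2 hu hcard)
    obtain ⟨h1, h2⟩ := Finset.mem_filter.1 hap
    simp only [sO, Opn, Finset.mem_filter, Finset.mem_univ, true_and] at h1
    obtain ⟨haB, hpi, hxC, -, hf⟩ := h1
    obtain ⟨-, m, hm, hmi, hadj⟩ := mem_Dl.1 h2
    simp only at hadj
    have hx : s.1 a p ∈ Ball s.1 C u i f (K + 2) :=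
      mem_Ball_succ.2 (Or.inr ⟨hxC, a, haB, Finset.mem_image.2 ⟨p, hpi, rfl⟩, hf⟩)
    have hR0 : Rch H s.1 C i (P i) 0 (s.1 a p) := by
      refine ⟨hxC, vx s.1 r t m, vx_mem_Core hm, vx_ne_r hord hd3 ht htd' hm, ?_, ?_⟩
      · refine Fin.ext ?_
        show adr (vx s.1 r t m) % t = i
        rw [hadr' m hm, hmi]
      · exact ((hord.gr_adj _ _).2 hadj).symm
    obtain ⟨j', hj', hR⟩ := Rch_ball hord hu (K + 1) hbad (K + 2) le_rfl _ hx 0 hR0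
    exact ⟨0 + j', by omega, hR⟩
  let dst : Fin t → Fin n → ℕ := fun i u =>
    if h : ∃ j, Rch H s.1 C i (P i) j u then Nat.find h else 0
  have hdst : ∀ (i : Fin t) u j, Rch H s.1 C i (P i) j u → dst i u ≤ j ∧ Rch H s.1 C i (P i) (dst i u) u := by
    intro i u j hj
    have h : ∃ j, Rch H s.1 C i (P i) j u := ⟨j, hj⟩
    simp only [dst, dif_pos h]
    exact ⟨Nat.find_min' h hj, Nat.find_spec h⟩
  refine assemble (Gr s.1) H hHG r C r_mem_Core lab (fun c => pr s.1 r t (adr c))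
    (fun c => if c = r then 0 else adr c) ?_ (K + 4) huq (fun v i => clsF s.1 i v) ?_ dst ?_ ?_ ?_
  · intro c hc hcr
    obtain ⟨hm, hv⟩ := hadr c hc hcr
    have hok := (al_ok _ _ _ _ hm).1
    refine ⟨al_pr_Core ht hm, ?_, ?_, ?_⟩
    · have := pr_adj (nb := s.1) (r := r) hd3 ht htd' (adr c)
      rw [hv] at this
      exact ((hord.gr_adj _ _).2 this).symm
    · simp only [if_neg hcr]
      by_cases c1 : adr c / t ≤ 1
      · rw [if_pos (pr_one _ _ _ c1)]; omega
      · rw [pr_two _ _ _ ht c1, if_neg (vx_ne_r hord hd3 ht htd' (al_par hm c1)),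
          hadr' _ (al_par hm c1)]
        exact pad_lt ht hok
    · intro hp
      by_cases c1 : adr c / t ≤ 1
      · exact (hp (pr_one _ _ _ c1)).elim
      · refine Fin.ext ?_
        show adr (pr s.1 r t (adr c)) % t = adr c % t
        rw [pr_two _ _ _ ht c1, hadr' _ (al_par hm c1), pad_mod ht]
  · intro v i j x hi hj
    obtain ⟨p, hp, hpx⟩ := Finset.mem_image.1 (Finset.mem_coe.1 hi)
    obtain ⟨p', hp', hpx'⟩ := Finset.mem_image.1 (Finset.mem_coe.1 hj)
    have := hord.inj v (hpx.trans hpx'.symm)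
    subst this
    simp only [prt, Finset.mem_filter, Finset.mem_univ, true_and] at hp hp'
    exact Fin.ext (by omega)
  · intro i u hu
    obtain ⟨j, hj, hR⟩ := hreach i u hu
    have := (hdst i u j hR).1
    omega
  · intro i u hu
    obtain ⟨j, hj, hR⟩ := hreach i u hu
    have h2 := (hdst i u j hR).2
    rcases hdj : dst i u with _ | k
    · rw [hdj] at h2
      exact Or.inl h2.2
    · rw [hdj] at h2
      obtain ⟨-, x, hx1, hx2, hx3⟩ := h2
      refine Or.inr ⟨x, Rch_notMem hx3, Finset.mem_coe.2 hx1, hx2, ?_⟩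
      have := (hdst i x k hx3).1
      omega
  · intro c hc hcr
    obtain ⟨hm, hv⟩ := hadr c hc hcr
    set N := (nbr s.1 c).filter (fun x => x ∉ C ∧ H.Adj c x) with hN
    set Bd := (nbr s.1 c).filter (fun x => ¬ H.Adj c x) with hBd
    have hBd1 : Bd.card ≤ 1 := by
      rw [Finset.card_le_one]
      intro x hx y hy
      obtain ⟨x1, x2⟩ := Finset.mem_filter.1 hx
      obtain ⟨y1, y2⟩ := Finset.mem_filter.1 hy
      have := hob c c x c y ((hord.gr_adj _ _).2 (mem_nbr.1 x1)) x2
        ((hord.gr_adj _ _).2 (mem_nbr.1 y1)) y2 SimpleGraph.Walk.nil SimpleGraph.Walk.nil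
        (by simp) (by simp)
      exact Sym2.congr_right.1 this
    have hsub : nbr s.1 c ⊆ N ∪ Bd ∪ {pr s.1 r t (adr c), kid s.1 c (pr s.1 r t (adr c)) 0,
        kid s.1 c (pr s.1 r t (adr c)) 1} := by
      intro x hx
      by_cases hH : H.Adj c x
      · by_cases hxC : x ∈ C
        · have := core_core (κ := s.2) hord hd3 ht htd' hm x (by rw [hv]; exact mem_nbr.1 hx) hxC
          rw [hv] at this
          refine Finset.mem_union_right _ ?_
          simpa using this
        · exact Finset.mem_union_left _ (Finset.mem_union_left _
            (Finset.mem_filter.2 ⟨hx, hxC, hH⟩))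
      · exact Finset.mem_union_left _ (Finset.mem_union_right _ (Finset.mem_filter.2 ⟨hx, hH⟩))
    have h1 := Finset.card_le_card hsub
    rw [hord.card_nbr] at h1
    have h2 := h1.trans (Finset.card_union_le _ _)
    have h3 := Finset.card_union_le N Bd
    have h4 : ({pr s.1 r t (adr c), kid s.1 c (pr s.1 r t (adr c)) 0,
        kid s.1 c (pr s.1 r t (adr c)) 1} : Finset (Fin n)).card ≤ 3 := Finset.card_le_three
    have hNc : t - 1 ≤ N.card := by omega
    have hcard : Fintype.card {i : Fin t // i ≠ lab c} ≤ Fintype.card N := by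
      rw [Fintype.card_coe]
      simpa using hNc
    obtain ⟨e⟩ := Function.Embedding.nonempty_of_card_le hcard
    refine ⟨fun i => if h : i ≠ lab c then (e ⟨i, h⟩ : Fin n) else c, fun i hi => ?_⟩
    have hmem := (Finset.mem_filter.1 (e ⟨i, hi⟩).2).2
    beta_reduce
    rw [dif_pos hi]
    refine ⟨hmem.1, hmem.2, fun j hj hij => ?_⟩
    rw [dif_pos hj] at hij
    have := e.injective (Subtype.ext hij)
    simpa using this

end Good


/-! ### Combining the bounds for a fixed root -/

section Combine
variable {n d q : ℕ}

/-- the total failure rate -/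
noncomputable def theta (n d q t S K m0 : ℕ) : ℝ :=
  ((6 * (K + 1) + 14 : ℕ) + 1 : ℝ) *
      (((6 * (K + 1) + 14 : ℕ) + 1 : ℝ) ^ 2 * (2 * d * (q + 1 : ℝ) ^ 4)) ^ (6 * (K + 1) + 14 + 1) / n
    + t * (2 * (S + 1) * (1 / (q + 1) + 2 * d ^ 2 * (t * 2 ^ (S + 1) + 1) * (q + 1) ^ 4 / n))
    + n * (t * (n ^ 2 * (4 * m0 * n * d * (q + 1) ^ 4 / (2 ^ (S - 1) * 2 ^ K)) ^ m0))

lemma card_sym2_le (n : ℕ) : Fintype.card (Sym2 (Fin n)) ≤ n ^ 2 := by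
  have := Fintype.card_le_of_surjective _ (Sym2.mk_surjective (α := Fin n))
  simpa [sq] using this

lemma comb_aux {a b x y z p N B B1 B2 B3 : ℝ} (hc : B ≤ B1 + B2 + B3) (e1 : B1 ≤ N * a)
    (e2 : B2 ≤ N * b) (e3 : B3 ≤ x * (y * (z * (p * N)))) :
    B ≤ (a + b + x * (y * (z * p))) * N := by
  have : (a + b + x * (y * (z * p))) * N = N * a + N * b + x * (y * (z * (p * N))) := by ring
  linarith

open Classical in
theorem bad_card (hd : 4 ≤ d) (r : Fin n) (S K m0 : ℕ) (hS : 1 ≤ S)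
    (h1 : 4 * (d + 1 + (6 * (K + 1) + 14)) ≤ n)
    (h2 : 4 * (d + 1 + ((d / 4) * 2 ^ (S + 1) + 1)) ≤ n)
    (h3 : 2 * m0 ≤ 2 ^ K)
    (h4 : 2 * (5 ^ (K + 1) * (d + 1) ^ 3 + 2) ≤ 2 ^ (S - 1)) :
    (((Om n d q).filter (fun s => ¬ HasISTs (Gr s.1) r (d / 4))).card : ℝ) ≤
      theta n d q (d / 4) S K m0 * (Om n d q).card := by
  set t := d / 4 with ht
  have ht0 : 0 < t := by omega
  have htd : t ≤ d := by omega
  set s0 := 6 * (K + 1) + 14 with hs0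
  set M := t * 2 ^ (S + 1) with hM
  set B := (Om n d q).filter (fun s => ¬ HasISTs (Gr s.1) r t) with hB
  set B1 := (Om n d q).filter (fun s => ¬ Sparse (Gr s.1) s0) with hB1
  set B2 := (Finset.range t).biUnion (fun i =>
    (Om n d q).filter (fun s => 2 * (LF r t S i s).card < 2 ^ S)) with hB2
  set B3 := (Finset.univ : Finset (Fin n)).biUnion (fun u => (Finset.range t).biUnion (fun i =>
    (Finset.univ : Finset (Sym2 (Fin n))).biUnion (fun f =>
      Hx n d q r u t M i f (K + 1) (2 ^ (S - 1)) (2 ^ K) 0))) with hB3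
  have hsub : B ⊆ B1 ∪ B2 ∪ B3 := by
    intro s hs
    obtain ⟨hs1, hs2⟩ := Finset.mem_filter.1 hs
    by_contra hcon
    simp only [Finset.mem_union, not_or] at hcon
    obtain ⟨⟨c1, c2⟩, c3⟩ := hcon
    have hord := mem_Om.1 hs1
    apply hs2
    refine good_state hord hd ht r M K ?_ ?_
    · by_contra hsp
      exact c1 (Finset.mem_filter.2 ⟨hs1, hsp⟩)
    · intro u i f hi hu hO hX
      apply c3
      simp only [hB3, Finset.mem_biUnion, Finset.mem_univ, true_and, Finset.mem_range]
      refine ⟨u, i, hi, f, Finset.mem_filter.2 ⟨hs1, hu, ?_, hO, by rw [hX]; rfl⟩⟩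
      have hl : ¬ 2 * (LF r t S i s).card < 2 ^ S := by
        intro hl
        apply c2
        simp only [hB2, Finset.mem_biUnion, Finset.mem_range]
        exact ⟨i, hi, Finset.mem_filter.2 ⟨hs1, hl⟩⟩
      have := card_Dl (S := S) (r := r) hord (by omega : 3 ≤ d) ht0 htd hi
      rw [← hM] at this
      have h2S : 2 ^ S = 2 * 2 ^ (S - 1) := by
        rw [← pow_succ']
        congr 1; omega
      omega
  have hn0 : (0 : ℝ) < n := by
    have : 0 < n := by omega
    exact_mod_cast this
  have e1 : (B1.card : ℝ) ≤ (Om n d q).card * (((s0 : ℕ) + 1 : ℝ) *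
      (((s0 : ℕ) + 1 : ℝ) ^ 2 * (2 * d * (q + 1 : ℝ) ^ 4)) ^ (s0 + 1) / n) := by
    have := sparse_card (n := n) (d := d) (q := q) (by omega) s0 h1
    rw [← mul_div_assoc, le_div_iff₀ hn0]
    exact_mod_cast this
  have e2 : (B2.card : ℝ) ≤ (Om n d q).card * (t * (2 * (S + 1) *
      (1 / (q + 1) + 2 * d ^ 2 * (t * 2 ^ (S + 1) + 1) * (q + 1) ^ 4 / n))) := by
    calc (B2.card : ℝ) ≤ ∑ i ∈ Finset.range t,
        (((Om n d q).filter (fun s => 2 * (LF r t S i s).card < 2 ^ S)).card : ℝ) := by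
          exact_mod_cast Finset.card_biUnion_le
      _ ≤ ∑ i ∈ Finset.range t, ((Om n d q).card : ℝ) * (2 * (S + 1) *
          (1 / (q + 1) + 2 * d ^ 2 * (t * 2 ^ (S + 1) + 1) * (q + 1) ^ 4 / n)) := by
          refine Finset.sum_le_sum fun i hi => ?_
          exact leaf_card (by omega) ht0 htd r S i (Finset.mem_range.1 hi) h2
      _ = _ := by
          rw [Finset.sum_const, Finset.card_range, nsmul_eq_mul]; ring
  set ρ : ℝ := (4 * m0 * n * d * (q + 1) ^ 4 / (2 ^ (S - 1) * 2 ^ K)) ^ m0 with hρ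
  have hρ0 : 0 ≤ ρ := by positivity
  have e3 : (B3.card : ℝ) ≤ n * (t * (n ^ 2 * (ρ * (Om n d q).card))) := by
    have hx : ∀ u i f, ((Hx n d q r u t M i f (K + 1) (2 ^ (S - 1)) (2 ^ K) 0).card : ℝ) ≤
        ρ * (Om n d q).card := by
      intro u i f
      have := hit_card (n := n) (q := q) r u t M i f (K + 1) (by omega : 3 ≤ d) ht0 (by omega)
        (2 ^ (S - 1)) (2 ^ K) m0 h3 (by positivity) h4
      rw [hρ]
      push_cast at this
      exact this
    have hs2 : ((Fintype.card (Sym2 (Fin n)) : ℕ) : ℝ) ≤ n ^ 2 := by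
      exact_mod_cast card_sym2_le n
    calc (B3.card : ℝ) ≤ ∑ u : Fin n, ∑ i ∈ Finset.range t, ∑ f : Sym2 (Fin n),
        ((Hx n d q r u t M i f (K + 1) (2 ^ (S - 1)) (2 ^ K) 0).card : ℝ) := by
          have : B3.card ≤ ∑ u : Fin n, ∑ i ∈ Finset.range t, ∑ f : Sym2 (Fin n),
            (Hx n d q r u t M i f (K + 1) (2 ^ (S - 1)) (2 ^ K) 0).card := by
            refine Finset.card_biUnion_le.trans (Finset.sum_le_sum fun u _ => ?_)
            refine Finset.card_biUnion_le.trans (Finset.sum_le_sum fun i _ => ?_)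
            exact Finset.card_biUnion_le
          exact_mod_cast this
      _ ≤ ∑ u : Fin n, ∑ i ∈ Finset.range t, ∑ f : Sym2 (Fin n), ρ * (Om n d q).card :=
          Finset.sum_le_sum fun u _ => Finset.sum_le_sum fun i _ =>
            Finset.sum_le_sum fun f _ => hx u i f
      _ = n * (t * ((Fintype.card (Sym2 (Fin n)) : ℕ) * (ρ * (Om n d q).card))) := by
          simp only [Finset.sum_const, Finset.card_univ, Finset.card_range, nsmul_eq_mul,
            Fintype.card_fin]
      _ ≤ _ := by gcongr
  have hc : (B.card : ℝ) ≤ B1.card + B2.card + B3.card := by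
    have a1 := Finset.card_le_card hsub
    have a2 := Finset.card_union_le (B1 ∪ B2) B3
    have a3 := Finset.card_union_le B1 B2
    have : B.card ≤ B1.card + B2.card + B3.card := by omega
    exact_mod_cast this
  unfold theta
  exact comb_aux hc e1 e2 e3

end Combine


/-! ### Transfer to regular graphs -/

section Transfer
variable {n d q : ℕ}

open Classical in
/-- the regular graphs -/
noncomputable def Reg (n d : ℕ) : Finset (SimpleGraph (Fin n)) :=
  Finset.univ.filter (fun G : SimpleGraph (Fin n) => ∀ v, Nat.card (G.neighborSet v) = d)

lemma mem_Reg {G : SimpleGraph (Fin n)} : G ∈ Reg n d ↔ ∀ v, Nat.card (G.neighborSet v) = d := by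
  classical
  simp [Reg]

lemma gr_mem_Reg {nb : Fin n → Fin d → Fin n} (h : OrdG nb) : Gr nb ∈ Reg n d := by
  classical
  rw [mem_Reg]
  intro v
  have : (Gr nb).neighborSet v = ↑(nbr nb v) := by
    ext x
    simp [SimpleGraph.mem_neighborSet, h.gr_adj, mem_nbr]
  rw [this, Nat.card_eq_fintype_card]
  simpa using h.card_nbr v

lemma ord_iff {G : SimpleGraph (Fin n)} (hG : G ∈ Reg n d) (nb : Fin n → Fin d → Fin n) :
    (OrdG nb ∧ Gr nb = G) ↔ ∀ v, Function.Injective (nb v) ∧ ∀ p, G.Adj v (nb v p) := by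
  classical
  constructor
  · rintro ⟨h, rfl⟩ v
    exact ⟨h.inj v, fun p => (h.gr_adj _ _).2 ⟨p, rfl⟩⟩
  · intro h
    have hs : ∀ v x, G.Adj v x → ∃ p, nb v p = x := by
      intro v x hx
      let e : Fin d → G.neighborSet v := fun p => ⟨nb v p, (h v).2 p⟩
      have he : Function.Injective e := fun a b hab => (h v).1 (congrArg Subtype.val hab)
      have hb : Function.Bijective e := by
        rw [Fintype.bijective_iff_injective_and_card]
        refine ⟨he, ?_⟩
        have := mem_Reg.1 hG v
        rw [Nat.card_eq_fintype_card] at this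
        rw [Fintype.card_fin, this]
      obtain ⟨p, hp⟩ := hb.2 ⟨x, hx⟩
      exact ⟨p, congrArg Subtype.val hp⟩
    have hord : OrdG nb :=
      ⟨fun v => (h v).1, fun v p => ((h v).2 p).ne', fun v p => hs _ _ ((h v).2 p).symm⟩
    refine ⟨hord, ?_⟩
    ext x y
    rw [hord.gr_adj]
    constructor
    · rintro ⟨p, rfl⟩
      exact (h x).2 p
    · exact hs x y

open Classical in
lemma fiber_card {G : SimpleGraph (Fin n)} (hG : G ∈ Reg n d) :
    ((Om n d q).filter (fun s => Gr s.1 = G)).card = (d.factorial) ^ n * (q + 1) ^ n := by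
  have h1 : (Om n d q).filter (fun s => Gr s.1 = G) =
      (Fintype.piFinset (fun v : Fin n => (Finset.univ : Finset (Fin d → Fin n)).filter
        (fun g => Function.Injective g ∧ ∀ p, G.Adj v (g p)))) ×ˢ
        (Finset.univ : Finset (Fin n → Fin (q + 1))) := by
    ext s
    rw [Finset.mem_filter, mem_Om, ord_iff hG, Finset.mem_product, Fintype.mem_piFinset]
    simp
  have h2 : ∀ v : Fin n, ((Finset.univ : Finset (Fin d → Fin n)).filter
        (fun g => Function.Injective g ∧ ∀ p, G.Adj v (g p))).card = d.factorial := by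
    intro v
    have hc : Fintype.card (G.neighborSet v) = d := by
      rw [← Nat.card_eq_fintype_card]; exact mem_Reg.1 hG v
    have h3 : Fintype.card (Fin d ↪ G.neighborSet v) = d.factorial := by
      rw [Fintype.card_embedding_eq, hc, Fintype.card_fin, Nat.descFactorial_self]
    rw [← h3, ← Finset.card_univ]
    symm
    refine Finset.card_bij (fun e _ => fun p => (e p : Fin n)) ?_ ?_ ?_
    · intro e _
      refine Finset.mem_filter.2 ⟨Finset.mem_univ _, fun a b hab => e.injective (Subtype.ext hab),
        fun p => (e p).2⟩
    · intro e _ e' _ h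
      ext p
      exact congrArg Fin.val (congrFun h p)
    · intro g hg
      obtain ⟨-, g1, g2⟩ := Finset.mem_filter.1 hg
      exact ⟨⟨fun p => ⟨g p, g2 p⟩, fun a b hab => g1 (congrArg Subtype.val hab)⟩,
        Finset.mem_univ _, rfl⟩
  rw [h1, Finset.card_product, Fintype.card_piFinset, Finset.prod_congr rfl (fun v _ => h2 v)]
  simp

open Classical in
lemma om_card (P : SimpleGraph (Fin n) → Prop) :
    ((Om n d q).filter (fun s => P (Gr s.1))).card =
      ((Reg n d).filter P).card * ((d.factorial) ^ n * (q + 1) ^ n) := by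
  rw [Finset.card_eq_sum_card_fiberwise (f := fun s => Gr s.1) (t := (Reg n d).filter P)]
  · rw [Finset.sum_const_nat]
    intro G hG
    obtain ⟨hG1, hG2⟩ := Finset.mem_filter.1 hG
    rw [← fiber_card (q := q) hG1, Finset.filter_filter]
    congr 1
    ext s
    simp only [Finset.mem_filter]
    constructor
    · rintro ⟨a, -, b⟩; exact ⟨a, b⟩
    · rintro ⟨a, b⟩; exact ⟨a, by rw [b]; exact hG2, b⟩
  · intro s hs
    obtain ⟨h1, h2⟩ := Finset.mem_filter.1 (Finset.mem_coe.1 hs)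
    exact Finset.mem_coe.2 (Finset.mem_filter.2 ⟨gr_mem_Reg (mem_Om.1 h1), h2⟩)

open Classical in
theorem reg_markov (t : ℕ) (hn : 0 < n) (hR : (Reg n d).Nonempty) (θ ε : ℝ) (hε : 0 < ε)
    (h : ∀ r : Fin n, (((Om n d q).filter (fun s => ¬ HasISTs (Gr s.1) r t)).card : ℝ) ≤
      θ * (Om n d q).card) :
    1 - θ / ε ≤ regProb n d (fun G => (Nat.card {r : Fin n // ¬ HasISTs G r t} : ℝ) ≤ ε * n) := by
  have hF : (0 : ℝ) < ((d.factorial) ^ n * (q + 1) ^ n : ℕ) := by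
    have : 0 < (d.factorial) ^ n * (q + 1) ^ n := by positivity
    exact_mod_cast this
  have hOm : (Om n d q).card = (Reg n d).card * ((d.factorial) ^ n * (q + 1) ^ n) := by
    have := om_card (n := n) (d := d) (q := q) (fun _ => True)
    simpa using this
  have h1 : ∀ r : Fin n, (((Reg n d).filter (fun G => ¬ HasISTs G r t)).card : ℝ) ≤
      θ * (Reg n d).card := by
    intro r
    have := h r
    have e : ((Om n d q).filter (fun s => ¬ HasISTs (Gr s.1) r t)).card =
        ((Reg n d).filter (fun G => ¬ HasISTs G r t)).card *
          ((d.factorial) ^ n * (q + 1) ^ n) := by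
      convert om_card (n := n) (d := d) (q := q) (fun G => ¬ HasISTs G r t)
    rw [e, hOm, Nat.cast_mul, Nat.cast_mul (Reg n d).card, ← mul_assoc] at this
    exact le_of_mul_le_mul_right this hF
  have hcount : ∀ G : SimpleGraph (Fin n), Nat.card {r : Fin n // ¬ HasISTs G r t} =
      ∑ r : Fin n, if ¬ HasISTs G r t then 1 else 0 := by
    intro G
    rw [Nat.card_eq_fintype_card, Fintype.card_subtype, Finset.card_filter]
  have h2 : ∑ G ∈ Reg n d, (Nat.card {r : Fin n // ¬ HasISTs G r t} : ℝ) ≤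
      n * (θ * (Reg n d).card) := by
    calc ∑ G ∈ Reg n d, (Nat.card {r : Fin n // ¬ HasISTs G r t} : ℝ)
        = ∑ r : Fin n, (((Reg n d).filter (fun G => ¬ HasISTs G r t)).card : ℝ) := by
          have : ∑ G ∈ Reg n d, Nat.card {r : Fin n // ¬ HasISTs G r t} =
              ∑ r : Fin n, ((Reg n d).filter (fun G => ¬ HasISTs G r t)).card := by
            simp_rw [hcount, Finset.card_filter]
            exact Finset.sum_comm
          exact_mod_cast this
      _ ≤ ∑ r : Fin n, θ * (Reg n d).card := Finset.sum_le_sum fun r _ => h1 r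
      _ = _ := by simp
  set A := fun G : SimpleGraph (Fin n) =>
    (Nat.card {r : Fin n // ¬ HasISTs G r t} : ℝ) ≤ ε * n with hA
  have hsplit := Finset.card_filter_add_card_filter_not (s := Reg n d) A
  have hb : (((Reg n d).filter (fun G => ¬ A G)).card : ℝ) * (ε * n) ≤
      n * (θ * (Reg n d).card) := by
    refine le_trans ?_ h2
    calc (((Reg n d).filter (fun G => ¬ A G)).card : ℝ) * (ε * n)
        = ∑ G ∈ (Reg n d).filter (fun G => ¬ A G), ε * n := by simp
      _ ≤ ∑ G ∈ (Reg n d).filter (fun G => ¬ A G),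
          (Nat.card {r : Fin n // ¬ HasISTs G r t} : ℝ) := by
          refine Finset.sum_le_sum fun G hG => ?_
          exact (not_le.1 (Finset.mem_filter.1 hG).2).le
      _ ≤ _ := Finset.sum_le_sum_of_subset_of_nonneg (Finset.filter_subset _ _)
          (fun _ _ _ => by positivity)
  have hn' : (0 : ℝ) < n := by exact_mod_cast hn
  have hRc : (0 : ℝ) < (Reg n d).card := by exact_mod_cast Finset.card_pos.2 hR
  have hreg : regProb n d A = (((Reg n d).filter A).card : ℝ) / (Reg n d).card := by
    unfold regProb Reg
    rw [Finset.filter_filter]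
  rw [hreg, le_div_iff₀ hRc]
  have hb2 : (((Reg n d).filter (fun G => ¬ A G)).card : ℝ) ≤ θ / ε * (Reg n d).card := by
    rw [div_mul_eq_mul_div, le_div_iff₀ hε]
    nlinarith
  have hs' : (((Reg n d).filter A).card : ℝ) + ((Reg n d).filter (fun G => ¬ A G)).card =
      (Reg n d).card := by exact_mod_cast hsplit
  linarith

lemma regProb_le_one (A : SimpleGraph (Fin n) → Prop) : regProb n d A ≤ 1 := by
  classical
  unfold regProb
  refine div_le_one_of_le₀ ?_ (by positivity)
  have : (Finset.univ.filter (fun G : SimpleGraph (Fin n) =>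
      (∀ v, Nat.card (G.neighborSet v) = d) ∧ A G)).card ≤
    (Finset.univ.filter (fun G : SimpleGraph (Fin n) =>
      ∀ v, Nat.card (G.neighborSet v) = d)).card :=
    Finset.card_le_card (Finset.monotone_filter_right _ (fun _ _ h => h.1))
  convert (Nat.cast_le (α := ℝ)).2 this

theorem reg_nonempty (hdn : d < n) (he : Even (n * d)) : (Reg n d).Nonempty := by
  classical
  have : NeZero n := ⟨by omega⟩
  set T : Finset ℕ := Finset.Icc 1 (d / 2) ∪ Finset.Ico (n - d / 2) n ∪
    (if Even d then ∅ else {n / 2}) with hT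
  have hne : ¬ Even d → n = 2 * (n / 2) ∧ d = 2 * (d / 2) + 1 := by
    intro h
    have hn : Even n := (Nat.even_mul.1 he).resolve_right h
    rw [Nat.even_iff] at hn h
    omega
  have hmem : ∀ x, x ∈ T ↔ (1 ≤ x ∧ x ≤ d / 2) ∨ (n - d / 2 ≤ x ∧ x < n) ∨
      (¬ Even d ∧ x = n / 2) := by
    intro x
    simp only [hT, Finset.mem_union, Finset.mem_Icc, Finset.mem_Ico, or_assoc]
    by_cases h : Even d
    · simp [h]
    · rw [if_neg h, Finset.mem_singleton]
      simp [h]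
  have hTc : T.card = d := by
    have hd1 : Disjoint (Finset.Icc 1 (d / 2)) (Finset.Ico (n - d / 2) n) := by
      rw [Finset.disjoint_left]
      intro x hx hy
      simp only [Finset.mem_Icc, Finset.mem_Ico] at hx hy
      omega
    by_cases h : Even d
    · rw [hT, if_pos h, Finset.union_empty, Finset.card_union_of_disjoint hd1]
      rw [Nat.even_iff] at h
      simp
      omega
    · have := hne h
      have hd2 : Disjoint (Finset.Icc 1 (d / 2) ∪ Finset.Ico (n - d / 2) n) {n / 2} := by
        rw [Finset.disjoint_singleton_right]
        simp only [Finset.mem_union, Finset.mem_Icc, Finset.mem_Ico]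
        omega
      rw [hT, if_neg h, Finset.card_union_of_disjoint hd2, Finset.card_union_of_disjoint hd1]
      simp
      omega
  have hTlt : ∀ x ∈ T, 0 < x ∧ x < n := by
    intro x hx
    rcases (hmem x).1 hx with h | h | h
    · omega
    · omega
    · have := hne h.1
      omega
  have hTs : ∀ x ∈ T, n - x ∈ T := by
    intro x hx
    have h0 := hTlt x hx
    rw [hmem]
    rcases (hmem x).1 hx with h | h | h
    · right; left; omega
    · left; omega
    · have := hne h.1
      right; right; exact ⟨h.1, by omega⟩
  have hsym : ∀ x y : Fin n, (x - y).val ∈ T → (y - x).val ∈ T := by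
    intro x y h
    have h0 := hTlt _ h
    have h1 := hTs _ h
    have : (y - x).val = n - (x - y).val := by
      rw [← neg_sub x y, Fin.val_neg, if_neg]
      intro h2
      rw [h2] at h0
      simp at h0
    rw [this]
    exact h1
  refine ⟨⟨fun x y => (x - y).val ∈ T, ⟨fun x y h => hsym x y h⟩, ⟨fun x h => ?_⟩⟩, ?_⟩
  · have := hTlt _ h
    simp at this
  · rw [mem_Reg]
    intro v
    rw [← hTc, ← Fintype.card_coe T, ← Nat.card_eq_fintype_card]
    refine Nat.card_congr (Equiv.ofBijective (fun w => ⟨(v - w.1).val, w.2⟩) ⟨?_, ?_⟩)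
    · intro a b hab
      have h1 : (v - a.1).val = (v - b.1).val := congrArg Subtype.val hab
      have h2 : v - a.1 = v - b.1 := Fin.ext h1
      exact Subtype.ext (sub_right_injective h2)
    · rintro ⟨x, hx⟩
      have hlt := (hTlt x hx).2
      have h3 : v - (v - (⟨x, hlt⟩ : Fin n)) = ⟨x, hlt⟩ := sub_sub_cancel _ _
      refine ⟨⟨v - ⟨x, hlt⟩, ?_⟩, ?_⟩
      · change (v - (v - (⟨x, hlt⟩ : Fin n))).val ∈ T
        rw [h3]
        exact hx
      · refine Subtype.ext ?_
        change (v - (v - (⟨x, hlt⟩ : Fin n))).val = x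
        rw [h3]

end Transfer


/-! ### Parameters -/

section Params

lemma two_pow_le {a b : ℕ} (h : a ≤ b) : (2 : ℝ) ^ a ≤ 2 ^ b :=
  pow_le_pow_right₀ (by norm_num) h

lemma frac_le {X Y : ℝ} {a b l : ℕ} (hX : X ≤ 2 ^ a) (hY : 2 ^ b ≤ Y)
    (h : a + l ≤ b) : X / Y ≤ 1 / 2 ^ l := by
  have hY0 : 0 < Y := lt_of_lt_of_le (by positivity) hY
  rw [div_le_div_iff₀ hY0 (by positivity)]
  calc X * 2 ^ l ≤ 2 ^ a * 2 ^ l := by gcongr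
    _ = 2 ^ (a + l) := by rw [pow_add]
    _ ≤ 2 ^ b := two_pow_le h
    _ ≤ 1 * Y := by linarith

lemma lin_le {l : ℕ} (hl : 1 ≤ l) : 6 * (80 * l + 1) + 14 + 1 ≤ 2 ^ (10 * l) := by
  have h1 : l < 2 ^ l := Nat.lt_two_pow_self
  have h2 : 2 ^ (10 * l) = 2 ^ (9 * l) * 2 ^ l := by rw [← pow_add]; congr 1; omega
  have h3 : 2 ^ 9 ≤ 2 ^ (9 * l) := Nat.pow_le_pow_right (by norm_num) (by omega)
  calc 6 * (80 * l + 1) + 14 + 1 ≤ 2 ^ 9 * l := by omega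
    _ ≤ 2 ^ (9 * l) * 2 ^ l := Nat.mul_le_mul h3 h1.le
    _ = _ := h2.symm

variable {n d S l : ℕ}

lemma term1 (hl : 1 ≤ l) (hH : 20001 * l ^ 2 ≤ S + 30 * l) (hn1 : 2 ^ (S + 30 * l) ≤ n)
    (hd : d ≤ 2 ^ (2 * l)) :
    ((6 * (80 * l + 1) + 14 : ℕ) + 1 : ℝ) *
      (((6 * (80 * l + 1) + 14 : ℕ) + 1 : ℝ) ^ 2 * (2 * d * ((2 : ℝ) ^ (4 * l)) ^ 4)) ^
        (6 * (80 * l + 1) + 14 + 1) / n ≤ 1 / 2 ^ l := by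
  have hs : ((6 * (80 * l + 1) + 14 : ℕ) + 1 : ℝ) ≤ 2 ^ (10 * l) := by
    exact_mod_cast lin_le hl
  have hd' : (d : ℝ) ≤ 2 ^ (2 * l) := by exact_mod_cast hd
  have hn' : (2 : ℝ) ^ (S + 30 * l) ≤ n := by exact_mod_cast hn1
  have hll : l ≤ l ^ 2 := by nlinarith
  refine frac_le (a := 10 * l + (39 * l) * (6 * (80 * l + 1) + 14 + 1)) ?_ hn' ?_
  · rw [pow_add (2 : ℝ) (10 * l), pow_mul (2 : ℝ) (39 * l)]
    have : ((6 * (80 * l + 1) + 14 : ℕ) + 1 : ℝ) ^ 2 * (2 * d * ((2 : ℝ) ^ (4 * l)) ^ 4) ≤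
        2 ^ (39 * l) := by
      calc _ ≤ ((2 : ℝ) ^ (10 * l)) ^ 2 * (2 * 2 ^ (2 * l) * ((2 : ℝ) ^ (4 * l)) ^ 4) := by gcongr
        _ = 2 ^ (10 * l * 2 + (1 + 2 * l + 4 * l * 4)) := by ring
        _ ≤ _ := two_pow_le (by omega)
    gcongr
  · nlinarith

lemma term2 (hl : 1 ≤ l) (hL : S + 30 * l < 2 ^ l) (hn1 : 2 ^ (S + 30 * l) ≤ n)
    (hd : d ≤ 2 ^ (2 * l)) :
    ((d / 4 : ℕ) : ℝ) * (2 * (S + 1) * (1 / (2 : ℝ) ^ (4 * l) +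
      2 * d ^ 2 * ((d / 4 : ℕ) * 2 ^ (S + 1) + 1) * ((2 : ℝ) ^ (4 * l)) ^ 4 / n)) ≤
      3 * (1 / 2 ^ l) := by
  have hd' : (d : ℝ) ≤ 2 ^ (2 * l) := by exact_mod_cast hd
  have hn' : (2 : ℝ) ^ (S + 30 * l) ≤ n := by exact_mod_cast hn1
  have ht : ((d / 4 : ℕ) : ℝ) ≤ 2 ^ (2 * l) := by
    exact_mod_cast (Nat.div_le_self d 4).trans hd
  have hS : ((S : ℝ) + 1) ≤ 2 ^ l := by
    have : S + 1 ≤ 2 ^ l := by omega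
    exact_mod_cast this
  have hA : ((d / 4 : ℕ) : ℝ) * (S + 1) / 2 ^ (4 * l) ≤ 1 / 2 ^ l := by
    refine frac_le (a := 3 * l) ?_ le_rfl (by omega)
    calc _ ≤ (2 : ℝ) ^ (2 * l) * 2 ^ l := by gcongr
      _ = 2 ^ (3 * l) := by ring
  have hB : ((d / 4 : ℕ) : ℝ) * (2 * (S + 1)) *
      (2 * d ^ 2 * ((d / 4 : ℕ) * 2 ^ (S + 1) + 1) * ((2 : ℝ) ^ (4 * l)) ^ 4) / n ≤
      1 / 2 ^ l := by
    refine frac_le (a := 25 * l + S + 4) ?_ hn' (by omega)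
    have h1 : (((d / 4 : ℕ) : ℝ) * 2 ^ (S + 1) + 1) ≤ 2 ^ (2 * l + S + 2) := by
      have e1 : (1 : ℝ) ≤ 2 ^ (2 * l + (S + 1)) := one_le_pow₀ (by norm_num)
      calc (((d / 4 : ℕ) : ℝ) * 2 ^ (S + 1) + 1) ≤ 2 ^ (2 * l) * 2 ^ (S + 1) + 1 := by gcongr
        _ = 2 ^ (2 * l + (S + 1)) + 1 := by rw [pow_add 2 (2 * l)]
        _ ≤ 2 ^ (2 * l + (S + 1)) + 2 ^ (2 * l + (S + 1)) := by linarith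
        _ = _ := by ring
    calc _ ≤ (2 : ℝ) ^ (2 * l) * (2 * 2 ^ l) *
        (2 * (2 ^ (2 * l)) ^ 2 * 2 ^ (2 * l + S + 2) * ((2 : ℝ) ^ (4 * l)) ^ 4) := by gcongr
      _ = 2 ^ (25 * l + S + 4) := by ring
  calc _ = 2 * (((d / 4 : ℕ) : ℝ) * (S + 1) / 2 ^ (4 * l)) + ((d / 4 : ℕ) : ℝ) * (2 * (S + 1)) *
      (2 * d ^ 2 * ((d / 4 : ℕ) * 2 ^ (S + 1) + 1) * ((2 : ℝ) ^ (4 * l)) ^ 4) / n := by ring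
    _ ≤ _ := by linarith

lemma term3 (hl : 1 ≤ l) (hS : 1 ≤ S) (hL : S + 30 * l < 2 ^ l)
    (hn2 : n < 2 ^ (S + 30 * l + 1)) (hd : d ≤ 2 ^ (2 * l)) :
    (n : ℝ) * ((d / 4 : ℕ) * (n ^ 2 * (4 * (S + 30 * l : ℕ) * n * d * ((2 : ℝ) ^ (4 * l)) ^ 4 /
      (2 ^ (S - 1) * 2 ^ (80 * l))) ^ (S + 30 * l))) ≤ 1 / 2 ^ l := by
  have hd' : (d : ℝ) ≤ 2 ^ (2 * l) := by exact_mod_cast hd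
  have ht : ((d / 4 : ℕ) : ℝ) ≤ 2 ^ (2 * l) := by
    exact_mod_cast (Nat.div_le_self d 4).trans hd
  have hn' : (n : ℝ) ≤ 2 ^ (S + 30 * l + 1) := by exact_mod_cast hn2.le
  have hL' : ((S + 30 * l : ℕ) : ℝ) ≤ 2 ^ l := by exact_mod_cast hL.le
  set L := S + 30 * l with hLd
  have hρ : 4 * (L : ℝ) * n * d * ((2 : ℝ) ^ (4 * l)) ^ 4 / (2 ^ (S - 1) * 2 ^ (80 * l)) ≤
      1 / 2 ^ 8 := by
    refine frac_le (a := 19 * l + L + 3) (b := S - 1 + 80 * l) ?_ (by rw [pow_add]) (by omega)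
    calc _ ≤ 4 * (2 : ℝ) ^ l * 2 ^ (L + 1) * 2 ^ (2 * l) * ((2 : ℝ) ^ (4 * l)) ^ 4 := by gcongr
      _ = 2 ^ (19 * l + L + 3) := by ring
  have h0 : 0 ≤ 4 * (L : ℝ) * n * d * ((2 : ℝ) ^ (4 * l)) ^ 4 / (2 ^ (S - 1) * 2 ^ (80 * l)) := by
    positivity
  calc _ ≤ (2 : ℝ) ^ (L + 1) * (2 ^ (2 * l) * ((2 ^ (L + 1)) ^ 2 * (1 / 2 ^ 8) ^ L)) := by gcongr
    _ = 2 ^ (3 * L + 3 + 2 * l) / 2 ^ (8 * L) := by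
        rw [one_div_pow, ← pow_mul 2 8 L]
        generalize (2 : ℝ) ^ (8 * L) = X
        ring
    _ ≤ 1 / 2 ^ l := frac_le le_rfl le_rfl (by omega)

theorem theta_le (hl : 1 ≤ l) (hS : 1 ≤ S) (hL : S + 30 * l < 2 ^ l)
    (hH : 20001 * l ^ 2 ≤ S + 30 * l) (hn1 : 2 ^ (S + 30 * l) ≤ n)
    (hn2 : n < 2 ^ (S + 30 * l + 1)) (hd : d ≤ 2 ^ (2 * l)) :
    theta n d (2 ^ (4 * l) - 1) (d / 4) S (80 * l) (S + 30 * l) ≤ 5 * (1 / 2 ^ l) := by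
  have hq : (((2 ^ (4 * l) - 1 : ℕ) : ℝ) + 1) = 2 ^ (4 * l) := by
    have : 2 ^ (4 * l) - 1 + 1 = 2 ^ (4 * l) := Nat.sub_add_cancel Nat.one_le_two_pow
    exact_mod_cast this
  have h1 := term1 hl hH hn1 hd
  have h2 := term2 hl hL hn1 hd
  have h3 := term3 hl hS hL hn2 hd
  unfold theta
  rw [hq]
  linarith

lemma side1 (hl : 1 ≤ l) (hH : 20001 * l ^ 2 ≤ S + 30 * l) (hn1 : 2 ^ (S + 30 * l) ≤ n)
    (hd : d ≤ 2 ^ (2 * l)) : 4 * (d + 1 + (6 * (80 * l + 1) + 14)) ≤ n := by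
  refine le_trans ?_ hn1
  have h1 := lin_le hl
  have hll : l ≤ l ^ 2 := by nlinarith
  have h2 : 2 ^ (2 * l) ≤ 2 ^ (10 * l) := Nat.pow_le_pow_right (by norm_num) (by omega)
  have h3 : 2 ^ 3 * 2 ^ (10 * l) ≤ 2 ^ (S + 30 * l) := by
    rw [← pow_add]
    exact Nat.pow_le_pow_right (by norm_num) (by omega)
  omega

lemma side2 (hl : 1 ≤ l) (hn1 : 2 ^ (S + 30 * l) ≤ n)
    (hd : d ≤ 2 ^ (2 * l)) : 4 * (d + 1 + ((d / 4) * 2 ^ (S + 1) + 1)) ≤ n := by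
  refine le_trans ?_ hn1
  have ht : d / 4 ≤ 2 ^ (2 * l) := (Nat.div_le_self d 4).trans hd
  have h1 : (d / 4) * 2 ^ (S + 1) ≤ 2 ^ (2 * l) * 2 ^ (S + 1) := Nat.mul_le_mul_right _ ht
  rw [← pow_add] at h1
  have h2 : 2 ^ (2 * l) ≤ 2 ^ (2 * l + (S + 1)) := Nat.pow_le_pow_right (by norm_num) (by omega)
  have h3 : 2 ^ 4 * 2 ^ (2 * l + (S + 1)) ≤ 2 ^ (S + 30 * l) := by
    rw [← pow_add]
    exact Nat.pow_le_pow_right (by norm_num) (by omega)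
  have h4 : 1 ≤ 2 ^ (2 * l) := Nat.one_le_two_pow
  omega

lemma side4 (hl : 1 ≤ l) (hH : 20001 * l ^ 2 ≤ S + 30 * l)
    (hd : d ≤ 2 ^ (2 * l)) : 2 * (5 ^ (80 * l + 1) * (d + 1) ^ 3 + 2) ≤ 2 ^ (S - 1) := by
  have hll : l ≤ l ^ 2 := by nlinarith
  have h1 : 5 ^ (80 * l + 1) ≤ 2 ^ (3 * (80 * l + 1)) := by
    rw [pow_mul]
    exact Nat.pow_le_pow_left (by norm_num) _
  have h0 : 1 ≤ 2 ^ (2 * l) := Nat.one_le_two_pow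
  have h2 : (d + 1) ^ 3 ≤ 2 ^ ((2 * l + 1) * 3) := by
    rw [pow_mul]
    refine Nat.pow_le_pow_left ?_ 3
    rw [pow_succ]
    omega
  have h3 := Nat.mul_le_mul h1 h2
  rw [← pow_add] at h3
  have h4 : 2 ^ 2 * 2 ^ (3 * (80 * l + 1) + (2 * l + 1) * 3) ≤ 2 ^ (S - 1) := by
    rw [← pow_add]
    exact Nat.pow_le_pow_right (by norm_num) (by omega)
  have h5 : 2 ^ 1 ≤ 2 ^ (3 * (80 * l + 1) + (2 * l + 1) * 3) :=
    Nat.pow_le_pow_right (by norm_num) (by omega)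
  omega

theorem prob_bound (ε : ℝ) (hε : 0 < ε) (hd4 : 4 ≤ d) (he : Even (n * d)) {L : ℕ} (hl : 1 ≤ l)
    (hL : L < 2 ^ l)
    (hH : 20001 * l ^ 2 ≤ L) (hn1 : 2 ^ L ≤ n)
    (hn2 : n < 2 ^ (L + 1)) (hd : d ≤ 2 ^ (2 * l)) :
    1 - 5 * (1 / 2 ^ l) / ε ≤
      regProb n d (fun G => (Nat.card {r : Fin n // ¬ HasISTs G r (d / 4)} : ℝ) ≤ ε * n) := by
  have hll : l ≤ l ^ 2 := by nlinarith
  obtain ⟨S, rfl⟩ : ∃ S, L = S + 30 * l := ⟨L - 30 * l, by omega⟩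
  have hS : 1 ≤ S := by omega
  have s1 := side1 hl hH hn1 hd
  have s3 : 2 * (S + 30 * l) ≤ 2 ^ (80 * l) := by
    have : 2 ^ 1 * 2 ^ l ≤ 2 ^ (80 * l) := by
      rw [← pow_add]
      exact Nat.pow_le_pow_right (by norm_num) (by omega)
    omega
  refine reg_markov (q := 2 ^ (4 * l) - 1) (d / 4) (by omega) (reg_nonempty (by omega) he) _ ε hε ?_
  intro r
  refine (bad_card (q := 2 ^ (4 * l) - 1) hd4 r S (80 * l) (S + 30 * l) hS s1
    (side2 hl hn1 hd) s3 (side4 hl hH hd)).trans ?_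
  gcongr
  exact theta_le hl hS hL hH hn1 hn2 hd

end Params


/-! ### The theorem -/

lemma tendsto_natlog : Tendsto (fun n : ℕ => Nat.log 2 n) atTop atTop := by
  rw [Filter.tendsto_atTop_atTop]
  exact fun b => ⟨2 ^ b, fun a ha => Nat.le_log_of_pow_le (by norm_num) ha⟩

lemma quad_le_pow (l : ℕ) (hl : 30 ≤ l) : 20001 * (l + 1) ^ 2 ≤ 2 ^ l := by
  induction l, hl using Nat.le_induction with
  | base => norm_num
  | succ k hk ih =>
    rw [pow_succ 2 k]
    nlinarith

/-- the scale parameter -/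
def scl (n : ℕ) : ℕ := Nat.log 2 (Nat.log 2 n) + 1

lemma tendsto_scl : Tendsto scl atTop atTop :=
  (tendsto_add_atTop_nat 1).comp (tendsto_natlog.comp tendsto_natlog)

/-- For `4 ≤ d(n) ≤ (log n)²` and every `ε > 0`, with high probability (along those `n`
with `n·d(n)` even) the random `d(n)`-regular graph has, for all but at most `εn`
vertices `r`, at least `⌊d(n)/4⌋` independent spanning trees rooted at `r`. -/
theorem stmt4 (d : ℕ → ℕ)
    (hd : ∀ᶠ n : ℕ in Filter.atTop, 4 ≤ d n ∧ (d n : ℝ) ≤ (Real.log n) ^ 2)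
    (ε : ℝ) (hε : 0 < ε) :
    Filter.Tendsto
      (fun n : ℕ => regProb n (d n)
        (fun G => (Nat.card {r : Fin n // ¬ HasISTs G r (d n / 4)} : ℝ) ≤ ε * n))
      (Filter.atTop ⊓ Filter.principal {n : ℕ | Even (n * d n)}) (nhds 1) := by
  have hlow : ∀ᶠ n : ℕ in Filter.atTop ⊓ Filter.principal {n : ℕ | Even (n * d n)},
      1 - 5 * (1 / 2 ^ scl n) / ε ≤ regProb n (d n)
        (fun G => (Nat.card {r : Fin n // ¬ HasISTs G r (d n / 4)} : ℝ) ≤ ε * n) := by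
    rw [Filter.eventually_inf_principal]
    filter_upwards [hd, (tendsto_natlog.comp tendsto_natlog).eventually_ge_atTop 30,
      tendsto_natlog.eventually_ge_atTop 30] with n hdn hl hL he
    simp only [Function.comp] at hl
    set L := Nat.log 2 n with hLd
    set l := Nat.log 2 L with hld
    have hn0 : n ≠ 0 := by
      rintro rfl
      simp [hLd] at hL
    have hL0 : L ≠ 0 := by omega
    have hn1 : 2 ^ L ≤ n := Nat.pow_log_le_self 2 hn0
    have hn2 : n < 2 ^ (L + 1) := Nat.lt_pow_succ_log_self (by norm_num) n
    have hl1 : 2 ^ l ≤ L := Nat.pow_log_le_self 2 hL0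
    have hl2 : L < 2 ^ (l + 1) := Nat.lt_pow_succ_log_self (by norm_num) L
    have hs : scl n = l + 1 := rfl
    rw [hs]
    refine prob_bound ε hε hdn.1 he (by omega) hl2 ((quad_le_pow l hl).trans hl1) hn1 hn2 ?_
    have hlog : Real.log n ≤ L := by
      have hnpos : (0 : ℝ) < n := by exact_mod_cast Nat.pos_of_ne_zero hn0
      have h1 : Real.log n ≤ Real.log ((2 : ℝ) ^ (L + 1)) :=
        Real.log_le_log hnpos (by exact_mod_cast hn2.le)
      rw [Real.log_pow] at h1
      have h2 := Real.log_two_lt_d9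
      have h3 : (30 : ℝ) ≤ L := by exact_mod_cast hL
      push_cast at h1
      nlinarith
    have hlog0 : 0 ≤ Real.log n := Real.log_natCast_nonneg n
    have h4 : (d n : ℝ) ≤ (L : ℝ) ^ 2 := hdn.2.trans (by gcongr)
    have h5 : d n ≤ L ^ 2 := by exact_mod_cast h4
    calc d n ≤ L ^ 2 := h5
      _ ≤ (2 ^ (l + 1)) ^ 2 := Nat.pow_le_pow_left hl2.le 2
      _ = 2 ^ (2 * (l + 1)) := by rw [← pow_mul, mul_comm]
  have hlim : Tendsto (fun n : ℕ => 1 - 5 * (1 / (2 : ℝ) ^ scl n) / ε) atTop (nhds 1) := by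
    have h1 : Tendsto (fun k : ℕ => (1 / 2 : ℝ) ^ k) atTop (nhds 0) :=
      tendsto_pow_atTop_nhds_zero_of_lt_one (by norm_num) (by norm_num)
    have h2 := h1.comp tendsto_scl
    have h3 := ((h2.const_mul 5).div_const ε).const_sub 1
    simpa [Function.comp, one_div_pow] using h3
  exact tendsto_of_tendsto_of_tendsto_of_le_of_le' (hlim.mono_left inf_le_left)
    tendsto_const_nhds hlow (Filter.Eventually.of_forall fun n => regProb_le_one _)
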